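/- arXiv:2211.07732 — 4 statements merged into one kernel-verified Lean document; each statement's English description precedes it below -/
import Mathlib

section
/- For every ε > 0 there exist d₀ and s₀ such that the following holds for every d ≥ d₀, every s ≥ s₀, and every n ≥ 2^{(log d)^7}. If G is an n-vertex (ε, s, d)-expander with maximum degree at most d^7, then there is a collection 𝒫 of at most 5·max{n, e(G)/d} paths in G that strongly separates the edge set of G. -/
/-!
The idea is to give each edge its own private vertex sets through which it can be routed, and to
link about `d` edges at a time into a single path.

*Arms.* An arm at a vertex `a` is a vertex set all of whose vertices can be reached from `a` within
the set in few steps (`IsArm`). Each edge `xy` gets two large arms at `x` and two at `y`, disjoint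
apart from `x` and `y` themselves (`exists_arms`). An arm consists of a geodesic of `G` and a large
ball around its far end; since `n` is enormous compared with the maximum degree, such geodesics
exist. Once an arm is built, its geodesic is isolated. A geodesic meets a ball of radius `i` in at
most `2 i + 1` vertices, so little is lost near any vertex and expansion still makes balls grow
(`LostBound`, `nball_growth`); geodesics of decreasing lengths keep the end balls apart. One arm at
each end belongs to a first family, with at least `M₁` further vertices, the other to a second
family, with at least `M₂` further and at most `a₂` vertices; here `M₁` is so much larger than `a₂`
that deleting the edges inside arms of the second family is harmless to the first (`ArmSystem`).

*Linking.* After the deletion of few edges, any two sets larger than the number of deleted edges and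
forbidden vertices, up to a factor polynomial in `log n`, are joined by a walk of length polynomial
in `log n` avoiding the forbidden vertices (`robustConn_of_expander`). Hence edges with disjoint arms
can be joined one after another into a single path, which consumes one arm of each of the two pieces
at every join (`ArmedPath.join`, `ArmedPath.link`).

*Two phases.* As the maximum degree is small, the arms of an edge meet those of few others, so all
but `o(n)` edges can be split into groups of size `⌊d⌋₊` with disjoint arms (`exists_groups`). In the
first phase a path through each group is found using the first family, avoiding every edge inside an
arm of the second family of the group. In the second phase the edges are grouped again, and a path
through each group is found using the second family, avoiding all other edges on the first-phase
paths of its members; this is possible because those paths do not use edges inside the relevant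
arms. If the first path through `e` contains `f`, then the second path through `e` avoids it
(`ArmSystem.separate`). Each phase uses `e(G) / ⌊d⌋₊ + o(n)` paths, well within the bound.
-/

/-- The exterior neighbourhood `N_G(X)`: vertices outside `X` with a neighbour in `X`. -/
def extNbhd {V : Type*} (G : SimpleGraph V) (X : Set V) : Set V :=
  {v | v ∉ X ∧ ∃ u ∈ X, G.Adj u v}

/-- A graph `G` (on `Nat.card V` vertices) is an `(ε, s, t)`-expander if
`|N_{G−F}(X)| ≥ ε|X|/(log|X| + 1)²` for every vertex set `X` and edge set `F ⊆ E(G)`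
with `1 ≤ |X| ≤ 2n/3` and `|F| ≤ s · min{|X|, t}`. -/
def ESTExpander {V : Type*} (G : SimpleGraph V) (ε s t : ℝ) : Prop :=
  ∀ (X : Set V) (F : Set (Sym2 V)), F ⊆ G.edgeSet →
    1 ≤ X.ncard → (X.ncard : ℝ) ≤ 2 * (Nat.card V : ℝ) / 3 →
    (F.ncard : ℝ) ≤ s * min (X.ncard : ℝ) t →
    ε * (X.ncard : ℝ) / (Real.logb 2 (X.ncard : ℝ) + 1)^2 ≤
      ((extNbhd (G.deleteEdges F) X).ncard : ℝ)

/-! ### Balls and geodesics -/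

section Balls

variable {V : Type*}

/-- The ball of radius `i` around the vertex set `S` in the graph `H`. -/
def nball (H : SimpleGraph V) (S : Set V) (i : ℕ) : Set V :=
  {v | ∃ u ∈ S, ∃ p : H.Walk u v, p.length ≤ i}

lemma subset_nball (H : SimpleGraph V) (S : Set V) (i : ℕ) : S ⊆ nball H S i :=
  fun v hv => ⟨v, hv, .nil, by simp⟩

lemma nball_mono {H N : SimpleGraph V} (h : N ≤ H) {S T : Set V} (hS : S ⊆ T) {i j : ℕ}
    (hij : i ≤ j) : nball N S i ⊆ nball H T j := by
  rintro v ⟨u, hu, p, hp⟩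
  exact ⟨u, hS hu, p.mapLe h, by simpa using hp.trans hij⟩

lemma nball_trans {H : SimpleGraph V} {S : Set V} {i j : ℕ} {v w : V} (hv : v ∈ nball H S i)
    (hw : w ∈ nball H {v} j) : w ∈ nball H S (i + j) := by
  obtain ⟨u, hu, p, hp⟩ := hv
  obtain ⟨_, rfl, q, hq⟩ := hw
  exact ⟨u, hu, p.append q, by rw [SimpleGraph.Walk.length_append]; omega⟩

lemma nball_symm {H : SimpleGraph V} {j : ℕ} {v w : V} (hw : w ∈ nball H {v} j) :
    v ∈ nball H {w} j := by
  obtain ⟨_, rfl, q, hq⟩ := hw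
  exact ⟨w, rfl, q.reverse, by simpa using hq⟩

lemma nball_zero (H : SimpleGraph V) (S : Set V) : nball H S 0 = S := by
  apply Set.Subset.antisymm _ (subset_nball H S 0)
  rintro v ⟨u, hu, p, hp⟩
  have := SimpleGraph.Walk.eq_of_length_eq_zero (Nat.le_zero.mp hp)
  exact this ▸ hu

lemma nball_succ_of_adj {H : SimpleGraph V} {S : Set V} {i : ℕ} {u w : V}
    (hu : u ∈ nball H S i) (h : H.Adj u w) : w ∈ nball H S (i + 1) :=
  nball_trans hu ⟨u, rfl, h.toWalk, by simp⟩

lemma nball_succ_cases {H : SimpleGraph V} {S : Set V} {i : ℕ} {w : V}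
    (hw : w ∈ nball H S (i + 1)) : w ∈ nball H S i ∨ ∃ u ∈ nball H S i, H.Adj u w := by
  obtain ⟨u, hu, p, hp⟩ := hw
  rcases Nat.lt_or_ge p.length (i + 1) with h | h
  · exact Or.inl ⟨u, hu, p, by omega⟩
  · right
    have hlen : p.length = i + 1 := le_antisymm hp h
    refine ⟨p.getVert i, ⟨u, hu, p.take i, by simp⟩, ?_⟩
    have := p.adj_getVert_succ (i := i) (by omega)
    rwa [← hlen, p.getVert_length] at this

lemma ncard_nball_le [Finite V] {H : SimpleGraph V} {Δ : ℕ}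
    (hΔ : ∀ v, (H.neighborSet v).ncard ≤ Δ) (S : Set V) (i : ℕ) :
    (nball H S i).ncard ≤ S.ncard * (Δ + 1) ^ i := by
  classical
  have := Fintype.ofFinite V
  induction i with
  | zero => simp [nball_zero]
  | succ i ih =>
    have hsub : nball H S (i + 1) ⊆
        ⋃ v ∈ (nball H S i).toFinset, insert v (H.neighborSet v) := by
      intro w hw
      simp only [Set.mem_iUnion]
      rcases nball_succ_cases hw with h | ⟨u, hu, h⟩
      · exact ⟨w, by simpa using h, Or.inl rfl⟩
      · exact ⟨u, by simpa using hu, Or.inr h⟩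
    calc (nball H S (i + 1)).ncard ≤ _ := Set.ncard_le_ncard hsub
      _ ≤ ∑ v ∈ (nball H S i).toFinset, (insert v (H.neighborSet v)).ncard :=
          Finset.set_ncard_biUnion_le _ _
      _ ≤ ∑ v ∈ (nball H S i).toFinset, (Δ + 1) :=
          Finset.sum_le_sum fun v _ => (Set.ncard_insert_le _ _).trans (by have := hΔ v; omega)
      _ = (nball H S i).ncard * (Δ + 1) := by
          rw [Finset.sum_const, smul_eq_mul, Set.ncard_eq_toFinset_card']
      _ ≤ S.ncard * (Δ + 1) ^ i * (Δ + 1) := Nat.mul_le_mul_right _ ih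
      _ = _ := by ring

/-- A ball of radius `j` meets a geodesic in at most `2 j + 1` vertices. Here the geodesic is a
walk `p` from a set `S` to a vertex at distance exactly `p.length` from `S`. -/
lemma geodesic_inter_nball {N : SimpleGraph V} {S : Set V} {σ z : V} (hσ : σ ∈ S)
    (p : N.Walk σ z) (hp : ∀ j, z ∈ nball N S j → p.length ≤ j) (v : V) (j : ℕ) :
    {w | w ∈ p.support ∧ w ∈ nball N {v} j}.ncard ≤ 2 * j + 1 := by
  classical
  have key : ∀ a b, b ≤ p.length → p.getVert a ∈ nball N {v} j →
      p.getVert b ∈ nball N {v} j → b ≤ a + 2 * j := by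
    intro a b hb ha hb'
    have h1 : p.getVert a ∈ nball N S a := ⟨σ, hσ, p.take a, by simp⟩
    have h2 := nball_trans (nball_trans h1 (nball_symm ha)) hb'
    have h3 : z ∈ nball N {p.getVert b} (p.length - b) := ⟨_, rfl, p.drop b, by simp⟩
    have := hp _ (nball_trans h2 h3)
    omega
  by_cases hne : ∃ a, a ≤ p.length ∧ p.getVert a ∈ nball N {v} j
  · let a := Nat.find hne
    have ha := Nat.find_spec hne
    have hsub : {w | w ∈ p.support ∧ w ∈ nball N {v} j} ⊆
        ((Finset.Icc a (a + 2 * j)).image p.getVert : Finset V) := by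
      rintro w ⟨hw, hwv⟩
      obtain ⟨b, rfl, hb⟩ := SimpleGraph.Walk.mem_support_iff_exists_getVert.mp hw
      simp only [Finset.coe_image, Set.mem_image, Finset.coe_Icc, Set.mem_Icc]
      exact ⟨b, ⟨Nat.find_min' hne ⟨hb, hwv⟩, key _ _ hb ha.2 hwv⟩, rfl⟩
    calc _ ≤ _ := Set.ncard_le_ncard hsub
      _ ≤ _ := by
        rw [Set.ncard_coe_finset]
        refine Finset.card_image_le.trans ?_
        simp; omega
  · have : {w | w ∈ p.support ∧ w ∈ nball N {v} j} = ∅ := by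
      ext w
      simp only [Set.mem_ofPred_eq, Set.mem_empty_iff_false, iff_false, not_and]
      intro hw hwv
      obtain ⟨b, rfl, hb⟩ := SimpleGraph.Walk.mem_support_iff_exists_getVert.mp hw
      exact hne ⟨b, hb, hwv⟩
    rw [this]; simp

end Balls

/-! ### Growth of balls after the loss of a few edges -/

section Growth

lemma log_growth_step {ε x x' : ℝ} (hε : 0 < ε) (hε1 : ε ≤ 1) (hx : 1 ≤ x)
    (hx' : x + ε * x / (2 * (Real.logb 2 x + 1) ^ 2) ≤ x') :
    (Real.logb 2 x + 1) ^ 3 + ε / 2 ≤ (Real.logb 2 x' + 1) ^ 3 := by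
  have hl0 : 0 ≤ Real.logb 2 x := Real.logb_nonneg (by norm_num) hx
  set l := Real.logb 2 x + 1 with hl
  have hl1 : 1 ≤ l := by linarith
  set η := ε / (2 * l ^ 2) with hη
  have hη0 : 0 < η := by positivity
  have hη1 : η ≤ 1 / 2 := by
    rw [hη, div_le_div_iff₀ (by positivity) (by norm_num)]
    nlinarith
  have hx0 : 0 < x := by linarith
  have h1 : x * (1 + η) ≤ x' := by
    have : x * (1 + η) = x + ε * x / (2 * l ^ 2) := by rw [hη]; ring
    linarith
  have h2 : l + Real.logb 2 (1 + η) ≤ Real.logb 2 x' + 1 := by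
    have : Real.logb 2 (x * (1 + η)) ≤ Real.logb 2 x' :=
      Real.logb_le_logb_of_le (by norm_num) (by positivity) h1
    rw [Real.logb_mul hx0.ne' (by positivity)] at this
    linarith
  have h3 : 2 / 3 * η ≤ Real.logb 2 (1 + η) := by
    have h4 : 1 - (1 + η)⁻¹ ≤ Real.log (1 + η) :=
      Real.one_sub_inv_le_log_of_pos (by positivity)
    have h5 : 2 / 3 * η ≤ 1 - (1 + η)⁻¹ := by
      have : 1 - (1 + η)⁻¹ = η / (1 + η) := by field_simp; ring
      rw [this, le_div_iff₀ (by positivity)]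
      nlinarith
    have h6 : Real.log 2 ≤ 1 := by linarith [Real.log_two_lt_d9]
    have h7 : Real.log (1 + η) ≤ Real.logb 2 (1 + η) := by
      rw [Real.logb, le_div_iff₀ (Real.log_pos (by norm_num))]
      have : 0 ≤ Real.log (1 + η) := Real.log_nonneg (by linarith)
      nlinarith
    linarith
  have h8 : l + ε / (3 * l ^ 2) ≤ Real.logb 2 x' + 1 := by
    have : 2 / 3 * η = ε / (3 * l ^ 2) := by rw [hη]; field_simp
    linarith
  have h9 : l ^ 3 + ε ≤ (l + ε / (3 * l ^ 2)) ^ 3 := by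
    have h10 : 3 * l ^ 2 * (ε / (3 * l ^ 2)) = ε := by field_simp
    have h11 : 0 ≤ ε / (3 * l ^ 2) := by positivity
    have : (l + ε / (3 * l ^ 2)) ^ 3 = l ^ 3 + 3 * l ^ 2 * (ε / (3 * l ^ 2)) +
      3 * l * (ε / (3 * l ^ 2)) ^ 2 + (ε / (3 * l ^ 2)) ^ 3 := by ring
    rw [this, h10]
    have : 0 ≤ 3 * l * (ε / (3 * l ^ 2)) ^ 2 := by positivity
    have : 0 ≤ (ε / (3 * l ^ 2)) ^ 3 := by positivity
    linarith
  have h12 : (l + ε / (3 * l ^ 2)) ^ 3 ≤ (Real.logb 2 x' + 1) ^ 3 :=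
    pow_le_pow_left₀ (by positivity) h8 3
  linarith

lemma exists_log_pow_le (C : ℝ) : ∃ d₀ : ℝ, 1 ≤ d₀ ∧ ∀ x : ℝ, d₀ ≤ x →
    C * (Real.logb 2 x + 1) ^ 5 ≤ x := by
  have h := (Real.isLittleO_pow_log_id_atTop (n := 5)).bound
    (show (0 : ℝ) < 1 / (243 * (|C| + 1)) by positivity)
  obtain ⟨a, ha⟩ := Filter.eventually_atTop.mp h
  refine ⟨max a (Real.exp 1), le_max_of_le_right ?_, fun x hx => ?_⟩
  · have := Real.add_one_le_exp (1 : ℝ); linarith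
  have hxe : Real.exp 1 ≤ x := (le_max_right _ _).trans hx
  have hx0 : 0 < x := (Real.exp_pos 1).trans_le hxe
  have hl : 1 ≤ Real.log x := by rwa [Real.le_log_iff_exp_le hx0]
  have h1 := ha x ((le_max_left _ _).trans hx)
  rw [Real.norm_of_nonneg (by positivity), id, Real.norm_of_nonneg hx0.le] at h1
  have h2 : Real.logb 2 x + 1 ≤ 3 * Real.log x := by
    have : Real.logb 2 x ≤ 2 * Real.log x := by
      rw [Real.logb, div_le_iff₀ (Real.log_pos (by norm_num))]
      nlinarith [Real.log_two_gt_d9]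
    linarith
  have h3 : 0 ≤ Real.logb 2 x + 1 := by
    have : 0 ≤ Real.logb 2 x := by rw [Real.logb]; positivity
    linarith
  have h4 : (Real.logb 2 x + 1) ^ 5 ≤ (3 * Real.log x) ^ 5 := pow_le_pow_left₀ h3 h2 5
  calc C * (Real.logb 2 x + 1) ^ 5 ≤ (|C| + 1) * (3 * Real.log x) ^ 5 := by
        apply mul_le_mul (by linarith [le_abs_self C]) h4 (by positivity) (by positivity)
    _ = 243 * (|C| + 1) * Real.log x ^ 5 := by ring
    _ ≤ 243 * (|C| + 1) * (1 / (243 * (|C| + 1)) * x) := by gcongr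
    _ = x := by field_simp

/-- `N` is a spanning subgraph of `G` in which the vertices of `B` are isolated, and around every
other vertex `v` little has been lost: at most `D (i + 1)` vertices are `G`-neighbours but not
`N`-neighbours of some vertex of the `N`-ball of radius `i` around `v`. For `i = 0` this says that
`v` has lost at most `D` edges. -/
def LostBound {V : Type*} (G N : SimpleGraph V) (B : Set V) (D : ℕ) : Prop :=
  N ≤ G ∧ (∀ u w, N.Adj u w → u ∉ B) ∧
    ∀ v ∉ B, ∀ i, {w | ∃ u ∈ nball N {v} i, G.Adj u w ∧ ¬ N.Adj u w}.ncard ≤ D * (i + 1)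

lemma notMem_of_walk {V : Type*} {N : SimpleGraph V} {B : Set V}
    (h : ∀ u w, N.Adj u w → u ∉ B) {u v : V} (p : N.Walk u v) (hu : u ∉ B) :
    ∀ w ∈ p.support, w ∉ B := by
  induction p with
  | nil => simpa using hu
  | cons hadj p ih =>
    intro w hw
    rw [SimpleGraph.Walk.support_cons, List.mem_cons] at hw
    rcases hw with rfl | hw
    · exact hu
    · exact ih (h _ _ hadj.symm) w hw

lemma notMem_of_nball {V : Type*} {N : SimpleGraph V} {B S : Set V}
    (h : ∀ u w, N.Adj u w → u ∉ B) {w : V} {i : ℕ} (hS : ∀ v ∈ S, v ∉ B)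
    (hw : w ∈ nball N S i) : w ∉ B := by
  obtain ⟨u, hu, p, -⟩ := hw
  exact notMem_of_walk h p (hS u hu) _ p.end_mem_support

/-- One step of ball growth. While the ball has at most `d` vertices, the lost edges at the ball
are few enough to be deleted in the definition of an expander; later the lost vertices
are fewer than half of the exterior neighbourhood. -/
lemma nball_step {V : Type*} [Finite V] {ε d s : ℝ} (hε : 0 < ε) (hε1 : ε ≤ 1)
    (hd : ∀ x : ℝ, d ≤ x → 96 / ε ^ 2 * (Real.logb 2 x + 1) ^ 5 ≤ x) (hs : 16 ≤ s)
    {G N : SimpleGraph V} (hG : ESTExpander G ε s d) {B : Set V} (hN : LostBound G N B 16)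
    {v : V} (hv : v ∉ B) (i : ℕ)
    (hX : ((nball N {v} i).ncard : ℝ) ≤ 2 * (Nat.card V : ℝ) / 3)
    (hi : ε / 2 * i ≤ (Real.logb 2 ((nball N {v} i).ncard : ℝ) + 1) ^ 3) :
    ((nball N {v} i).ncard : ℝ) + ε * (nball N {v} i).ncard /
      (2 * (Real.logb 2 ((nball N {v} i).ncard : ℝ) + 1) ^ 2) ≤ (nball N {v} (i + 1)).ncard := by
  classical
  have := Fintype.ofFinite V
  set X := nball N {v} i with hXdef
  have hX1 : 1 ≤ X.ncard := by
    exact (Set.ncard_pos).mpr ⟨v, subset_nball _ _ _ rfl⟩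
  have hX1' : (1 : ℝ) ≤ X.ncard := by exact_mod_cast hX1
  set l := Real.logb 2 (X.ncard : ℝ) + 1 with hl
  have hl1 : 1 ≤ l := by
    have := Real.logb_nonneg (b := 2) (by norm_num) hX1'
    linarith
  have hext : X.ncard + (extNbhd N X).ncard ≤ (nball N {v} (i + 1)).ncard := by
    rw [← Set.ncard_union_eq]
    · refine Set.ncard_le_ncard ?_ (Set.toFinite _)
      rintro w (hw | ⟨-, u, hu, h⟩)
      · exact nball_mono le_rfl subset_rfl (Nat.le_succ i) hw
      · exact nball_succ_of_adj hu h
    · rw [Set.disjoint_left]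
      intro w hw hw'
      exact hw'.1 hw
  have hext' : (X.ncard : ℝ) + (extNbhd N X).ncard ≤ (nball N {v} (i + 1)).ncard := by
    exact_mod_cast hext
  suffices h : ε * X.ncard / (2 * l ^ 2) ≤ (extNbhd N X).ncard by linarith
  have hhalf : ε * X.ncard / (2 * l ^ 2) = ε * X.ncard / l ^ 2 / 2 := by field_simp
  have hpos : 0 ≤ ε * X.ncard / l ^ 2 := by positivity
  rcases le_total (X.ncard : ℝ) d with hXd | hXd
  · let F : Set (Sym2 V) := ⋃ u ∈ X.toFinset, (fun w => s(u, w)) '' {w | G.Adj u w ∧ ¬ N.Adj u w}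
    have hF : F.ncard ≤ 16 * X.ncard := by
      calc F.ncard ≤ ∑ u ∈ X.toFinset, ((fun w => s(u, w)) '' {w | G.Adj u w ∧ ¬ N.Adj u w}).ncard :=
            Finset.set_ncard_biUnion_le _ _
        _ ≤ ∑ u ∈ X.toFinset, 16 := by
            apply Finset.sum_le_sum
            intro u hu
            refine (Set.ncard_image_le).trans ?_
            have hu' : u ∉ B := notMem_of_nball hN.2.1 (S := {v}) (i := i) (by simpa using hv) (by simpa using hu)
            have := hN.2.2 u hu' 0
            simpa [nball_zero] using this
        _ = 16 * X.ncard := by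
            rw [Finset.sum_const, smul_eq_mul, Set.ncard_eq_toFinset_card', mul_comm]
    have hFG : F ⊆ G.edgeSet := by
      intro e he
      simp only [F, Set.mem_iUnion] at he
      obtain ⟨u, -, w, hw, rfl⟩ := he
      exact hw.1
    have h1 := hG X F hFG hX1 hX (by
      rw [min_eq_left hXd]
      have : (F.ncard : ℝ) ≤ 16 * X.ncard := by exact_mod_cast hF
      nlinarith)
    have h2 : extNbhd (G.deleteEdges F) X ⊆ extNbhd N X := by
      rintro w ⟨hw, u, hu, h⟩
      refine ⟨hw, u, hu, ?_⟩
      rw [SimpleGraph.deleteEdges_adj] at h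
      by_contra hcon
      apply h.2
      simp only [F, Set.mem_iUnion]
      exact ⟨u, by simpa using hu, w, ⟨h.1, hcon⟩, rfl⟩
    have h3 : ((extNbhd (G.deleteEdges F) X).ncard : ℝ) ≤ (extNbhd N X).ncard := by
      exact_mod_cast Set.ncard_le_ncard h2
    rw [hhalf]
    linarith
  · have h1 := hG X ∅ (by simp) hX1 hX (by
      simp only [Set.ncard_empty, Nat.cast_zero]
      refine mul_nonneg (by linarith) (le_min (by positivity) ?_)
      by_contra hneg
      push Not at hneg
      have := hd 0 hneg.le
      simp only [Real.logb_zero] at this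
      have : 0 < 96 / ε ^ 2 * (0 + 1 : ℝ) ^ 5 := by positivity
      linarith)
    rw [SimpleGraph.deleteEdges_empty] at h1
    have h2 : extNbhd G X ⊆ extNbhd N X ∪ {w | ∃ u ∈ X, G.Adj u w ∧ ¬ N.Adj u w} := by
      rintro w ⟨hw, u, hu, h⟩
      by_cases hc : N.Adj u w
      · exact Or.inl ⟨hw, u, hu, hc⟩
      · exact Or.inr ⟨u, hu, h, hc⟩
    have h3 : ((extNbhd G X).ncard : ℝ) ≤ (extNbhd N X).ncard + 16 * (i + 1) := by
      have := (Set.ncard_le_ncard h2).trans (Set.ncard_union_le _ _)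
      have h4 : {w | ∃ u ∈ X, G.Adj u w ∧ ¬ N.Adj u w}.ncard ≤ 16 * (i + 1) :=
        hN.2.2 v hv i
      have : (extNbhd G X).ncard ≤ (extNbhd N X).ncard + 16 * (i + 1) := by omega
      exact_mod_cast this
    have h5 : 16 * ((i : ℝ) + 1) ≤ ε * X.ncard / l ^ 2 / 2 := by
      have h6 := hd _ hXd
      rw [← hl] at h6
      have h7 : 96 * l ^ 5 ≤ ε ^ 2 * X.ncard := by
        have : 96 / ε ^ 2 * l ^ 5 = 96 * l ^ 5 / ε ^ 2 := by ring
        rw [this, div_le_iff₀ (by positivity)] at h6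
        linarith
      have h8 : (i : ℝ) + 1 ≤ 3 * l ^ 3 / ε := by
        rw [le_div_iff₀ hε]
        have : 1 ≤ l ^ 3 := one_le_pow₀ hl1
        nlinarith
      have h9 : 16 * (3 * l ^ 3 / ε) ≤ ε * X.ncard / l ^ 2 / 2 := by
        rw [div_div, mul_div_assoc', div_le_div_iff₀ hε (by positivity)]
        nlinarith
      linarith
    rw [hhalf]
    linarith

/-- The cube of the logarithm of the size of a ball grows linearly with the radius until the ball
contains two thirds of all vertices. -/
lemma nball_growth {V : Type*} [Finite V] {ε d s : ℝ} (hε : 0 < ε) (hε1 : ε ≤ 1)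
    (hd : ∀ x : ℝ, d ≤ x → 96 / ε ^ 2 * (Real.logb 2 x + 1) ^ 5 ≤ x) (hs : 16 ≤ s)
    {G N : SimpleGraph V} (hG : ESTExpander G ε s d) {B : Set V} (hN : LostBound G N B 16)
    {v : V} (hv : v ∉ B) (i : ℕ) :
    2 * (Nat.card V : ℝ) / 3 < (nball N {v} i).ncard ∨
      ε / 2 * i ≤ (Real.logb 2 ((nball N {v} i).ncard : ℝ) + 1) ^ 3 := by
  induction i with
  | zero => right; simp [nball_zero]
  | succ i ih =>
    have hle : ((nball N {v} i).ncard : ℝ) ≤ (nball N {v} (i + 1)).ncard := by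
      exact_mod_cast Set.ncard_le_ncard (nball_mono le_rfl subset_rfl (Nat.le_succ i))
    rcases ih with ih | ih
    · exact Or.inl (ih.trans_le hle)
    rcases lt_or_ge (2 * (Nat.card V : ℝ) / 3) (nball N {v} i).ncard with h | h
    · exact Or.inl (h.trans_le hle)
    right
    have h1 := nball_step hε hε1 hd hs hG hN hv i h ih
    have hX1 : (1 : ℝ) ≤ (nball N {v} i).ncard := by
      exact_mod_cast (Set.ncard_pos).mpr ⟨v, subset_nball N {v} i rfl⟩
    have h2 := log_growth_step hε hε1 hX1 h1
    push_cast
    linarith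

lemma exists_large_nball {V : Type*} [Finite V] {ε d s : ℝ} (hε : 0 < ε) (hε1 : ε ≤ 1)
    (hd : ∀ x : ℝ, d ≤ x → 96 / ε ^ 2 * (Real.logb 2 x + 1) ^ 5 ≤ x) (hs : 16 ≤ s)
    {G N : SimpleGraph V} (hG : ESTExpander G ε s d) {B : Set V} (hN : LostBound G N B 16)
    {v : V} (hv : v ∉ B) : ∃ i, 2 * (Nat.card V : ℝ) / 3 < (nball N {v} i).ncard := by
  obtain ⟨i, hi⟩ := exists_nat_gt ((Real.logb 2 (Nat.card V : ℝ) + 1) ^ 3 / (ε / 2))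
  refine ⟨i, (nball_growth hε hε1 hd hs hG hN hv i).resolve_right ?_⟩
  rw [div_lt_iff₀ (by positivity)] at hi
  have hX1 : (1 : ℝ) ≤ (nball N {v} i).ncard := by
    exact_mod_cast (Set.ncard_pos).mpr ⟨v, subset_nball N {v} i rfl⟩
  have hX2 : ((nball N {v} i).ncard : ℝ) ≤ Nat.card V := by
    exact_mod_cast Set.ncard_le_card _
  have h1 : Real.logb 2 ((nball N {v} i).ncard : ℝ) ≤ Real.logb 2 (Nat.card V : ℝ) :=
    Real.logb_le_logb_of_le (by norm_num) (by positivity) hX2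
  have h0 := Real.logb_nonneg (b := 2) (by norm_num) hX1
  have h2 : (Real.logb 2 ((nball N {v} i).ncard : ℝ) + 1) ^ 3 ≤
      (Real.logb 2 (Nat.card V : ℝ) + 1) ^ 3 := pow_le_pow_left₀ (by linarith) (by linarith) 3
  linarith

lemma le_ncard_nball {V : Type*} [Finite V] {ε d s : ℝ} (hε : 0 < ε) (hε1 : ε ≤ 1)
    (hd : ∀ x : ℝ, d ≤ x → 96 / ε ^ 2 * (Real.logb 2 x + 1) ^ 5 ≤ x) (hs : 16 ≤ s)
    {G N : SimpleGraph V} (hG : ESTExpander G ε s d) {B : Set V} (hN : LostBound G N B 16)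
    {v : V} (hv : v ∉ B) {k ρ : ℕ} (hk : ((2 : ℝ) ^ k) ≤ 2 * (Nat.card V : ℝ) / 3)
    (hρ : ((k : ℝ) + 1) ^ 3 < ε / 2 * ρ) : 2 ^ k ≤ (nball N {v} ρ).ncard := by
  have key : (2 : ℝ) ^ k ≤ (nball N {v} ρ).ncard := by
    rcases nball_growth hε hε1 hd hs hG hN hv ρ with h | h
    · linarith
    · by_contra hcon
      push Not at hcon
      have hX1 : (1 : ℝ) ≤ (nball N {v} ρ).ncard := by
        exact_mod_cast (Set.ncard_pos).mpr ⟨v, subset_nball N {v} ρ rfl⟩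
      have h1 : Real.logb 2 ((nball N {v} ρ).ncard : ℝ) ≤ k := by
        have := Real.logb_le_logb_of_le (b := 2) (by norm_num) (by positivity) hcon.le
        rwa [Real.logb_pow, Real.logb_self_eq_one (by norm_num), mul_one] at this
      have h0 := Real.logb_nonneg (b := 2) (by norm_num) hX1
      have h2 : (Real.logb 2 ((nball N {v} ρ).ncard : ℝ) + 1) ^ 3 ≤ ((k : ℝ) + 1) ^ 3 :=
        pow_le_pow_left₀ (by linarith) (by linarith) 3
      linarith
  exact_mod_cast key

end Growth

/-! ### Construction of arms -/

section Arms

/-- `A` is connected with radius at most `r` as seen from `a`: every vertex of `A` is joined to `a`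
by a walk of length at most `r` inside `A`. -/
def IsArm {V : Type*} (G : SimpleGraph V) (r : ℕ) (a : V) (A : Set V) : Prop :=
  ∀ v ∈ A, ∃ p : G.Walk a v, p.length ≤ r ∧ ∀ u ∈ p.support, u ∈ A

/-- Construction of one arm inside `N`: a geodesic `R` of length `ℓ` from `S`, together with the
ball of radius `ρ` around its far end. Since a ball of radius `i` meets `R` in at
most `2 i + 1` vertices, isolating the vertices of `R` costs little in the sense of
`LostBound`. -/
lemma arm_step {V : Type*} [Finite V] {G N : SimpleGraph V} {B S : Set V} {D ℓ ρ M : ℕ}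
    (hN : LostBound G N B D) (hSB : ∀ v ∈ S, v ∉ B) (hρ : ρ + 1 ≤ ℓ)
    (hM : ∀ v ∉ B, M ≤ (nball N {v} ρ).ncard)
    (hreach : ∃ q, q ∉ nball N S ℓ ∧ ∃ i, q ∈ nball N S i) :
    ∃ σ ∈ S, ∃ R U : Set V, σ ∈ R ∧ R ⊆ U ∧ IsArm G (ℓ + ρ) σ U ∧ M ≤ U.ncard ∧
      (∀ u ∈ U, u ∉ B) ∧ (∀ u ∈ U, u ∈ S → u = σ) ∧ U ⊆ nball N S (ℓ + ρ) ∧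
      (∀ u ∈ U, u ∈ R ∨ u ∉ nball N S (ℓ - ρ - 1)) ∧
      ∀ K, K ⊆ R → R \ {σ} ⊆ K → ∃ N' ≤ N, LostBound G N' (B ∪ K) (D + 3) := by
  classical
  obtain ⟨σ, hσ, z, r, hlen, hr⟩ : ∃ σ ∈ S, ∃ z, ∃ r : N.Walk σ z, r.length = ℓ ∧
      ∀ j, z ∈ nball N S j → r.length ≤ j := by
    obtain ⟨q, hq, hi⟩ := hreach
    obtain ⟨σ, hσ, p, hp⟩ := Nat.find_spec hi
    have hmin : ∀ j, q ∈ nball N S j → Nat.find hi ≤ j := fun j hj => Nat.find_min' hi hj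
    have hp' : Nat.find hi ≤ p.length := hmin _ ⟨σ, hσ, p, le_rfl⟩
    have hℓ : ℓ < Nat.find hi := by
      by_contra hcon
      exact hq (nball_mono le_rfl subset_rfl (not_lt.mp hcon) (Nat.find_spec hi))
    have hlen : (p.take ℓ).length = ℓ := by
      rw [SimpleGraph.Walk.take_length]; omega
    refine ⟨σ, hσ, p.getVert ℓ, p.take ℓ, hlen, fun j hj => ?_⟩
    have := hmin _ (nball_trans hj
      (⟨_, rfl, p.drop ℓ, le_rfl⟩ : q ∈ nball N {p.getVert ℓ} (p.drop ℓ).length))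
    rw [SimpleGraph.Walk.drop_length] at this
    omega
  have hRball : ∀ u ∈ r.support, u ∈ nball N S ℓ := by
    intro u hu
    exact ⟨σ, hσ, r.takeUntil u hu, by have := r.length_takeUntil_le_length hu; omega⟩
  refine ⟨σ, hσ, {w | w ∈ r.support}, {w | w ∈ r.support} ∪ nball N {z} ρ, r.start_mem_support,
    Set.subset_union_left, ?_, ?_, ?_, ?_, ?_, ?_, ?_⟩
  · rintro u (hu | ⟨_, rfl, q, hq⟩)
    · refine ⟨(r.takeUntil u hu).mapLe hN.1, ?_, ?_⟩
      · have := r.length_takeUntil_le_length hu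
        simp only [SimpleGraph.Walk.length_map]
        omega
      · intro w hw
        simp only [SimpleGraph.Walk.support_mapLe_eq_support] at hw
        exact Or.inl (r.support_takeUntil_subset_support hu hw)
    · refine ⟨(r.append q).mapLe hN.1, ?_, ?_⟩
      · simp only [SimpleGraph.Walk.length_map, SimpleGraph.Walk.length_append]
        omega
      · intro w hw
        simp only [SimpleGraph.Walk.support_mapLe_eq_support,
          SimpleGraph.Walk.mem_support_append_iff] at hw
        rcases hw with hw | hw
        · exact Or.inl hw
        · exact Or.inr ⟨_, rfl, q.takeUntil w hw, (q.length_takeUntil_le_length hw).trans hq⟩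
  · have hz : z ∉ B := notMem_of_walk hN.2.1 r (hSB σ hσ) z r.end_mem_support
    exact (hM z hz).trans (Set.ncard_le_ncard Set.subset_union_right)
  · have hz : z ∉ B := notMem_of_walk hN.2.1 r (hSB σ hσ) z r.end_mem_support
    rintro u (hu | hu)
    · exact notMem_of_walk hN.2.1 r (hSB σ hσ) u hu
    · exact notMem_of_nball hN.2.1 (by simpa using hz) hu
  · rintro u (hu | hu) huS
    · obtain ⟨t, rfl, ht⟩ := SimpleGraph.Walk.mem_support_iff_exists_getVert.mp hu
      have := hr _ ⟨_, huS, r.drop t, le_rfl⟩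
      rw [SimpleGraph.Walk.drop_length] at this
      have ht0 : t = 0 := by omega
      rw [ht0, SimpleGraph.Walk.getVert_zero]
    · have := hr ρ (nball_mono le_rfl (Set.singleton_subset_iff.mpr huS) le_rfl (nball_symm hu))
      omega
  · rintro u (hu | hu)
    · exact nball_mono le_rfl subset_rfl (by omega) (hRball u hu)
    · exact nball_trans (hRball z r.end_mem_support) hu
  · rintro u (hu | hu)
    · exact Or.inl hu
    · right
      intro hcon
      have := hr _ (nball_trans hcon (nball_symm hu))
      omega
  · intro K hKR hRK
    -- all edges at `K` are removed
    let N' : SimpleGraph V :=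
      { Adj := fun u w => N.Adj u w ∧ u ∉ K ∧ w ∉ K
        symm := ⟨fun u w h => ⟨h.1.symm, h.2.2, h.2.1⟩⟩
        loopless := ⟨fun u h => h.1.ne rfl⟩ }
    have hle : N' ≤ N := fun u w h => h.1
    refine ⟨N', hle, hle.trans hN.1, ?_, ?_⟩
    · rintro u w h (hu | hu)
      · exact hN.2.1 u w h.1 hu
      · exact h.2.1 hu
    · intro v hv i
      have hsub : {w | ∃ u ∈ nball N' {v} i, G.Adj u w ∧ ¬ N'.Adj u w} ⊆
          {w | ∃ u ∈ nball N {v} i, G.Adj u w ∧ ¬ N.Adj u w} ∪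
          {w | w ∈ r.support ∧ w ∈ nball N {v} (i + 1)} := by
        rintro w ⟨u, hu, hadj, hnot⟩
        by_cases hc : N.Adj u w
        · right
          have huK : u ∉ K := notMem_of_nball (S := {v}) (i := i) (N := N')
            (fun u w h => h.2.1) (by
              rintro _ rfl hK
              exact hv (Or.inr hK)) hu
          have hwK : w ∈ K := by
            by_contra hwK
            exact hnot ⟨hc, huK, hwK⟩
          exact ⟨hKR hwK, nball_succ_of_adj (nball_mono hle subset_rfl le_rfl hu) hc⟩
        · exact Or.inl ⟨u, nball_mono hle subset_rfl le_rfl hu, hadj, hc⟩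
      have h1 := (Set.ncard_le_ncard hsub).trans (Set.ncard_union_le _ _)
      have h2 := hN.2.2 v (fun h => hv (Or.inl h)) i
      have h3 := geodesic_inter_nball hσ r hr v (i + 1)
      calc _ ≤ _ := h1
        _ ≤ D * (i + 1) + (2 * (i + 1) + 1) := Nat.add_le_add h2 h3
        _ ≤ (D + 3) * (i + 1) := by nlinarith

/-- Arms at the two ends `v true`, `v false` of an edge, `c b` of them at `v b`, pairwise disjoint
except that arms at the same vertex share that vertex. The arms are built one after the other, each
starting from whichever unsaturated end its geodesic happens to leave. The other vertices of the
geodesic are isolated afterwards, and an end is isolated once it has all its arms.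
Later arms use shorter geodesics, so they stay away from the large balls of the earlier ones. -/
lemma exists_arms {V : Type*} [Finite V] {G : SimpleGraph V} {v : Bool → V}
    (hv : v true ≠ v false) {ρ M : ℕ} {n₂ : ℝ} (hρ : 1 ≤ ρ)
    (hexp : ∀ N B, LostBound G N B 16 → ∀ u ∉ B, M ≤ (nball N {u} ρ).ncard ∧
      ∃ i, n₂ < (nball N {u} i).ncard)
    (hsmall : ((nball G {v true, v false} (12 * ρ)).ncard : ℝ) ≤ n₂) (m : ℕ) (hm : m ≤ 4) :
    ∀ (c : Bool → ℕ), c true + c false = m → ∀ N B D, D + 3 * m ≤ 16 → LostBound G N B D →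
    (∀ b, 0 < c b → v b ∉ B) → ∃ U : Bool → ℕ → Set V,
      (∀ b j, j < c b → IsArm G (13 * ρ) (v b) (U b j) ∧ M ≤ (U b j).ncard ∧
        (∀ u ∈ U b j, u ∉ B) ∧ U b j ⊆ nball N {w | ∃ b, 0 < c b ∧ w = v b} (3 * ρ * m + ρ) ∧
        ∀ b', 0 < c b' → v b' ∈ U b j → v b' = v b) ∧
      ∀ b j b' j', j < c b → j' < c b' → (b, j) ≠ (b', j') → ∀ w ∈ U b j, w ∈ U b' j' →
        w = v b ∧ w = v b' := by
  classical
  have hinj : ∀ b b', v b = v b' → b = b' := by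
    intro b b' h
    cases b <;> cases b' <;> simp_all
  induction m with
  | zero =>
    intro c hc N B D hD hN hB
    have hc0 : ∀ b, c b = 0 := by intro b; cases b <;> omega
    exact ⟨fun _ _ => ∅, fun b j h => by simp [hc0] at h, fun b j _ _ h => by simp [hc0] at h⟩
  | succ m ih =>
    intro c hc N B D hD hN hB
    set S : Set V := {w | ∃ b, 0 < c b ∧ w = v b} with hS
    have hLB : ∀ {N B D}, D ≤ 16 → LostBound G N B D → LostBound G N B 16 := fun hD h =>
      ⟨h.1, h.2.1, fun v hv i => (h.2.2 v hv i).trans (Nat.mul_le_mul_right _ hD)⟩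
    have hN16 := hLB (by omega) hN
    have hSB : ∀ w ∈ S, w ∉ B := by rintro _ ⟨b, hb, rfl⟩; exact hB b hb
    have hlen : 3 * ρ * (m + 1) ≤ 12 * ρ := by nlinarith
    obtain ⟨σ, ⟨b₀, hb₀, rfl⟩, R, U₀, hσR, hRU, hArm, hMU, hUB, hUS, hUball, hUfar, hK⟩ :=
      arm_step (ℓ := 3 * ρ * (m + 1)) (ρ := ρ) (M := M) hN hSB (by nlinarith)
        (fun u hu => (hexp N B hN16 u hu).1) (by
          obtain ⟨b, hb⟩ : ∃ b, 0 < c b := by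
            by_contra hcon
            push Not at hcon
            have := hcon true
            have := hcon false
            omega
          obtain ⟨i, hi⟩ := (hexp N B hN16 (v b) (hB b hb)).2
          by_contra hcon
          push Not at hcon
          have hsub : nball N {v b} i ⊆ nball G {v true, v false} (12 * ρ) := by
            intro q hq
            have hq' : q ∈ nball N S i :=
              nball_mono le_rfl (Set.singleton_subset_iff.mpr (show v b ∈ S from ⟨b, hb, rfl⟩)) le_rfl hq
            have : q ∈ nball N S (3 * ρ * (m + 1)) := by
              by_contra h
              exact hcon q h i hq'
            refine nball_mono hN.1 ?_ hlen this
            rintro _ ⟨b, -, rfl⟩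
            cases b <;> simp
          have : ((nball N {v b} i).ncard : ℝ) ≤
              (nball G {v true, v false} (12 * ρ)).ncard := by
            exact_mod_cast Set.ncard_le_ncard hsub
          linarith)
    set c' : Bool → ℕ := Function.update c b₀ (c b₀ - 1) with hc'
    have hc'b₀ : c' b₀ = c b₀ - 1 := by simp [c']
    have hc'ne : ∀ b, b ≠ b₀ → c' b = c b := fun b hb => by simp [c', hb]
    have hc'le : ∀ b, c' b ≤ c b := by
      intro b
      by_cases h : b = b₀
      · subst h; omega
      · rw [hc'ne b h]
    set K : Set V := if c' b₀ = 0 then R else R \ {v b₀} with hKdef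
    obtain ⟨N', hN'N, hN'⟩ := hK K (by rw [hKdef]; split_ifs <;> simp)
      (by rw [hKdef]; split_ifs <;> simp)
    obtain ⟨U, hU1, hU2⟩ := ih (by omega) c' (by
        cases b₀
        · have := hc'ne true (by simp); omega
        · have := hc'ne false (by simp); omega) N' (B ∪ K) (D + 3) (by omega) hN' (by
        rintro b hb (h | h)
        · exact hB b (hb.trans_le (hc'le b)) h
        · have hvR : v b ∈ R := by
            rw [hKdef] at h
            split_ifs at h
            · exact h
            · exact h.1
          have hbb : b = b₀ := hinj _ _ (hUS _ (hRU hvR) ⟨b, hb.trans_le (hc'le b), rfl⟩)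
          subst hbb
          rw [hKdef, if_neg hb.ne'] at h
          exact h.2 rfl)
    have hS' : {w | ∃ b, 0 < c' b ∧ w = v b} ⊆ S := by
      rintro _ ⟨b, hb, rfl⟩
      exact ⟨b, hb.trans_le (hc'le b), rfl⟩
    have hnew : ∀ b j, j < c' b → ∀ w ∈ U₀, w ∈ U b j → w = v b₀ ∧ w = v b := by
      intro b j hj w hw0 hw
      obtain ⟨-, -, hwB, hwball, hwS⟩ := hU1 b j hj
      have hwN : w ∈ nball N S (3 * ρ * (m + 1) - ρ - 1) := by
        refine nball_mono hN'N hS' ?_ (hwball hw)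
        have : 3 * ρ * (m + 1) = 3 * ρ * m + 3 * ρ := by ring
        omega
      have hwR : w ∈ R := (hUfar w hw0).resolve_right (fun h => h hwN)
      have hwK : w ∉ K := fun h => hwB w hw (Or.inr h)
      by_cases h0 : c' b₀ = 0
      · rw [hKdef, if_pos h0] at hwK
        exact absurd hwR hwK
      · rw [hKdef, if_neg h0] at hwK
        have hwσ : w = v b₀ := by
          by_contra h
          exact hwK ⟨hwR, h⟩
        exact ⟨hwσ, hwσ.trans (hwS b₀ (Nat.pos_of_ne_zero h0) (hwσ ▸ hw))⟩
    refine ⟨fun b j => if b = b₀ ∧ j = c b₀ - 1 then U₀ else U b j, ?_, ?_⟩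
    · intro b j hj
      by_cases h : b = b₀ ∧ j = c b₀ - 1
      · simp only [if_pos h]
        obtain ⟨rfl, rfl⟩ := h
        refine ⟨fun w hw => ?_, hMU, hUB, hUball, fun b' hb' h' => hUS _ h' ⟨b', hb', rfl⟩⟩
        obtain ⟨p, hp, hp'⟩ := hArm w hw
        exact ⟨p, by omega, hp'⟩
      · simp only [if_neg h]
        have hj' : j < c' b := by
          by_cases hb : b = b₀
          · subst hb
            have : j ≠ c b - 1 := fun hh => h ⟨rfl, hh⟩
            omega
          · rwa [hc'ne b hb]
        obtain ⟨h1, h2, h3, h4, h5⟩ := hU1 b j hj'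
        refine ⟨h1, h2, fun u hu hB => h3 u hu (Or.inl hB), fun w hw => ?_, ?_⟩
        · refine nball_mono hN'N hS' ?_ (h4 hw)
          have : 3 * ρ * (m + 1) = 3 * ρ * m + 3 * ρ := by ring
          omega
        · intro b' hb' hmem
          by_cases hb'0 : 0 < c' b'
          · exact h5 b' hb'0 hmem
          · have hbb : b' = b₀ := by
              by_contra hne
              rw [hc'ne b' hne] at hb'0
              exact hb'0 hb'
            subst hbb
            exact (hnew b j hj' _ (hRU hσR) hmem).2
    · have hlt : ∀ b j, j < c b → ¬ (b = b₀ ∧ j = c b₀ - 1) → j < c' b := by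
        intro b j hj h
        by_cases hb : b = b₀
        · subst hb
          have : j ≠ c b - 1 := fun hh => h ⟨rfl, hh⟩
          omega
        · rwa [hc'ne b hb]
      intro b j b' j' hj hj' hne w hw hw'
      by_cases h : b = b₀ ∧ j = c b₀ - 1 <;> by_cases h' : b' = b₀ ∧ j' = c b₀ - 1
      · exact absurd (by rw [h.1, h.2, h'.1, h'.2]) hne
      · simp only [if_pos h] at hw
        simp only [if_neg h'] at hw'
        have := hnew b' j' (hlt _ _ hj' h') w hw hw'
        rw [h.1]; exact this
      · simp only [if_neg h] at hw
        simp only [if_pos h'] at hw'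
        have := hnew b j (hlt _ _ hj h) w hw' hw
        rw [h'.1]; exact this.symm
      · simp only [if_neg h] at hw
        simp only [if_neg h'] at hw'
        exact hU2 b j b' j' (hlt _ _ hj h) (hlt _ _ hj' h') hne w hw hw'

/-- An arm contains an arm of prescribed approximate size: the union of the walks from `a` to `M`
of its vertices. -/
lemma IsArm.prune {V : Type*} [Finite V] {G : SimpleGraph V} {r : ℕ} {a : V} {A : Set V}
    (h : IsArm G r a A) {M : ℕ} (hM : M ≤ A.ncard) :
    ∃ A' ⊆ A, IsArm G r a A' ∧ M ≤ A'.ncard ∧ A'.ncard ≤ M * (r + 1) := by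
  classical
  have := Fintype.ofFinite V
  obtain ⟨T, hTA, hT⟩ := Set.exists_subset_card_eq hM
  have hL : ∀ v ∈ A, ∃ L : Set V, v ∈ L ∧ L ⊆ A ∧ L.ncard ≤ r + 1 ∧ IsArm G r a L := by
    intro v hv
    obtain ⟨p, hp, hpA⟩ := h v hv
    refine ⟨{u | u ∈ p.support}, p.end_mem_support, hpA, ?_, fun u hu => ?_⟩
    · have hsub : {u | u ∈ p.support} ⊆ (p.support.toFinset : Set V) := by
        intro u hu
        simpa using hu
      refine (Set.ncard_le_ncard hsub (Set.toFinite _)).trans ?_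
      rw [Set.ncard_coe_finset]
      refine (List.toFinset_card_le _).trans ?_
      rw [SimpleGraph.Walk.length_support]
      omega
    · exact ⟨p.takeUntil u hu, (p.length_takeUntil_le_length hu).trans hp,
        fun w hw => p.support_takeUntil_subset_support hu hw⟩
  choose! L hvL hLA hLr hLarm using hL
  refine ⟨⋃ v ∈ T.toFinset, L v, ?_, ?_, ?_, ?_⟩
  · intro u hu
    simp only [Set.mem_iUnion] at hu
    obtain ⟨v, hv, hu⟩ := hu
    exact hLA v (hTA (by simpa using hv)) hu
  · intro u hu
    simp only [Set.mem_iUnion] at hu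
    obtain ⟨v, hv, hu⟩ := hu
    obtain ⟨p, hp, hpL⟩ := hLarm v (hTA (by simpa using hv)) u hu
    refine ⟨p, hp, fun w hw => ?_⟩
    simp only [Set.mem_iUnion]
    exact ⟨v, hv, hpL w hw⟩
  · rw [← hT]
    apply Set.ncard_le_ncard _ (Set.toFinite _)
    intro v hv
    simp only [Set.mem_iUnion]
    exact ⟨v, by simpa using hv, hvL v (hTA hv)⟩
  · refine (Finset.set_ncard_biUnion_le _ _).trans ?_
    rw [← hT, Set.ncard_eq_toFinset_card', ← smul_eq_mul, ← Finset.sum_const]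
    apply Finset.sum_le_sum
    intro v hv
    exact hLr v (hTA (by simpa using hv))

end Arms

/-! ### Connecting large sets in an expander with few edges deleted -/

section Connection

/-- Any two vertex sets of size at least `M` avoiding a set `W` of at most `w` vertices are joined
by a walk of length at most `L` avoiding `W`. -/
def RobustConn {V : Type*} (H : SimpleGraph V) (M w L : ℕ) : Prop :=
  ∀ W Z₁ Z₂ : Set V, W.ncard ≤ w → M ≤ Z₁.ncard → M ≤ Z₂.ncard → (∀ v ∈ Z₁, v ∉ W) →
    (∀ v ∈ Z₂, v ∉ W) →
    ∃ a ∈ Z₁, ∃ b ∈ Z₂, ∃ p : H.Walk a b, p.length ≤ L ∧ ∀ u ∈ p.support, u ∉ W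

/-- In an expander with few edges deleted, sets larger than the number of deleted vertices and
edges (times the inverse expansion factor) expand by a constant factor in each step. -/
lemma nball_expand {V : Type*} [Finite V] {G : SimpleGraph V} {ε s d : ℝ} (hε : 0 < ε)
    (hs : 0 ≤ s) (hd : 0 ≤ d) (hG : ESTExpander G ε s d) {m q M : ℕ} (hn : Nat.card V ≤ 2 ^ m)
    {F : Set (Sym2 V)} {W : Set V} (hM1 : 1 ≤ M)
    (hM : ((F.ncard + W.ncard : ℕ) : ℝ) * (2 * (m + 1) ^ 2) ≤ ε * M)
    (hq : (2 * (m + 1) ^ 2 : ℝ) ≤ ε * q) {H : SimpleGraph V}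
    (hH : ∀ u v, H.Adj u v ↔ (G.deleteEdges F).Adj u v ∧ u ∉ W ∧ v ∉ W) {Z : Set V}
    (hZ : M ≤ Z.ncard) (hZW : ∀ v ∈ Z, v ∉ W) :
    2 * (Nat.card V : ℝ) / 3 < (nball H Z (q * m)).ncard := by
  classical
  set δ : ℝ := ε / (2 * (m + 1) ^ 2) with hδ
  have hδ0 : 0 < δ := by positivity
  have hMZ : ∀ i, M ≤ (nball H Z i).ncard := fun i =>
    hZ.trans (Set.ncard_le_ncard (subset_nball H Z i))
  have hstep : ∀ i, ((nball H Z i).ncard : ℝ) ≤ 2 * (Nat.card V : ℝ) / 3 →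
      (1 + δ) * (nball H Z i).ncard ≤ (nball H Z (i + 1)).ncard := by
    intro i hi
    set X := nball H Z i with hX
    have hX1 : 1 ≤ X.ncard := hM1.trans (hMZ i)
    have hXW : ∀ u ∈ X, u ∉ W :=
      fun u hu => notMem_of_nball (B := W) (fun u w h => ((hH u w).1 h).2.1) hZW hu
    have hexp := hG X ∅ (Set.empty_subset _) hX1 hi (by
      simp only [Set.ncard_empty, Nat.cast_zero]; positivity)
    rw [SimpleGraph.deleteEdges_empty] at hexp
    have hXpos : (0 : ℝ) < X.ncard := by exact_mod_cast hX1
    have hlog : Real.logb 2 X.ncard ≤ m := by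
      have h1 : (X.ncard : ℝ) ≤ 2 ^ (m : ℝ) := by
        rw [Real.rpow_natCast]
        exact_mod_cast (Set.ncard_le_card X).trans hn
      calc Real.logb 2 X.ncard ≤ Real.logb 2 (2 ^ (m : ℝ)) :=
            Real.logb_le_logb_of_le (by norm_num) hXpos h1
        _ = m := by rw [Real.logb_rpow] <;> norm_num
    have hlog0 : 0 ≤ Real.logb 2 X.ncard :=
      Real.logb_nonneg (by norm_num) (by exact_mod_cast hX1)
    have h2 : 2 * δ * X.ncard ≤ ((extNbhd G X).ncard : ℝ) := by
      refine le_trans ?_ hexp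
      have : 2 * δ * X.ncard = ε * X.ncard / ((m : ℝ) + 1) ^ 2 := by
        rw [hδ]; field_simp
      rw [this]
      gcongr
    -- A lost neighbour lies in `W` or is charged to a deleted edge, of which it is the end
    -- outside `X`.
    have hcover : extNbhd G X ⊆ (nball H Z (i + 1) \ X) ∪
        (W ∪ {w | w ∉ X ∧ ∃ u ∈ X, s(u, w) ∈ F}) := by
      rintro w ⟨hwX, u, hu, huw⟩
      by_cases hwW : w ∈ W
      · exact Or.inr (Or.inl hwW)
      by_cases hF : s(u, w) ∈ F
      · exact Or.inr (Or.inr ⟨hwX, u, hu, hF⟩)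
      · refine Or.inl ⟨nball_succ_of_adj hu ((hH u w).2 ⟨?_, hXW u hu, hwW⟩), hwX⟩
        rw [SimpleGraph.deleteEdges_adj]
        exact ⟨huw, hF⟩
    have hlostF : {w | w ∉ X ∧ ∃ u ∈ X, s(u, w) ∈ F}.ncard ≤ F.ncard := by
      have hch : ∀ w, ∃ u, w ∈ {w | w ∉ X ∧ ∃ u ∈ X, s(u, w) ∈ F} → u ∈ X ∧ s(u, w) ∈ F := by
        intro w
        by_cases hw : w ∈ {w | w ∉ X ∧ ∃ u ∈ X, s(u, w) ∈ F}
        · obtain ⟨u, hu⟩ := hw.2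
          exact ⟨u, fun _ => hu⟩
        · exact ⟨w, fun h => absurd h hw⟩
      choose g hg using hch
      refine Set.ncard_le_ncard_of_injOn (fun w => s(g w, w)) (fun w hw => (hg w hw).2) ?_
        (Set.toFinite _)
      intro w hw w' hw' h
      simp only [Sym2.eq_iff] at h
      rcases h with h | h
      · exact h.2
      · exact absurd (h.1 ▸ (hg w hw).1) hw'.1
    have h3 : (extNbhd G X).ncard ≤ (nball H Z (i + 1) \ X).ncard + (W.ncard + F.ncard) :=
      (Set.ncard_le_ncard hcover (Set.toFinite _)).trans ((Set.ncard_union_le _ _).trans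
        (Nat.add_le_add_left ((Set.ncard_union_le _ _).trans
          (Nat.add_le_add_left hlostF _)) _))
    have h4 : (nball H Z (i + 1) \ X).ncard + X.ncard = (nball H Z (i + 1)).ncard :=
      Set.ncard_sdiff_add_ncard_of_subset (nball_mono le_rfl subset_rfl (Nat.le_succ i))
        (Set.toFinite _)
    have h5 : ((F.ncard + W.ncard : ℕ) : ℝ) ≤ δ * X.ncard := by
      have : ((F.ncard + W.ncard : ℕ) : ℝ) ≤ δ * M := by
        rw [hδ, div_mul_eq_mul_div, le_div_iff₀ (by positivity)]
        exact hM
      refine this.trans ?_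
      gcongr
      exact hMZ i
    have h3' : ((extNbhd G X).ncard : ℝ) ≤
      (nball H Z (i + 1) \ X).ncard + (W.ncard + F.ncard) := by exact_mod_cast h3
    have h4' : ((nball H Z (i + 1) \ X).ncard : ℝ) + X.ncard = (nball H Z (i + 1)).ncard := by
      exact_mod_cast h4
    push_cast at h5
    linarith
  by_contra hcon
  rw [not_lt] at hcon
  have hle : ∀ i ≤ q * m, ((nball H Z i).ncard : ℝ) ≤ 2 * (Nat.card V : ℝ) / 3 := by
    intro i hi
    refine le_trans ?_ hcon
    exact_mod_cast Set.ncard_le_ncard (nball_mono le_rfl subset_rfl hi) (Set.toFinite _)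
  have hgrow : ∀ i ≤ q * m, (1 + δ) ^ i ≤ ((nball H Z i).ncard : ℝ) := by
    intro i
    induction i with
    | zero =>
      intro _
      simp only [pow_zero]
      exact_mod_cast hM1.trans (hMZ 0)
    | succ i ih =>
      intro hi
      have h1 := ih (by omega)
      have h2 := hstep i (hle i (by omega))
      rw [pow_succ']
      refine le_trans ?_ h2
      gcongr
  have h2q : (2 : ℝ) ≤ (1 + δ) ^ q := by
    have h1 := one_add_mul_le_pow (a := δ) (by linarith) q
    have h2 : 1 ≤ (q : ℝ) * δ := by
      rw [hδ, mul_div_assoc', le_div_iff₀ (by positivity)]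
      linarith
    linarith
  have hfin := hgrow (q * m) le_rfl
  rw [pow_mul] at hfin
  have h2m : (2 : ℝ) ^ m ≤ ((1 + δ) ^ q) ^ m := by gcongr
  have hn' : (Nat.card V : ℝ) ≤ 2 ^ m := by exact_mod_cast hn
  have hcard : (1 : ℝ) ≤ Nat.card V := by
    exact_mod_cast (hM1.trans (hMZ 0)).trans (Set.ncard_le_card _)
  linarith

lemma robustConn_of_expander {V : Type*} [Finite V] {G : SimpleGraph V} {ε s d : ℝ} (hε : 0 < ε)
    (hs : 0 ≤ s) (hd : 0 ≤ d) (hG : ESTExpander G ε s d) {m q M w : ℕ} (hn : Nat.card V ≤ 2 ^ m)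
    {F : Set (Sym2 V)} (hM1 : 1 ≤ M)
    (hM : ((F.ncard + w : ℕ) : ℝ) * (2 * (m + 1) ^ 2) ≤ ε * M)
    (hq : (2 * (m + 1) ^ 2 : ℝ) ≤ ε * q) :
    RobustConn (G.deleteEdges F) M w (2 * (q * m)) := by
  intro W Z₁ Z₂ hW hZ₁ hZ₂ hZ₁W hZ₂W
  let H : SimpleGraph V :=
    { Adj := fun u v => (G.deleteEdges F).Adj u v ∧ u ∉ W ∧ v ∉ W
      symm := ⟨fun u w h => ⟨h.1.symm, h.2.2, h.2.1⟩⟩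
      loopless := ⟨fun u h => h.1.ne rfl⟩ }
  have hM' : ((F.ncard + W.ncard : ℕ) : ℝ) * (2 * (m + 1) ^ 2) ≤ ε * M := by
    refine le_trans ?_ hM
    gcongr
  have h₁ := nball_expand hε hs hd hG hn hM1 hM' hq (H := H) (fun _ _ => Iff.rfl) hZ₁ hZ₁W
  have h₂ := nball_expand hε hs hd hG hn hM1 hM' hq (H := H) (fun _ _ => Iff.rfl) hZ₂ hZ₂W
  obtain ⟨v, ⟨a, ha, p, hp⟩, ⟨b, hb, p', hp'⟩⟩ :
      (nball H Z₁ (q * m) ∩ nball H Z₂ (q * m)).Nonempty := by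
    rw [Set.nonempty_iff_ne_empty]
    intro hemp
    have := Set.ncard_union_eq (Set.disjoint_iff_inter_eq_empty.mpr hemp)
      (Set.toFinite _) (Set.toFinite _)
    have h3 := Set.ncard_le_card (nball H Z₁ (q * m) ∪ nball H Z₂ (q * m))
    rw [this] at h3
    have h3' : ((nball H Z₁ (q * m)).ncard : ℝ) + (nball H Z₂ (q * m)).ncard ≤ Nat.card V := by
      exact_mod_cast h3
    have : (0 : ℝ) ≤ Nat.card V := Nat.cast_nonneg _
    linarith
  have hle : H ≤ G.deleteEdges F := fun u w h => h.1
  refine ⟨a, ha, b, hb, (p.append p'.reverse).mapLe hle, ?_, ?_⟩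
  · simp only [SimpleGraph.Walk.length_map, SimpleGraph.Walk.length_append,
      SimpleGraph.Walk.length_reverse]
    omega
  · intro u hu
    simp only [SimpleGraph.Walk.support_mapLe_eq_support] at hu
    exact notMem_of_walk (B := W) (N := H) (fun u w h => h.2.1) _ (hZ₁W a ha) u hu

end Connection

/-! ### Linking armed paths into one path -/

section Linking

variable {V : Type*} {H : SimpleGraph V}

lemma isPath_append {u v w : V} {p : H.Walk u v} {q : H.Walk v w} (hp : p.IsPath)
    (hq : q.IsPath) (h : ∀ x ∈ p.support, x ∈ q.support → x = v) : (p.append q).IsPath := by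
  rw [SimpleGraph.Walk.isPath_def, SimpleGraph.Walk.support_append, List.nodup_append']
  have hq' := hq.support_nodup
  rw [← SimpleGraph.Walk.cons_tail_support, List.nodup_cons] at hq'
  refine ⟨hp.support_nodup, hq'.2, fun x hx hx' => ?_⟩
  have := h x hx (List.mem_of_mem_tail hx')
  subst this
  exact hq'.1 hx'

/-- A shortest connection between two sets is a path meeting each of them only at its end. -/
lemma exists_connecting_path {P : V → Prop} {L : ℕ} {Z₁ Z₂ : Set V}
    (h : ∃ a ∈ Z₁, ∃ b ∈ Z₂, ∃ p : H.Walk a b, p.length ≤ L ∧ ∀ u ∈ p.support, P u) :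
    ∃ a ∈ Z₁, ∃ b ∈ Z₂, ∃ p : H.Walk a b, p.IsPath ∧ p.length ≤ L ∧ (∀ u ∈ p.support, P u) ∧
      (∀ u ∈ p.support, u ∈ Z₁ → u = a) ∧ ∀ u ∈ p.support, u ∈ Z₂ → u = b := by
  classical
  have hex : ∃ i, ∃ a ∈ Z₁, ∃ b ∈ Z₂, ∃ p : H.Walk a b, p.length ≤ i ∧ ∀ u ∈ p.support, P u :=
    ⟨L, h⟩
  obtain ⟨a, ha, b, hb, p, hp, hP⟩ := Nat.find_spec hex
  have hmin : ∀ a' ∈ Z₁, ∀ b' ∈ Z₂, ∀ q : H.Walk a' b', (∀ u ∈ q.support, P u) →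
      Nat.find hex ≤ q.length := fun a' ha' b' hb' q hq =>
    Nat.find_min' hex ⟨a', ha', b', hb', q, le_rfl, hq⟩
  have hP' : ∀ u ∈ p.bypass.support, P u := fun u hu => hP u (p.support_bypass_subset_support hu)
  have hlen := p.length_bypass_le_length
  refine ⟨a, ha, b, hb, p.bypass, p.bypass_isPath,
    hlen.trans (hp.trans (Nat.find_min' hex h)), hP', fun u hu huZ => ?_, fun u hu huZ => ?_⟩
  · obtain ⟨t, rfl, ht⟩ := SimpleGraph.Walk.mem_support_iff_exists_getVert.mp hu
    have := hmin _ huZ b hb (p.bypass.drop t) (fun x hx => hP' x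
      ((p.bypass.isSubwalk_drop t).support_subset hx))
    rw [SimpleGraph.Walk.drop_length] at this
    by_cases ht0 : t = 0
    · rw [ht0, SimpleGraph.Walk.getVert_zero]
    · have h0 : p.bypass.length = 0 := by omega
      omega
  · obtain ⟨t, rfl, ht⟩ := SimpleGraph.Walk.mem_support_iff_exists_getVert.mp hu
    have := hmin a ha _ huZ (p.bypass.take t) (fun x hx => hP' x
      ((p.bypass.isSubwalk_take t).support_subset hx))
    rw [SimpleGraph.Walk.take_length] at this
    have ht' : t = p.bypass.length := by omega
    rw [ht', SimpleGraph.Walk.getVert_length]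

/-- A path `p` together with disjoint arms `A` and `B` of radius at most `r` at its two ends, each
having at least `M` vertices besides the end of the path and meeting the path only there. -/
structure ArmedPath (H : SimpleGraph V) (r M : ℕ) where
  a : V
  b : V
  p : H.Walk a b
  A : Set V
  B : Set V
  isPath : p.IsPath
  cardA : M + 1 ≤ A.ncard
  cardB : M + 1 ≤ B.ncard
  armA : IsArm H r a A
  armB : IsArm H r b B
  disj : ∀ u ∈ A, u ∉ B
  meetA : ∀ u ∈ p.support, u ∈ A → u = a
  meetB : ∀ u ∈ p.support, u ∈ B → u = b

namespace ArmedPath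

variable {r M : ℕ}

/-- All the vertices of an armed path. -/
def region (c : ArmedPath H r M) : Set V := {u | u ∈ c.A ∨ u ∈ c.B ∨ u ∈ c.p.support}

/-- The armed path traversed backwards. -/
def reverse (c : ArmedPath H r M) : ArmedPath H r M where
  a := c.b
  b := c.a
  p := c.p.reverse
  A := c.B
  B := c.A
  isPath := c.isPath.reverse
  cardA := c.cardB
  cardB := c.cardA
  armA := c.armB
  armB := c.armA
  disj := fun u hu hu' => c.disj u hu' hu
  meetA := fun u hu => c.meetB u (by simpa using hu)
  meetB := fun u hu => c.meetA u (by simpa using hu)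

lemma region_reverse (c : ArmedPath H r M) : c.reverse.region = c.region := by
  ext u
  simp only [region, reverse, Set.mem_ofPred_eq, SimpleGraph.Walk.support_reverse,
    List.mem_reverse]
  tauto

lemma join_aux (c D : ArmedPath H r M) (hdisj : ∀ u ∈ c.region, u ∉ D.region) {v w : V}
    {π : H.Walk v w} (hπ : π.IsPath) (hv : v ∈ c.B) (hw : w ∈ D.A)
    (hπc : ∀ u ∈ π.support, u ∈ c.region → u = v)
    (hπD : ∀ u ∈ π.support, u ∈ D.region → u = w) (hvc : v ∉ c.p.support)
    (hwD : w ∉ D.p.support) :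
    ∃ E : ArmedPath H r M, (∀ u ∈ E.region, u ∈ c.region ∨ u ∈ D.region ∨ u ∈ π.support) ∧
      (∀ e, e ∈ c.p.edges ∨ e ∈ D.p.edges → e ∈ E.p.edges) ∧
      E.p.length ≤ c.p.length + D.p.length + π.length + 2 * r := by
  classical
  have hcA : ∀ {u}, u ∈ c.A → u ∈ c.region := fun h => Or.inl h
  have hcB : ∀ {u}, u ∈ c.B → u ∈ c.region := fun h => Or.inr (Or.inl h)
  have hcp : ∀ {u}, u ∈ c.p.support → u ∈ c.region := fun h => Or.inr (Or.inr h)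
  have hDA : ∀ {u}, u ∈ D.A → u ∈ D.region := fun h => Or.inl h
  have hDB : ∀ {u}, u ∈ D.B → u ∈ D.region := fun h => Or.inr (Or.inl h)
  have hDp : ∀ {u}, u ∈ D.p.support → u ∈ D.region := fun h => Or.inr (Or.inr h)
  obtain ⟨α, hα, hαlen, hαB⟩ : ∃ α : H.Walk c.b v, α.IsPath ∧ α.length ≤ r ∧
      ∀ u ∈ α.support, u ∈ c.B := by
    obtain ⟨α, h1, h2⟩ := c.armB v hv
    exact ⟨α.bypass, α.bypass_isPath, α.length_bypass_le_length.trans h1,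
      fun u hu => h2 u (α.support_bypass_subset_support hu)⟩
  obtain ⟨β, hβ, hβlen, hβA⟩ : ∃ β : H.Walk w D.a, β.IsPath ∧ β.length ≤ r ∧
      ∀ u ∈ β.support, u ∈ D.A := by
    obtain ⟨β, h1, h2⟩ := D.armA w hw
    exact ⟨β.reverse.bypass, β.reverse.bypass_isPath,
      β.reverse.length_bypass_le_length.trans (by simpa using h1),
      fun u hu => h2 u (by simpa using β.reverse.support_bypass_subset_support hu)⟩
  have h1 : (c.p.append α).IsPath := isPath_append c.isPath hα
    (fun x hx hx' => c.meetB x hx (hαB x hx'))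
  have h1s : ∀ x ∈ (c.p.append α).support, x ∈ c.p.support ∨ x ∈ c.B := by
    intro x hx
    rw [SimpleGraph.Walk.mem_support_append_iff] at hx
    exact hx.imp_right (hαB x)
  have h1c : ∀ x ∈ (c.p.append α).support, x ∈ c.region := by
    intro x hx
    rcases h1s x hx with h | h
    · exact hcp h
    · exact hcB h
  have h2 : (β.append D.p).IsPath := isPath_append hβ D.isPath
    (fun x hx hx' => D.meetA x hx' (hβA x hx))
  have h2s : ∀ x ∈ (β.append D.p).support, x ∈ D.p.support ∨ x ∈ D.A := by
    intro x hx
    rw [SimpleGraph.Walk.mem_support_append_iff] at hx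
    exact (hx.imp_left (hβA x)).symm
  have h2c : ∀ x ∈ (β.append D.p).support, x ∈ D.region := by
    intro x hx
    rcases h2s x hx with h | h
    · exact hDp h
    · exact hDA h
  have h3 : (π.append (β.append D.p)).IsPath := isPath_append hπ h2
    (fun x hx hx' => hπD x hx (h2c x hx'))
  have h4 : ((c.p.append α).append (π.append (β.append D.p))).IsPath := by
    refine isPath_append h1 h3 (fun x hx hx' => ?_)
    rw [SimpleGraph.Walk.mem_support_append_iff] at hx'
    rcases hx' with h | h
    · exact hπc x h (h1c x hx)
    · exact absurd (h2c x h) (hdisj x (h1c x hx))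
  have h4s : ∀ x ∈ ((c.p.append α).append (π.append (β.append D.p))).support,
      (x ∈ c.p.support ∨ x ∈ c.B) ∨ x ∈ π.support ∨ x ∈ D.p.support ∨ x ∈ D.A := by
    intro x hx
    rw [SimpleGraph.Walk.mem_support_append_iff] at hx
    refine hx.imp (h1s x) (fun h => ?_)
    rw [SimpleGraph.Walk.mem_support_append_iff] at h
    exact h.imp_right (h2s x)
  refine ⟨⟨c.a, D.b, _, c.A, D.B, h4, c.cardA, D.cardB, c.armA, D.armB,
    fun u hu hu' => hdisj u (hcA hu) (hDB hu'), fun u hu huA => ?_, fun u hu huB => ?_⟩, ?_, ?_, ?_⟩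
  · rcases h4s u hu with (h | h) | h | h | h
    · exact c.meetA u h huA
    · exact absurd h (c.disj u huA)
    · have := hπc u h (hcA huA)
      subst this
      exact absurd hv (c.disj _ huA)
    · exact absurd (hDp h) (hdisj u (hcA huA))
    · exact absurd (hDA h) (hdisj u (hcA huA))
  · rcases h4s u hu with (h | h) | h | h | h
    · exact absurd (hDB huB) (hdisj u (hcp h))
    · exact absurd (hDB huB) (hdisj u (hcB h))
    · have := hπD u h (hDB huB)
      subst this
      exact absurd huB (D.disj _ hw)
    · exact D.meetB u h huB
    · exact absurd huB (D.disj _ h)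
  · rintro u (h | h | h)
    · exact Or.inl (hcA h)
    · exact Or.inr (Or.inl (hDB h))
    · rcases h4s u h with (h | h) | h | h | h
      · exact Or.inl (hcp h)
      · exact Or.inl (hcB h)
      · exact Or.inr (Or.inr h)
      · exact Or.inr (Or.inl (hDp h))
      · exact Or.inr (Or.inl (hDA h))
  · intro e he
    simp only [SimpleGraph.Walk.edges_append, List.mem_append]
    tauto
  · simp only [SimpleGraph.Walk.length_append]
    omega

/-- Two armed paths are merged into one along a path `π` between an arm of each. The two
arms that are used up become part of the connection. -/
lemma join (c D : ArmedPath H r M) (hdisj : ∀ u ∈ c.region, u ∉ D.region) {v w : V}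
    {π : H.Walk v w} (hπ : π.IsPath) (hv : v ∈ c.A ∨ v ∈ c.B) (hw : w ∈ D.A ∨ w ∈ D.B)
    (hπc : ∀ u ∈ π.support, u ∈ c.region → u = v)
    (hπD : ∀ u ∈ π.support, u ∈ D.region → u = w) (hvc : v ∉ c.p.support)
    (hwD : w ∉ D.p.support) :
    ∃ E : ArmedPath H r M, (∀ u ∈ E.region, u ∈ c.region ∨ u ∈ D.region ∨ u ∈ π.support) ∧
      (∀ e, e ∈ c.p.edges ∨ e ∈ D.p.edges → e ∈ E.p.edges) ∧
      E.p.length ≤ c.p.length + D.p.length + π.length + 2 * r := by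
  wlog hvB : v ∈ c.B generalizing c
  · obtain ⟨E, h1, h2, h3⟩ := this c.reverse (by rwa [region_reverse]) hv.symm
      (by rwa [region_reverse]) (by simpa [reverse] using hvc)
      (hv.resolve_right hvB)
    rw [region_reverse] at h1
    refine ⟨E, h1, fun e he => h2 e (he.imp_left fun h => ?_), by simpa [reverse] using h3⟩
    simpa [reverse] using h
  wlog hwA : w ∈ D.A generalizing D
  · obtain ⟨E, h1, h2, h3⟩ := this D.reverse hw.symm
      (by rwa [region_reverse]) (by simpa [reverse] using hwD) (by rwa [region_reverse])
      (hw.resolve_left hwA)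
    rw [region_reverse] at h1
    refine ⟨E, h1, fun e he => h2 e (he.imp_right fun h => ?_), by simpa [reverse] using h3⟩
    simpa [reverse] using h
  exact join_aux c D hdisj hπ hvB hwA hπc hπD hvc hwD

/-- In a robustly connected graph, disjoint armed paths can be linked into a single path containing
all of them. -/
theorem link [Finite V] {w L : ℕ} (hconn : RobustConn H M w L) (n : ℕ) :
    ∀ (c : ArmedPath H r M) (cs : List (ArmedPath H r M)), cs.length = n →
      (c :: cs).Pairwise (fun c D => ∀ u ∈ c.region, u ∉ D.region) →
      ((c :: cs).map (fun c => c.p.length + 1)).sum + cs.length * (L + 2 * r) ≤ w →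
      ∃ (u v : V) (q : H.Walk u v), q.IsPath ∧
        (∀ D ∈ c :: cs, ∀ e ∈ D.p.edges, e ∈ q.edges) ∧ q.length ≤ w := by
  classical
  induction n with
  | zero =>
    intro c cs hcs _ hw
    obtain rfl := List.length_eq_zero_iff.mp hcs
    refine ⟨c.a, c.b, c.p, c.isPath, by simp, ?_⟩
    simp at hw
    omega
  | succ n ih =>
    intro c cs hcs hpw hw
    set W : Set V := {u | ∃ D ∈ c :: cs, u ∈ D.p.support} with hWdef
    have hWcard : W.ncard ≤ ((c :: cs).map (fun c => c.p.length + 1)).sum := by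
      rw [hWdef]
      generalize c :: cs = l
      induction l with
      | nil => simp
      | cons D l ihl =>
        have hsub : {u | ∃ E ∈ D :: l, u ∈ E.p.support} ⊆
            (D.p.support.toFinset : Set V) ∪ {u | ∃ E ∈ l, u ∈ E.p.support} := by
          rintro u ⟨E, hE, hu⟩
          rcases List.mem_cons.mp hE with rfl | hE
          · left; simpa using hu
          · exact Or.inr ⟨E, hE, hu⟩
        refine (Set.ncard_le_ncard hsub (Set.toFinite _)).trans ?_
        refine (Set.ncard_union_le _ _).trans ?_
        rw [Set.ncard_coe_finset, List.map_cons, List.sum_cons]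
        refine Nat.add_le_add ((List.toFinset_card_le _).trans ?_) ihl
        rw [SimpleGraph.Walk.length_support]
    have hcD : ∀ D ∈ cs, ∀ u ∈ c.region, u ∉ D.region := (List.pairwise_cons.mp hpw).1
    have hsym : ∀ D ∈ c :: cs, ∀ E ∈ c :: cs, ∀ u, u ∈ D.region → u ∈ E.region → D = E := by
      intro D hD E hE u hu hu'
      by_contra hne
      have : Std.Symm (fun c D : ArmedPath H r M => ∀ u ∈ c.region, u ∉ D.region) :=
        ⟨fun D E h u hu hu' => h u hu' hu⟩
      exact (hpw.forall hD hE hne u hu hu')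
    -- Each arm loses at most one vertex to `W`.
    have hfree : ∀ D ∈ c :: cs, ∀ u ∈ D.A, u ∈ W → u = D.a := by
      rintro D hD u hu ⟨E, hE, huE⟩
      have := hsym D hD E hE u (Or.inl hu) (Or.inr (Or.inr huE))
      subst this
      exact D.meetA u huE hu
    have hMle : ∀ D ∈ c :: cs, ∀ Z : Set V, (∀ u ∈ D.A, u ∉ W → u ∈ Z) → M ≤ Z.ncard := by
      intro D hD Z hZ
      have hsub : D.A \ {D.a} ⊆ Z := fun u hu => hZ u hu.1 fun h => hu.2 (hfree D hD u hu.1 h)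
      have h1 := Set.ncard_le_ncard hsub (Set.toFinite _)
      have h2 := Set.pred_ncard_le_ncard_sdiff_singleton D.A D.a
      have h3 := D.cardA
      omega
    obtain ⟨D₁, hD₁⟩ : ∃ D, D ∈ cs := List.exists_mem_of_length_pos (by omega)
    set Z₁ : Set V := {u | (u ∈ c.A ∨ u ∈ c.B) ∧ u ∉ W} with hZ₁
    set Z₂ : Set V := {u | (∃ D ∈ cs, u ∈ D.A ∨ u ∈ D.B) ∧ u ∉ W} with hZ₂
    have hcmem : c ∈ c :: cs := List.mem_cons_self
    obtain ⟨v, hv, z, ⟨⟨D, hD, hzD⟩, hzW⟩, π, hπ, hπL, hπW, hπ1, hπ2⟩ :=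
      exists_connecting_path (hconn W Z₁ Z₂ (hWcard.trans (by omega))
        (hMle c hcmem _ fun u hu hu' => ⟨Or.inl hu, hu'⟩)
        (hMle D₁ (List.mem_cons_of_mem _ hD₁) _ fun u hu hu' => ⟨⟨D₁, hD₁, Or.inl hu⟩, hu'⟩)
        (fun u hu => hu.2) (fun u hu => hu.2))
    have hDmem : D ∈ c :: cs := List.mem_cons_of_mem _ hD
    have hπE : ∀ E ∈ cs, ∀ u ∈ π.support, u ∈ E.region → u = z := by
      rintro E hE u hu (h | h | h)
      · exact hπ2 u hu ⟨⟨E, hE, Or.inl h⟩, hπW u hu⟩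
      · exact hπ2 u hu ⟨⟨E, hE, Or.inr h⟩, hπW u hu⟩
      · exact absurd ⟨E, List.mem_cons_of_mem _ hE, h⟩ (hπW u hu)
    obtain ⟨E, hE1, hE2, hE3⟩ := join c D (hcD D hD) hπ hv.1 hzD
      (by
        rintro u hu (h | h | h)
        · exact hπ1 u hu ⟨Or.inl h, hπW u hu⟩
        · exact hπ1 u hu ⟨Or.inr h, hπW u hu⟩
        · exact absurd ⟨c, hcmem, h⟩ (hπW u hu))
      (hπE D hD) (fun h => hv.2 ⟨c, hcmem, h⟩) (fun h => hzW ⟨D, hDmem, h⟩)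
    obtain ⟨l₁, l₂, rfl⟩ := List.append_of_mem hD
    have hperm : (l₁ ++ D :: l₂).Perm (D :: (l₁ ++ l₂)) := List.perm_middle
    have hpw' : (c :: D :: (l₁ ++ l₂)).Pairwise (fun c D => ∀ u ∈ c.region, u ∉ D.region) :=
      (hperm.cons c).pairwise hpw (fun {D E} h u hu hu' => h u hu' hu)
    have hzreg : z ∈ D.region := hzD.elim Or.inl fun h => Or.inr (Or.inl h)
    rw [List.pairwise_cons, List.pairwise_cons] at hpw'
    have hsum : ((l₁ ++ D :: l₂).map (fun c => c.p.length + 1)).sum =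
        D.p.length + 1 + ((l₁ ++ l₂).map (fun c => c.p.length + 1)).sum := by
      rw [(hperm.map _).sum_eq, List.map_cons, List.sum_cons]
    rw [List.map_cons, List.sum_cons, hsum] at hw
    have hlen : (l₁ ++ D :: l₂).length = (l₁ ++ l₂).length + 1 := by simp; omega
    have hlen' : (l₁ ++ l₂).length = n := by omega
    obtain ⟨u, u', q, hq, hqe, hqL⟩ := ih E (l₁ ++ l₂) hlen' (by
      refine List.pairwise_cons.mpr ⟨fun F hF u hu huF => ?_, hpw'.2.2⟩
      rcases hE1 u hu with h | h | h
      · exact hpw'.1 F (List.mem_cons_of_mem _ hF) u h huF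
      · exact hpw'.2.1 F hF u h huF
      · have := hπE F (hperm.mem_iff.mpr (List.mem_cons_of_mem _ hF)) u h huF
        subst this
        exact hpw'.2.1 F hF _ hzreg huF) (by
      rw [List.map_cons, List.sum_cons]
      rw [hlen] at hw
      have : ((l₁ ++ l₂).length + 1) * (L + 2 * r) =
        (l₁ ++ l₂).length * (L + 2 * r) + (L + 2 * r) := by ring
      omega)
    refine ⟨u, u', q, hq, fun F hF e he => ?_, hqL⟩
    rcases List.mem_cons.mp hF with rfl | hF
    · exact hqe E List.mem_cons_self e (hE2 e (Or.inl he))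
    · rcases List.mem_cons.mp (hperm.mem_iff.mp hF) with rfl | hF
      · exact hqe E List.mem_cons_self e (hE2 e (Or.inr he))
      · exact hqe F (List.mem_cons_of_mem _ hF) e he

end ArmedPath

end Linking

/-! ### Independent groups -/

section Grouping

/-- A relation with out-degrees at most `m` has independent sets of size `k` among any
`(2 m + 1) k` elements: some element also has in-degree at most `m`. -/
lemma exists_indep {α : Type*} [DecidableEq α] (r : α → α → Prop) [DecidableRel r] (m k : ℕ) :
    ∀ E : Finset α, (∀ e ∈ E, (E.filter (r e)).card ≤ m) → (2 * m + 1) * k ≤ E.card →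
      ∃ S ⊆ E, S.card = k ∧ ∀ e ∈ S, ∀ f ∈ S, e ≠ f → ¬ r e f := by
  induction k with
  | zero => exact fun E _ _ => ⟨∅, by simp, by simp, by simp⟩
  | succ k ih =>
    intro E hE hcard
    have hne : E.Nonempty := by
      rw [← Finset.card_pos]
      nlinarith
    obtain ⟨x, hx, hin⟩ : ∃ x ∈ E, (E.filter (fun e => r e x)).card ≤ m := by
      by_contra hcon
      push Not at hcon
      have h1 : ∑ e ∈ E, (E.filter (r e)).card = ∑ e ∈ E, (E.filter (fun a => r a e)).card :=
        Finset.sum_card_bipartiteAbove_eq_sum_card_bipartiteBelow (s := E) (t := E) r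
      have h2 : ∑ e ∈ E, (E.filter (r e)).card ≤ ∑ e ∈ E, m := Finset.sum_le_sum hE
      have h3 : ∑ e ∈ E, m < ∑ e ∈ E, (E.filter (fun a => r a e)).card :=
        Finset.sum_lt_sum_of_nonempty hne hcon
      exact absurd (h1 ▸ h2) (not_le.mpr h3)
    set R := insert x (E.filter (r x) ∪ E.filter (fun e => r e x)) with hR
    have hRcard : R.card ≤ 2 * m + 1 := by
      refine (Finset.card_insert_le _ _).trans ?_
      have := Finset.card_union_le (E.filter (r x)) (E.filter (fun e => r e x))
      have := hE x hx
      omega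
    have hcard' : (2 * m + 1) * k ≤ (E \ R).card := by
      have h1 := Finset.le_card_sdiff R E
      have h2 : (2 * m + 1) * (k + 1) = (2 * m + 1) * k + (2 * m + 1) := by ring
      omega
    obtain ⟨S, hS, hSk, hSr⟩ := ih (E \ R) (fun e he =>
      (Finset.card_le_card (Finset.filter_subset_filter _ Finset.sdiff_subset)).trans
        (hE e (Finset.sdiff_subset he))) hcard'
    have hxS : x ∉ S := fun h => (Finset.mem_sdiff.mp (hS h)).2 (Finset.mem_insert_self _ _)
    have hout : ∀ f ∈ S, ¬ r x f ∧ ¬ r f x := by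
      intro f hf
      have h := Finset.mem_sdiff.mp (hS hf)
      simp only [hR, Finset.mem_insert, Finset.mem_union, Finset.mem_filter, not_or,
        not_and] at h
      exact ⟨h.2.2.1 h.1, h.2.2.2 h.1⟩
    refine ⟨insert x S, ?_, ?_, ?_⟩
    · exact Finset.insert_subset hx (hS.trans Finset.sdiff_subset)
    · rw [Finset.card_insert_of_notMem hxS, hSk]
    · intro e he f hf hef
      rcases Finset.mem_insert.mp he with rfl | he' <;>
        rcases Finset.mem_insert.mp hf with rfl | hf'
      · exact absurd rfl hef
      · exact (hout f hf').1
      · exact (hout e he').2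
      · exact hSr e he' f hf' hef

/-- A partition into groups without related pairs. Groups of size `k` are split off greedily; the few
elements left over form singleton groups. -/
lemma exists_groups {α : Type*} (r : α → α → Prop) (m k : ℕ) (hk : 1 ≤ k) (n : ℕ) :
    ∀ E : Finset α, E.card = n → (∀ e ∈ E, {f | f ∈ E ∧ r e f}.ncard ≤ m) →
      ∃ Gs : List (Finset α), (∀ S ∈ Gs, S ⊆ E ∧ S.Nonempty ∧ S.card ≤ k ∧
          ∀ e ∈ S, ∀ f ∈ S, e ≠ f → ¬ r e f) ∧ (∀ e ∈ E, ∃ S ∈ Gs, e ∈ S) ∧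
        Gs.length * k ≤ E.card + k * (k * (2 * m + 1)) := by
  classical
  induction n using Nat.strong_induction_on with
  | _ n ih =>
    intro E hEn hE
    by_cases hlarge : (2 * m + 1) * k ≤ E.card
    · obtain ⟨S, hS, hSk, hSr⟩ := exists_indep r m k E (fun e he => by
        have := hE e he
        rwa [← Finset.coe_filter, Set.ncard_coe_finset] at this) hlarge
      have hcard : (E \ S).card + k = E.card := by
        rw [← hSk]
        exact Finset.card_sdiff_add_card_eq_card hS
      obtain ⟨Gs, h1, h2, h3⟩ := ih (E \ S).card (by omega) (E \ S) rfl (fun e he =>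
        (Set.ncard_le_ncard (t := {f | f ∈ E ∧ r e f})
          (fun f hf => ⟨Finset.sdiff_subset hf.1, hf.2⟩)
          (E.finite_toSet.subset fun f hf => hf.1)).trans (hE e (Finset.sdiff_subset he)))
      refine ⟨S :: Gs, ?_, ?_, ?_⟩
      · intro T hT
        rcases List.mem_cons.mp hT with rfl | hT
        · exact ⟨hS, Finset.card_pos.mp (by omega), hSk.le, hSr⟩
        · exact ⟨(h1 T hT).1.trans Finset.sdiff_subset, (h1 T hT).2⟩
      · intro e he
        by_cases heS : e ∈ S
        · exact ⟨S, List.mem_cons_self, heS⟩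
        · obtain ⟨T, hT, heT⟩ := h2 e (Finset.mem_sdiff.mpr ⟨he, heS⟩)
          exact ⟨T, List.mem_cons_of_mem _ hT, heT⟩
      · rw [List.length_cons, Nat.add_mul, one_mul]
        omega
    · refine ⟨E.toList.map (fun e => {e}), ?_, ?_, ?_⟩
      · intro S hS
        obtain ⟨e, he, rfl⟩ := List.mem_map.mp hS
        refine ⟨by simpa using he, by simp, by simpa using hk, ?_⟩
        intro a ha b hb hab
        rw [Finset.mem_singleton] at ha hb
        exact absurd (ha.trans hb.symm) hab
      · intro e he
        exact ⟨{e}, List.mem_map.mpr ⟨e, by simpa using he, rfl⟩, by simp⟩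
      · rw [List.length_map, Finset.length_toList]
        nlinarith

lemma List.exists_image {α β : Type*} (R : α → β → Prop) (l : List α)
    (h : ∀ a ∈ l, ∃ b, R a b) :
    ∃ l' : List β, l'.length = l.length ∧ (∀ a ∈ l, ∃ b ∈ l', R a b) ∧
      ∀ b ∈ l', ∃ a ∈ l, R a b := by
  induction l with
  | nil => exact ⟨[], rfl, by simp, by simp⟩
  | cons a l ih =>
    obtain ⟨b, hb⟩ := h a List.mem_cons_self
    obtain ⟨l', h1, h2, h3⟩ := ih fun a ha => h a (List.mem_cons_of_mem _ ha)
    refine ⟨b :: l', by simp [h1], ?_, ?_⟩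
    · intro c hc
      rcases List.mem_cons.mp hc with rfl | hc
      · exact ⟨b, List.mem_cons_self, hb⟩
      · obtain ⟨d, hd, hR⟩ := h2 c hc
        exact ⟨d, List.mem_cons_of_mem _ hd, hR⟩
    · intro d hd
      rcases List.mem_cons.mp hd with rfl | hd
      · exact ⟨a, List.mem_cons_self, hb⟩
      · obtain ⟨c, hc, hR⟩ := h3 d hd
        exact ⟨c, List.mem_cons_of_mem _ hc, hR⟩

end Grouping

/-! ### Systems of arms -/

section Phases

variable {V : Type*}

/-- The union of the four vertex sets attached to `e`. -/
def armUnion (A₁ B₁ A₂ B₂ : Sym2 V → Set V) (e : Sym2 V) : Set V :=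
  {u | u ∈ A₁ e ∨ u ∈ B₁ e ∨ u ∈ A₂ e ∨ u ∈ B₂ e}

/-- Two families of arms for the edges in `E`: the ends of `e = s(x e, y e)` have arms `A₁ e`, `B₁ e`
of the first family, with at least `M₁ + 1` vertices each, and arms `A₂ e`, `B₂ e` of the second
family, with at least `M₂ + 1` and at most `a₂` vertices each. All arms have radius at most `r`.
Arms at different ends of an edge are disjoint, and those at the same end share only that end. The
four arms of an edge have at most `N` vertices altogether, and each vertex lies in the arms of at
most `m₀` edges. -/
structure ArmSystem (G : SimpleGraph V) (E : Finset (Sym2 V)) (r M₁ M₂ a₂ N m₀ : ℕ) where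
  x : Sym2 V → V
  y : Sym2 V → V
  A₁ : Sym2 V → Set V
  B₁ : Sym2 V → Set V
  A₂ : Sym2 V → Set V
  B₂ : Sym2 V → Set V
  eq_mk : ∀ e ∈ E, e = s(x e, y e)
  adj : ∀ e ∈ E, G.Adj (x e) (y e)
  armA₁ : ∀ e ∈ E, IsArm G r (x e) (A₁ e)
  armB₁ : ∀ e ∈ E, IsArm G r (y e) (B₁ e)
  armA₂ : ∀ e ∈ E, IsArm G r (x e) (A₂ e)
  armB₂ : ∀ e ∈ E, IsArm G r (y e) (B₂ e)
  cardA₁ : ∀ e ∈ E, M₁ + 1 ≤ (A₁ e).ncard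
  cardB₁ : ∀ e ∈ E, M₁ + 1 ≤ (B₁ e).ncard
  cardA₂ : ∀ e ∈ E, M₂ + 1 ≤ (A₂ e).ncard
  cardB₂ : ∀ e ∈ E, M₂ + 1 ≤ (B₂ e).ncard
  cardA₂_le : ∀ e ∈ E, (A₂ e).ncard ≤ a₂
  cardB₂_le : ∀ e ∈ E, (B₂ e).ncard ≤ a₂
  meetA : ∀ e ∈ E, ∀ u ∈ A₁ e, u ∈ A₂ e → u = x e
  meetB : ∀ e ∈ E, ∀ u ∈ B₁ e, u ∈ B₂ e → u = y e
  disj : ∀ e ∈ E, ∀ u, u ∈ A₁ e ∨ u ∈ A₂ e → ¬ (u ∈ B₁ e ∨ u ∈ B₂ e)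
  card_union : ∀ e ∈ E, (armUnion A₁ B₁ A₂ B₂ e).ncard ≤ N
  mult : ∀ v, {e | e ∈ E ∧ v ∈ armUnion A₁ B₁ A₂ B₂ e}.ncard ≤ m₀

lemma IsArm.start_mem {G : SimpleGraph V} {r M : ℕ} {a : V} {A : Set V} (h : IsArm G r a A)
    (hA : M + 1 ≤ A.ncard) : a ∈ A := by
  obtain ⟨v, hv⟩ := Set.nonempty_of_ncard_ne_zero (s := A) (by omega)
  obtain ⟨p, -, hp⟩ := h v hv
  exact hp a p.start_mem_support

lemma IsArm.deleteEdges {G : SimpleGraph V} {r : ℕ} {a : V} {A : Set V} (h : IsArm G r a A)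
    {F : Set (Sym2 V)} (hF : ∀ u ∈ A, ∀ v ∈ A, G.Adj u v → s(u, v) ∉ F) :
    IsArm (G.deleteEdges F) r a A := by
  intro v hv
  obtain ⟨p, hp, hpA⟩ := h v hv
  refine ⟨p.transfer _ fun e he => ?_, by simpa using hp, by simpa using hpA⟩
  induction e with
  | _ u w =>
    have hadj := p.adj_of_mem_edges he
    rw [SimpleGraph.mem_edgeSet, SimpleGraph.deleteEdges_adj]
    exact ⟨hadj, hF u (hpA u (p.fst_mem_support_of_mem_edges he)) w
      (hpA w (p.snd_mem_support_of_mem_edges he)) hadj⟩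

/-- A group of edges with disjoint arms lies on one path avoiding `F`, provided neither the edges
nor the arms use `F`: each edge is an armed path, and these are linked in `G − F`. -/
lemma exists_path_through [Finite V] {G : SimpleGraph V} {F : Set (Sym2 V)} {r M w L : ℕ}
    (hconn : RobustConn (G.deleteEdges F) M w L) {S : Finset (Sym2 V)} (hS : S.Nonempty)
    {x y : Sym2 V → V} {A B : Sym2 V → Set V} (heq : ∀ e ∈ S, e = s(x e, y e))
    (hadj : ∀ e ∈ S, G.Adj (x e) (y e)) (hF : ∀ e ∈ S, e ∉ F)
    (hA : ∀ e ∈ S, IsArm G r (x e) (A e)) (hB : ∀ e ∈ S, IsArm G r (y e) (B e))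
    (hAM : ∀ e ∈ S, M + 1 ≤ (A e).ncard) (hBM : ∀ e ∈ S, M + 1 ≤ (B e).ncard)
    (hAB : ∀ e ∈ S, ∀ u ∈ A e, u ∉ B e)
    (hAF : ∀ e ∈ S, ∀ u ∈ A e, ∀ v ∈ A e, G.Adj u v → s(u, v) ∉ F)
    (hBF : ∀ e ∈ S, ∀ u ∈ B e, ∀ v ∈ B e, G.Adj u v → s(u, v) ∉ F)
    (hdisj : ∀ e ∈ S, ∀ f ∈ S, e ≠ f → ∀ u, u ∈ A e ∨ u ∈ B e → ¬ (u ∈ A f ∨ u ∈ B f))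
    (hw : S.card * (2 + L + 2 * r) ≤ w) :
    ∃ q : (u : V) × (v : V) × G.Walk u v, q.2.2.IsPath ∧ (∀ e ∈ S, e ∈ q.2.2.edges) ∧
      (∀ e ∈ q.2.2.edges, e ∉ F) ∧ q.2.2.length ≤ w := by
  classical
  have hcomp : ∀ e ∈ S, ∃ c : ArmedPath (G.deleteEdges F) r M, e ∈ c.p.edges ∧ c.p.length = 1 ∧
      ∀ u ∈ c.region, u ∈ A e ∨ u ∈ B e := by
    intro e he
    have hxA := (hA e he).start_mem (hAM e he)
    have hyB := (hB e he).start_mem (hBM e he)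
    have hadj' : (G.deleteEdges F).Adj (x e) (y e) := by
      rw [SimpleGraph.deleteEdges_adj, ← heq e he]
      exact ⟨hadj e he, hF e he⟩
    have hsupp : ∀ u ∈ hadj'.toWalk.support, u = x e ∨ u = y e := by
      intro u hu
      simpa using hu
    refine ⟨⟨x e, y e, hadj'.toWalk, A e, B e, by simp [hadj'.ne], hAM e he, hBM e he,
      (hA e he).deleteEdges (hAF e he), (hB e he).deleteEdges (hBF e he), hAB e he, ?_, ?_⟩,
      by simpa using heq e he, by simp, ?_⟩
    · intro u hu huA
      rcases hsupp u hu with rfl | rfl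
      · rfl
      · exact absurd hyB (hAB e he _ huA)
    · intro u hu huB
      rcases hsupp u hu with rfl | rfl
      · exact absurd huB (hAB e he _ hxA)
      · rfl
    · rintro u (h | h | h)
      · exact Or.inl h
      · exact Or.inr h
      · rcases hsupp u h with rfl | rfl
        · exact Or.inl hxA
        · exact Or.inr hyB
  obtain ⟨cs, hcs⟩ : ∃ cs : List (ArmedPath (G.deleteEdges F) r M), List.Forall₂
      (fun e c => e ∈ c.p.edges ∧ c.p.length = 1 ∧ ∀ u ∈ c.region, u ∈ A e ∨ u ∈ B e)
      S.toList cs := by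
    have : ∀ l : List (Sym2 V), (∀ e ∈ l, e ∈ S) →
        ∃ cs : List (ArmedPath (G.deleteEdges F) r M), List.Forall₂
      (fun e c => e ∈ c.p.edges ∧ c.p.length = 1 ∧ ∀ u ∈ c.region, u ∈ A e ∨ u ∈ B e) l cs := by
      intro l
      induction l with
      | nil => exact fun _ => ⟨[], .nil⟩
      | cons e l ih =>
        intro hl
        obtain ⟨c, hc⟩ := hcomp e (hl e List.mem_cons_self)
        obtain ⟨cs, hcs⟩ := ih fun f hf => hl f (List.mem_cons_of_mem _ hf)
        exact ⟨c :: cs, .cons hc hcs⟩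
    exact this _ fun e he => Finset.mem_toList.mp he
  have hlen : cs.length = S.card := by rw [← hcs.length_eq, Finset.length_toList]
  have hpw : cs.Pairwise (fun c D => ∀ u ∈ c.region, u ∉ D.region) ∧
      (cs.map (fun c => c.p.length + 1)).sum = cs.length * 2 ∧
      ∀ e ∈ S, ∃ c ∈ cs, e ∈ c.p.edges := by
    have hnd := S.nodup_toList
    have hmem : ∀ e, e ∈ S ↔ e ∈ S.toList := fun e => Finset.mem_toList.symm
    have hsub : ∀ e ∈ S.toList, e ∈ S := fun e he => (hmem e).mpr he
    simp only [hmem]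
    clear hmem hlen
    generalize S.toList = l at hcs hnd hsub
    induction hcs with
    | nil => simp
    | @cons e c l cs hc hl ih =>
      obtain ⟨h1, h2, h3⟩ := ih (List.nodup_cons.mp hnd).2
        fun f hf => hsub f (List.mem_cons_of_mem _ hf)
      refine ⟨List.pairwise_cons.mpr ⟨fun D hD u hu huD => ?_, h1⟩, ?_, ?_⟩
      · obtain ⟨f, hf, hfD⟩ : ∃ f ∈ l, ∀ u ∈ D.region, u ∈ A f ∨ u ∈ B f := by
          clear ih h1 h2 h3 hnd hsub
          induction hl with
          | nil => simp at hD
          | @cons f E l cs hE hl ih2 =>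
            rcases List.mem_cons.mp hD with rfl | hD
            · exact ⟨f, List.mem_cons_self, hE.2.2⟩
            · obtain ⟨g, hg, h⟩ := ih2 hD
              exact ⟨g, List.mem_cons_of_mem _ hg, h⟩
        refine hdisj e (hsub e List.mem_cons_self) f (hsub f (List.mem_cons_of_mem _ hf)) ?_ u
          (hc.2.2 u hu) (hfD u huD)
        rintro rfl
        exact (List.nodup_cons.mp hnd).1 hf
      · rw [List.map_cons, List.sum_cons, h2, hc.2.1, List.length_cons]
        ring
      · intro f hf
        rcases List.mem_cons.mp hf with rfl | hf
        · exact ⟨c, List.mem_cons_self, hc.1⟩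
        · obtain ⟨D, hD, h⟩ := h3 f hf
          exact ⟨D, List.mem_cons_of_mem _ hD, h⟩
  cases cs with
  | nil =>
    have := Finset.card_pos.mpr hS
    simp at hlen
    omega
  | cons c cs =>
    obtain ⟨u, v, q, hq, hqe, hqL⟩ := ArmedPath.link hconn cs.length c cs rfl hpw.1 (by
      rw [hpw.2.1, hlen]
      rw [List.length_cons] at hlen
      have h1 : cs.length * (L + 2 * r) ≤ S.card * (L + 2 * r) :=
        Nat.mul_le_mul_right _ (by omega)
      have h2 : S.card * (2 + L + 2 * r) = S.card * 2 + S.card * (L + 2 * r) := by ring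
      omega)
    refine ⟨⟨u, v, q.mapLe (SimpleGraph.deleteEdges_le F)⟩, hq.mapLe _, fun e he => ?_,
      fun e he => ?_, ?_⟩
    · obtain ⟨D, hD, heD⟩ := hpw.2.2 e he
      simpa using hqe D hD e heD
    · simp only [SimpleGraph.Walk.edges_mapLe_eq_edges] at he
      have := q.edges_subset_edgeSet he
      rw [SimpleGraph.edgeSet_deleteEdges] at this
      exact this.2
    · simpa using hqL

/-- At most `|A| Δ` edges have both ends in `A`. -/
lemma ncard_edges_inside_le [Finite V] {G : SimpleGraph V} {Δ : ℕ}
    (hΔ : ∀ v, (G.neighborSet v).ncard ≤ Δ) (A : Set V) :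
    {g | g ∈ G.edgeSet ∧ ∀ v ∈ g, v ∈ A}.ncard ≤ A.ncard * Δ := by
  classical
  have := Fintype.ofFinite V
  have hsub : {g | g ∈ G.edgeSet ∧ ∀ v ∈ g, v ∈ A} ⊆
      ⋃ v ∈ A.toFinset, (fun w => s(v, w)) '' G.neighborSet v := by
    rintro g ⟨hg, hgA⟩
    induction g with
    | _ u w =>
      simp only [Set.mem_iUnion]
      exact ⟨u, by simpa using hgA u (by simp), w, hg, rfl⟩
  refine (Set.ncard_le_ncard hsub (Set.toFinite _)).trans ?_
  refine (Finset.set_ncard_biUnion_le _ _).trans ?_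
  rw [Set.ncard_eq_toFinset_card' A, ← smul_eq_mul, ← Finset.sum_const]
  exact Finset.sum_le_sum fun v _ => (Set.ncard_image_le (Set.toFinite _)).trans (hΔ v)

end Phases

/-! ### The two phases -/

section TwoPhases

variable {V : Type*}

lemma ncard_biUnion_le_mul {α : Type*} [Finite α] {ι : Type*} (S : Finset ι) (f : ι → Set α)
    {k c : ℕ} (hk : S.card ≤ k) (hc : ∀ i ∈ S, (f i).ncard ≤ c) :
    {a | ∃ i ∈ S, a ∈ f i}.ncard ≤ k * c := by
  have : {a | ∃ i ∈ S, a ∈ f i} = ⋃ i ∈ S, f i := by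
    ext a
    simp
  rw [this]
  refine (Finset.set_ncard_biUnion_le _ _).trans ((Finset.sum_le_sum hc).trans ?_)
  rw [Finset.sum_const, smul_eq_mul]
  exact Nat.mul_le_mul_right _ hk

namespace ArmSystem

variable {G : SimpleGraph V} {E : Finset (Sym2 V)} {r M₁ M₂ a₂ N m₀ : ℕ}

/-- The vertex set of all four arms of `e`. -/
def U (T : ArmSystem G E r M₁ M₂ a₂ N m₀) (e : Sym2 V) : Set V :=
  armUnion T.A₁ T.B₁ T.A₂ T.B₂ e

/-- At most `|X| m₀` edges have arms meeting a set `X`. -/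
lemma ncard_meeting_le [Finite V] (T : ArmSystem G E r M₁ M₂ a₂ N m₀) (X : Set V) :
    {f | f ∈ E ∧ ∃ v ∈ X, v ∈ T.U f}.ncard ≤ X.ncard * m₀ := by
  classical
  have := Fintype.ofFinite V
  refine le_trans (Set.ncard_le_ncard ?_ (Set.toFinite _))
    (ncard_biUnion_le_mul X.toFinset (fun v => {e | e ∈ E ∧ v ∈ T.U e})
      (Set.ncard_eq_toFinset_card' X).ge fun v _ => T.mult v)
  rintro f ⟨hf, v, hv, hvf⟩
  exact ⟨v, by simpa using hv, hf, hvf⟩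

/-- First phase: paths covering all edges, such that the path chosen for `e` is short and has no
edge inside an arm of the second family at `e`. The edges are split into groups with disjoint arms,
and each group is linked through its arms of the first family, after deletion of all edges inside
its arms of the second family. -/
lemma first_phase [Finite V] (T : ArmSystem G E r M₁ M₂ a₂ N m₀) {Δ k w L m : ℕ}
    (hΔ : ∀ v, (G.neighborSet v).ncard ≤ Δ) (hk : 1 ≤ k) (hw : k * (2 + L + 2 * r) ≤ w)
    (hconn : ∀ F : Set (Sym2 V), F.ncard ≤ k * (2 * (a₂ * Δ)) →
      RobustConn (G.deleteEdges F) M₁ w L)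
    (hm : N * m₀ ≤ m) :
    ∃ Ps : List ((u : V) × (v : V) × G.Walk u v), (∀ p ∈ Ps, p.2.2.IsPath) ∧
      Ps.length * k ≤ E.card + k * (k * (2 * m + 1)) ∧
      ∀ e ∈ E, ∃ p ∈ Ps, e ∈ p.2.2.edges ∧ p.2.2.length ≤ w ∧
        ∀ g ∈ p.2.2.edges, ¬ ((∀ v ∈ g, v ∈ T.A₂ e) ∨ ∀ v ∈ g, v ∈ T.B₂ e) := by
  classical
  obtain ⟨Gs, hGs, hcov, hlen⟩ := exists_groups (fun e f => ∃ v ∈ T.U e, v ∈ T.U f) m k hk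
    E.card E rfl fun e he => (T.ncard_meeting_le _).trans
      ((Nat.mul_le_mul_right _ (T.card_union e he)).trans hm)
  obtain ⟨Ps, hPlen, hP1, hP2⟩ := List.exists_image
    (fun (S : Finset (Sym2 V)) (p : (u : V) × (v : V) × G.Walk u v) => p.2.2.IsPath ∧
      p.2.2.length ≤ w ∧ ∀ e ∈ S, e ∈ p.2.2.edges ∧
      ∀ g ∈ p.2.2.edges, ¬ ((∀ v ∈ g, v ∈ T.A₂ e) ∨ ∀ v ∈ g, v ∈ T.B₂ e)) Gs (by
    intro S hS
    obtain ⟨hSE, hSne, hSk, hSr⟩ := hGs S hS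
    set F : Set (Sym2 V) := {g | ∃ e ∈ S, g ∈ {g | g ∈ G.edgeSet ∧ ∀ v ∈ g, v ∈ T.A₂ e} ∪
      {g | g ∈ G.edgeSet ∧ ∀ v ∈ g, v ∈ T.B₂ e}} with hF
    have hFcard : F.ncard ≤ k * (2 * (a₂ * Δ)) := by
      refine ncard_biUnion_le_mul S _ hSk fun e he => (Set.ncard_union_le _ _).trans ?_
      have h1 := (ncard_edges_inside_le hΔ (T.A₂ e)).trans
        (Nat.mul_le_mul_right Δ (T.cardA₂_le e (hSE he)))
      have h2 := (ncard_edges_inside_le hΔ (T.B₂ e)).trans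
        (Nat.mul_le_mul_right Δ (T.cardB₂_le e (hSE he)))
      omega
    have hself : ∀ e ∈ S, ∀ f ∈ S, ∀ u, u ∈ T.U e → u ∈ T.U f → e = f := by
      intro e he f hf u hu hu'
      by_contra hne
      exact hSr e he f hf hne ⟨u, hu, hu'⟩
    have hinF : ∀ e ∈ S, ∀ u v, u ∈ T.U e → s(u, v) ∈ F →
        (u ∈ T.A₂ e ∧ v ∈ T.A₂ e) ∨ (u ∈ T.B₂ e ∧ v ∈ T.B₂ e) := by
      rintro e he u v hu ⟨f, hf, h | h⟩
      · have h1 := h.2 u (by simp)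
        have := hself e he f hf u hu (Or.inr (Or.inr (Or.inl h1)))
        subst this
        exact Or.inl ⟨h1, h.2 v (by simp)⟩
      · have h1 := h.2 u (by simp)
        have := hself e he f hf u hu (Or.inr (Or.inr (Or.inr h1)))
        subst this
        exact Or.inr ⟨h1, h.2 v (by simp)⟩
    have hx : ∀ e ∈ S, T.x e ∈ T.A₁ e := fun e he =>
      (T.armA₁ e (hSE he)).start_mem (T.cardA₁ e (hSE he))
    have hy : ∀ e ∈ S, T.y e ∈ T.B₁ e := fun e he =>
      (T.armB₁ e (hSE he)).start_mem (T.cardB₁ e (hSE he))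
    obtain ⟨q, hq, hqS, hqF, hqw⟩ := exists_path_through (hconn F hFcard) hSne (x := T.x)
      (y := T.y) (A := T.A₁) (B := T.B₁) (r := r) (fun e he => T.eq_mk e (hSE he))
      (fun e he => T.adj e (hSE he)) (by
        intro e he heF
        rw [T.eq_mk e (hSE he)] at heF
        rcases hinF e he _ _ (Or.inl (hx e he)) heF with h | h
        · exact T.disj e (hSE he) _ (Or.inr h.2) (Or.inl (hy e he))
        · exact T.disj e (hSE he) _ (Or.inl (hx e he)) (Or.inr h.1))
      (fun e he => T.armA₁ e (hSE he)) (fun e he => T.armB₁ e (hSE he))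
      (fun e he => T.cardA₁ e (hSE he)) (fun e he => T.cardB₁ e (hSE he))
      (fun e he u hu hu' => T.disj e (hSE he) u (Or.inl hu) (Or.inl hu'))
      (by
        intro e he u hu v hv hadj huv
        rcases hinF e he u v (Or.inl hu) huv with h | h
        · exact hadj.ne ((T.meetA e (hSE he) u hu h.1).trans (T.meetA e (hSE he) v hv h.2).symm)
        · exact T.disj e (hSE he) u (Or.inl hu) (Or.inr h.1))
      (by
        intro e he u hu v hv hadj huv
        rcases hinF e he u v (Or.inr (Or.inl hu)) huv with h | h
        · exact T.disj e (hSE he) u (Or.inr h.1) (Or.inl hu)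
        · exact hadj.ne ((T.meetB e (hSE he) u hu h.1).trans (T.meetB e (hSE he) v hv h.2).symm))
      (by
        intro e he f hf hne u hu hu'
        exact hne (hself e he f hf u (hu.imp_right Or.inl) (hu'.imp_right Or.inl)))
      ((Nat.mul_le_mul_right _ hSk).trans hw)
    refine ⟨q, hq, hqw, fun e he => ⟨hqS e he, fun g hg hgA => hqF g hg ⟨e, he, ?_⟩⟩⟩
    have hgG := q.2.2.edges_subset_edgeSet hg
    exact hgA.imp (fun h => ⟨hgG, h⟩) (fun h => ⟨hgG, h⟩))
  refine ⟨Ps, fun p hp => ?_, by rwa [hPlen], fun e he => ?_⟩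
  · obtain ⟨S, -, h⟩ := hP2 p hp
    exact h.1
  · obtain ⟨S, hS, heS⟩ := hcov e he
    obtain ⟨p, hp, h⟩ := hP1 S hS
    exact ⟨p, hp, (h.2.2 e heS).1, h.2.1, (h.2.2 e heS).2⟩

/-- Given a short edge set `Y e` around each edge `e` with no edge inside the arms of the second
family at `e`, there are paths covering all edges such that the path chosen for `e` avoids
`Y e \ {e}`. Here `X e` contains the vertices of `Y e`. In each group the arms of an edge must also
avoid the sets `X f` of the other edges, so deleting the sets `Y f` leaves the arms of the second
family intact. -/
lemma second_phase [Finite V] (T : ArmSystem G E r M₁ M₂ a₂ N m₀) {k w L m : ℕ}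
    (hk : 1 ≤ k) (hw : k * (2 + L + 2 * r) ≤ w)
    (hconn : ∀ F : Set (Sym2 V), F.ncard ≤ k * w → RobustConn (G.deleteEdges F) M₂ w L)
    (hm : (N + (w + 1)) * m₀ ≤ m) (X : Sym2 V → Set V) (Y : Sym2 V → Set (Sym2 V))
    (hX : ∀ e ∈ E, (X e).ncard ≤ w + 1) (hY : ∀ e ∈ E, (Y e).ncard ≤ w)
    (hXY : ∀ e ∈ E, ∀ g ∈ Y e, ∀ v ∈ g, v ∈ X e)
    (hYA : ∀ e ∈ E, ∀ g ∈ Y e, ¬ ((∀ v ∈ g, v ∈ T.A₂ e) ∨ ∀ v ∈ g, v ∈ T.B₂ e)) :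
    ∃ Ps : List ((u : V) × (v : V) × G.Walk u v), (∀ p ∈ Ps, p.2.2.IsPath) ∧
      Ps.length * k ≤ E.card + k * (k * (2 * m + 1)) ∧
      ∀ e ∈ E, ∃ p ∈ Ps, e ∈ p.2.2.edges ∧ ∀ f ∈ E, f ≠ e → f ∈ Y e → f ∉ p.2.2.edges := by
  classical
  obtain ⟨Gs, hGs, hcov, hlen⟩ := exists_groups (fun e f => ∃ v ∈ T.U e ∪ X e, v ∈ T.U f) m k hk
    E.card E rfl fun e he => (T.ncard_meeting_le _).trans
      ((Nat.mul_le_mul_right _ ((Set.ncard_union_le _ _).trans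
        (Nat.add_le_add (T.card_union e he) (hX e he)))).trans hm)
  obtain ⟨Ps, hPlen, hP1, hP2⟩ := List.exists_image
    (fun (S : Finset (Sym2 V)) (p : (u : V) × (v : V) × G.Walk u v) => p.2.2.IsPath ∧
      ∀ e ∈ S, e ∈ p.2.2.edges ∧ ∀ f ∈ E, f ≠ e → f ∈ Y e → f ∉ p.2.2.edges) Gs (by
    intro S hS
    obtain ⟨hSE, hSne, hSk, hSr⟩ := hGs S hS
    set F : Set (Sym2 V) := {g | ∃ e ∈ S, g ∈ Y e \ (S : Set (Sym2 V))} with hF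
    have hFcard : F.ncard ≤ k * w :=
      ncard_biUnion_le_mul S _ hSk fun e he =>
        (Set.ncard_le_ncard Set.sdiff_subset (Set.toFinite _)).trans (hY e (hSE he))
    have hself : ∀ e ∈ S, ∀ f ∈ S, ∀ u, u ∈ T.U e ∪ X e → u ∈ T.U f → e = f := by
      intro e he f hf u hu hu'
      by_contra hne
      exact hSr e he f hf hne ⟨u, hu, hu'⟩
    have hinF : ∀ e ∈ S, ∀ u v, u ∈ T.U e → s(u, v) ∈ F → s(u, v) ∈ Y e := by
      rintro e he u v hu ⟨f, hf, h⟩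
      have := hself f hf e he u (Or.inr (hXY f (hSE hf) _ h.1 u (by simp))) hu
      subst this
      exact h.1
    have hx : ∀ e ∈ S, T.x e ∈ T.U e := fun e he =>
      Or.inl ((T.armA₁ e (hSE he)).start_mem (T.cardA₁ e (hSE he)))
    obtain ⟨q, hq, hqS, hqF, hqw⟩ := exists_path_through (hconn F hFcard) hSne (x := T.x)
      (y := T.y) (A := T.A₂) (B := T.B₂) (r := r) (fun e he => T.eq_mk e (hSE he))
      (fun e he => T.adj e (hSE he)) (by
        rintro e he ⟨f, hf, h⟩
        exact h.2 he)
      (fun e he => T.armA₂ e (hSE he)) (fun e he => T.armB₂ e (hSE he))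
      (fun e he => T.cardA₂ e (hSE he)) (fun e he => T.cardB₂ e (hSE he))
      (fun e he u hu hu' => T.disj e (hSE he) u (Or.inr hu) (Or.inr hu'))
      (by
        intro e he u hu v hv hadj huv
        refine hYA e (hSE he) _ (hinF e he u v (Or.inr (Or.inr (Or.inl hu))) huv) (Or.inl ?_)
        simp [hu, hv])
      (by
        intro e he u hu v hv hadj huv
        refine hYA e (hSE he) _ (hinF e he u v (Or.inr (Or.inr (Or.inr hu))) huv) (Or.inr ?_)
        simp [hu, hv])
      (by
        intro e he f hf hne u hu hu'
        exact hne (hself e he f hf u (Or.inl (Or.inr (Or.inr hu))) (Or.inr (Or.inr hu'))))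
      ((Nat.mul_le_mul_right _ hSk).trans hw)
    refine ⟨q, hq, fun e he => ⟨hqS e he, fun f hf hne hfY hfq => hqF f hfq ⟨e, he, hfY, ?_⟩⟩⟩
    -- `f` is not in the group of `e`, because the arms of `f` meet `X e`.
    intro hfS
    refine hne (hself e he f hfS (T.x f) (Or.inr (hXY e (hSE he) f hfY _ ?_)) (hx f hfS)).symm
    exact ⟨T.y f, T.eq_mk f hf⟩)
  refine ⟨Ps, fun p hp => ?_, by rwa [hPlen], fun e he => ?_⟩
  · obtain ⟨S, -, h⟩ := hP2 p hp
    exact h.1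
  · obtain ⟨S, hS, heS⟩ := hcov e he
    obtain ⟨p, hp, h⟩ := hP1 S hS
    exact ⟨p, hp, h.2 e heS⟩

/-- The paths of both phases together strongly separate `E`: if the first path through `e` also
contains `f`, then the second path through `e` avoids `f`. -/
theorem separate [Finite V] (T : ArmSystem G E r M₁ M₂ a₂ N m₀) {Δ k w L m : ℕ}
    (hΔ : ∀ v, (G.neighborSet v).ncard ≤ Δ) (hk : 1 ≤ k) (hw : k * (2 + L + 2 * r) ≤ w)
    (hconn₁ : ∀ F : Set (Sym2 V), F.ncard ≤ k * (2 * (a₂ * Δ)) →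
      RobustConn (G.deleteEdges F) M₁ w L)
    (hconn₂ : ∀ F : Set (Sym2 V), F.ncard ≤ k * w → RobustConn (G.deleteEdges F) M₂ w L)
    (hm : (N + (w + 1)) * m₀ ≤ m) :
    ∃ Ps : List ((u : V) × (v : V) × G.Walk u v), (∀ p ∈ Ps, p.2.2.IsPath) ∧
      Ps.length * k ≤ 2 * (E.card + k * (k * (2 * m + 1))) ∧
      ∀ e ∈ E, ∀ f ∈ E, e ≠ f → ∃ p ∈ Ps, e ∈ p.2.2.edges ∧ f ∉ p.2.2.edges := by
  classical
  obtain ⟨Ps₁, hpath₁, hlen₁, hcov₁⟩ := T.first_phase hΔ hk hw hconn₁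
    ((Nat.mul_le_mul_right _ (Nat.le_add_right _ _)).trans hm)
  have hXY : ∀ e ∈ E, ∃ (X : Set V) (Y : Set (Sym2 V)), X.ncard ≤ w + 1 ∧ Y.ncard ≤ w ∧
      (∀ g ∈ Y, ∀ v ∈ g, v ∈ X) ∧
      (∀ g ∈ Y, ¬ ((∀ v ∈ g, v ∈ T.A₂ e) ∨ ∀ v ∈ g, v ∈ T.B₂ e)) ∧
      ∃ p ∈ Ps₁, e ∈ p.2.2.edges ∧ ∀ g ∈ p.2.2.edges, g ∈ Y := by
    intro e he
    obtain ⟨p, hp, hep, hpw, hpA⟩ := hcov₁ e he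
    refine ⟨(p.2.2.support.toFinset : Set V), (p.2.2.edges.toFinset : Set (Sym2 V)), ?_, ?_,
      fun g hg v hv => ?_, fun g hg => hpA g (by simpa using hg), p, hp, hep, by simp⟩
    · rw [Set.ncard_coe_finset]
      refine (List.toFinset_card_le _).trans ?_
      rw [SimpleGraph.Walk.length_support]
      omega
    · rw [Set.ncard_coe_finset]
      refine (List.toFinset_card_le _).trans ?_
      rwa [SimpleGraph.Walk.length_edges]
    · rw [List.coe_toFinset, Set.mem_ofPred_eq] at hg ⊢
      exact p.2.2.mem_support_of_mem_edges hg hv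
  choose! X Y hX hY hXY hYA hYp using hXY
  obtain ⟨Ps₂, hpath₂, hlen₂, hcov₂⟩ := T.second_phase hk hw hconn₂ hm X Y hX hY hXY hYA
  refine ⟨Ps₁ ++ Ps₂, ?_, ?_, ?_⟩
  · intro p hp
    exact (List.mem_append.mp hp).elim (hpath₁ p) (hpath₂ p)
  · rw [List.length_append, Nat.add_mul]
    omega
  · intro e he f hf hef
    by_cases hfY : f ∈ Y e
    · obtain ⟨p, hp, hep, h⟩ := hcov₂ e he
      exact ⟨p, List.mem_append_right _ hp, hep, h f hf hef.symm hfY⟩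
    · obtain ⟨p, hp, hep, h⟩ := hYp e he
      exact ⟨p, List.mem_append_left _ hp, hep, fun hfp => hfY (h f hfp)⟩

end ArmSystem

end TwoPhases

/-! ### Arms at all edges of an expander -/

section LocalArms

/-- The four arms at an edge `xy` of an expander of small maximum degree. -/
lemma exists_local_arms {V : Type*} [Finite V] {ε d s : ℝ} (hε : 0 < ε) (hε1 : ε ≤ 1)
    (hd : ∀ x : ℝ, d ≤ x → 96 / ε ^ 2 * (Real.logb 2 x + 1) ^ 5 ≤ x) (hs : 16 ≤ s)
    {G : SimpleGraph V} (hG : ESTExpander G ε s d) {Δ : ℕ}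
    (hΔ : ∀ v, (G.neighborSet v).ncard ≤ Δ) {ρ j M₁ M₂ : ℕ} (hρ : 1 ≤ ρ)
    (hj : (2 : ℝ) ^ j ≤ 2 * (Nat.card V : ℝ) / 3) (hjρ : ((j : ℝ) + 1) ^ 3 < ε / 2 * ρ)
    (hM₁ : M₁ + 1 ≤ 2 ^ j) (hM₂ : M₂ + 1 ≤ 2 ^ j)
    (hsmall : 2 * ((Δ : ℝ) + 1) ^ (12 * ρ) ≤ 2 * (Nat.card V : ℝ) / 3) {x y : V}
    (hxy : G.Adj x y) :
    ∃ A₁ B₁ A₂ B₂ : Set V, IsArm G (13 * ρ) x A₁ ∧ IsArm G (13 * ρ) y B₁ ∧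
      IsArm G (13 * ρ) x A₂ ∧ IsArm G (13 * ρ) y B₂ ∧
      (M₁ + 1 ≤ A₁.ncard ∧ A₁.ncard ≤ (M₁ + 1) * (13 * ρ + 1)) ∧
      (M₁ + 1 ≤ B₁.ncard ∧ B₁.ncard ≤ (M₁ + 1) * (13 * ρ + 1)) ∧
      (M₂ + 1 ≤ A₂.ncard ∧ A₂.ncard ≤ (M₂ + 1) * (13 * ρ + 1)) ∧
      (M₂ + 1 ≤ B₂.ncard ∧ B₂.ncard ≤ (M₂ + 1) * (13 * ρ + 1)) ∧
      (∀ u ∈ A₁, u ∈ A₂ → u = x) ∧ (∀ u ∈ B₁, u ∈ B₂ → u = y) ∧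
      (∀ u, u ∈ A₁ ∨ u ∈ A₂ → ¬ (u ∈ B₁ ∨ u ∈ B₂)) ∧
      ∀ u, (u ∈ A₁ ∨ u ∈ B₁ ∨ u ∈ A₂ ∨ u ∈ B₂) → u ∈ nball G {x, y} (13 * ρ) := by
  classical
  let v : Bool → V := fun b => if b then x else y
  have hv : v true ≠ v false := by simpa [v] using hxy.ne
  have hsm : ((nball G {v true, v false} (12 * ρ)).ncard : ℝ) ≤ 2 * (Nat.card V : ℝ) / 3 := by
    refine le_trans ?_ hsmall
    have h1 := ncard_nball_le hΔ {v true, v false} (12 * ρ)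
    have h2 : ({v true, v false} : Set V).ncard ≤ 2 := by
      refine (Set.ncard_insert_le _ _).trans ?_
      rw [Set.ncard_singleton]
    exact_mod_cast h1.trans (Nat.mul_le_mul_right _ h2)
  have h0 : LostBound G G ∅ 0 :=
    ⟨le_rfl, fun _ _ _ => Set.notMem_empty _, fun v _ i => by simp⟩
  obtain ⟨U, hU, hUU⟩ := exists_arms (G := G) (M := 2 ^ j) hv hρ
    (fun N B hN u hu => ⟨le_ncard_nball hε hε1 hd hs hG hN hu hj hjρ,
      exists_large_nball hε hε1 hd hs hG hN hu⟩) hsm 4 le_rfl (fun _ => 2) rfl G ∅ 0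
    (by norm_num) h0 (fun b _ => Set.notMem_empty _)
  have hball : ∀ b j, j < 2 → U b j ⊆ nball G {x, y} (13 * ρ) := by
    intro b i hi
    refine (hU b i hi).2.2.2.1.trans (nball_mono le_rfl ?_ (by omega))
    rintro _ ⟨b, -, rfl⟩
    cases b <;> simp [v]
  have hprune : ∀ b i, i < 2 → ∀ M, M ≤ 2 ^ j → ∃ A' ⊆ U b i, IsArm G (13 * ρ) (v b) A' ∧
      M ≤ A'.ncard ∧ A'.ncard ≤ M * (13 * ρ + 1) := fun b i hi M hM =>
    (hU b i hi).1.prune (hM.trans (hU b i hi).2.1)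
  obtain ⟨A₁, hA₁U, hA₁, hA₁c⟩ := hprune true 0 (by norm_num) _ hM₁
  obtain ⟨B₁, hB₁U, hB₁, hB₁c⟩ := hprune false 0 (by norm_num) _ hM₁
  obtain ⟨A₂, hA₂U, hA₂, hA₂c⟩ := hprune true 1 (by norm_num) _ hM₂
  obtain ⟨B₂, hB₂U, hB₂, hB₂c⟩ := hprune false 1 (by norm_num) _ hM₂
  have hdis : ∀ i i', i < 2 → i' < 2 → ∀ u ∈ U true i, u ∉ U false i' := by
    intro i i' hi hi' u hu hu'
    have := hUU true i false i' hi hi' (by simp) u hu hu'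
    exact hv (this.1.symm.trans this.2)
  refine ⟨A₁, B₁, A₂, B₂, hA₁, hB₁, hA₂, hB₂, hA₁c, hB₁c, hA₂c, hB₂c, fun u hu hu' => ?_,
    fun u hu hu' => ?_, ?_, ?_⟩
  · exact (hUU true 0 true 1 (by norm_num) (by norm_num) (by simp) u (hA₁U hu) (hA₂U hu')).1
  · exact (hUU false 0 false 1 (by norm_num) (by norm_num) (by simp) u (hB₁U hu) (hB₂U hu')).1
  · rintro u (h | h) (h' | h')
    · exact hdis 0 0 (by norm_num) (by norm_num) u (hA₁U h) (hB₁U h')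
    · exact hdis 0 1 (by norm_num) (by norm_num) u (hA₁U h) (hB₂U h')
    · exact hdis 1 0 (by norm_num) (by norm_num) u (hA₂U h) (hB₁U h')
    · exact hdis 1 1 (by norm_num) (by norm_num) u (hA₂U h) (hB₂U h')
  · rintro u (h | h | h | h)
    · exact hball true 0 (by norm_num) (hA₁U h)
    · exact hball false 0 (by norm_num) (hB₁U h)
    · exact hball true 1 (by norm_num) (hA₂U h)
    · exact hball false 1 (by norm_num) (hB₂U h)

/-- Local arms at all edges form an arm system. A vertex lies only in arms of edges with an end in a
small ball around it, which bounds the multiplicity. -/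
lemma exists_armSystem {V : Type*} [Finite V] {ε d s : ℝ} (hε : 0 < ε) (hε1 : ε ≤ 1)
    (hd : ∀ x : ℝ, d ≤ x → 96 / ε ^ 2 * (Real.logb 2 x + 1) ^ 5 ≤ x) (hs : 16 ≤ s)
    {G : SimpleGraph V} (hG : ESTExpander G ε s d) {Δ : ℕ}
    (hΔ : ∀ v, (G.neighborSet v).ncard ≤ Δ) {ρ j M₁ M₂ : ℕ} (hρ : 1 ≤ ρ)
    (hj : (2 : ℝ) ^ j ≤ 2 * (Nat.card V : ℝ) / 3) (hjρ : ((j : ℝ) + 1) ^ 3 < ε / 2 * ρ)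
    (hM₁ : M₁ + 1 ≤ 2 ^ j) (hM₂ : M₂ + 1 ≤ 2 ^ j)
    (hsmall : 2 * ((Δ : ℝ) + 1) ^ (12 * ρ) ≤ 2 * (Nat.card V : ℝ) / 3) {E : Finset (Sym2 V)}
    (hE : ∀ e ∈ E, e ∈ G.edgeSet) :
    Nonempty (ArmSystem G E (13 * ρ) M₁ M₂ ((M₂ + 1) * (13 * ρ + 1))
      (2 * ((M₁ + 1) * (13 * ρ + 1)) + 2 * ((M₂ + 1) * (13 * ρ + 1)))
      ((Δ + 1) ^ (13 * ρ) * Δ)) := by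
  classical
  have := Fintype.ofFinite V
  have hloc : ∀ e : Sym2 V, ∃ (x y : V) (A₁ B₁ A₂ B₂ : Set V), e = s(x, y) ∧ (e ∈ E →
      IsArm G (13 * ρ) x A₁ ∧ IsArm G (13 * ρ) y B₁ ∧
      IsArm G (13 * ρ) x A₂ ∧ IsArm G (13 * ρ) y B₂ ∧
      (M₁ + 1 ≤ A₁.ncard ∧ A₁.ncard ≤ (M₁ + 1) * (13 * ρ + 1)) ∧
      (M₁ + 1 ≤ B₁.ncard ∧ B₁.ncard ≤ (M₁ + 1) * (13 * ρ + 1)) ∧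
      (M₂ + 1 ≤ A₂.ncard ∧ A₂.ncard ≤ (M₂ + 1) * (13 * ρ + 1)) ∧
      (M₂ + 1 ≤ B₂.ncard ∧ B₂.ncard ≤ (M₂ + 1) * (13 * ρ + 1)) ∧
      (∀ u ∈ A₁, u ∈ A₂ → u = x) ∧ (∀ u ∈ B₁, u ∈ B₂ → u = y) ∧
      (∀ u, u ∈ A₁ ∨ u ∈ A₂ → ¬ (u ∈ B₁ ∨ u ∈ B₂)) ∧
      ∀ u, (u ∈ A₁ ∨ u ∈ B₁ ∨ u ∈ A₂ ∨ u ∈ B₂) → u ∈ nball G {x, y} (13 * ρ)) := by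
    intro e
    induction e with
    | _ x y =>
      by_cases he : s(x, y) ∈ E
      · obtain ⟨A₁, B₁, A₂, B₂, h⟩ := exists_local_arms hε hε1 hd hs hG hΔ hρ hj hjρ hM₁ hM₂ hsmall
          (hE _ he)
        exact ⟨x, y, A₁, B₁, A₂, B₂, rfl, fun _ => h⟩
      · exact ⟨x, y, ∅, ∅, ∅, ∅, rfl, fun h => absurd h he⟩
  choose x y A₁ B₁ A₂ B₂ heq h using hloc
  refine ⟨{ x := x, y := y, A₁ := A₁, B₁ := B₁, A₂ := A₂, B₂ := B₂
            eq_mk := fun e _ => heq e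
            adj := fun e he => by
              have := hE e he
              rwa [heq e] at this
            armA₁ := fun e he => (h e he).1
            armB₁ := fun e he => (h e he).2.1
            armA₂ := fun e he => (h e he).2.2.1
            armB₂ := fun e he => (h e he).2.2.2.1
            cardA₁ := fun e he => (h e he).2.2.2.2.1.1
            cardB₁ := fun e he => (h e he).2.2.2.2.2.1.1
            cardA₂ := fun e he => (h e he).2.2.2.2.2.2.1.1
            cardB₂ := fun e he => (h e he).2.2.2.2.2.2.2.1.1
            cardA₂_le := fun e he => (h e he).2.2.2.2.2.2.1.2
            cardB₂_le := fun e he => (h e he).2.2.2.2.2.2.2.1.2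
            meetA := fun e he => (h e he).2.2.2.2.2.2.2.2.1
            meetB := fun e he => (h e he).2.2.2.2.2.2.2.2.2.1
            disj := fun e he => (h e he).2.2.2.2.2.2.2.2.2.2.1
            card_union := fun e he => ?_
            mult := fun v => ?_ }⟩
  · obtain ⟨-, -, -, -, h1, h2, h3, h4, -⟩ := h e he
    have hsub : armUnion A₁ B₁ A₂ B₂ e ⊆ A₁ e ∪ (B₁ e ∪ (A₂ e ∪ B₂ e)) := fun u hu => hu
    have h5 := Set.ncard_le_ncard hsub (Set.toFinite _)
    have h6 := Set.ncard_union_le (A₁ e) (B₁ e ∪ (A₂ e ∪ B₂ e))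
    have h7 := Set.ncard_union_le (B₁ e) (A₂ e ∪ B₂ e)
    have h8 := Set.ncard_union_le (A₂ e) (B₂ e)
    omega
  · have hsub : {e | e ∈ E ∧ v ∈ armUnion A₁ B₁ A₂ B₂ e} ⊆
        {e | ∃ z ∈ (nball G {v} (13 * ρ)).toFinset, e ∈ (fun w => s(z, w)) '' G.neighborSet z} := by
      rintro e ⟨he, hv⟩
      obtain ⟨z, hz, p, hp⟩ := (h e he).2.2.2.2.2.2.2.2.2.2.2 v hv
      have hadj := hE e he
      rw [heq e, SimpleGraph.mem_edgeSet] at hadj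
      refine ⟨z, ?_, ?_⟩
      · rw [Set.mem_toFinset]
        exact nball_symm ⟨z, rfl, p, hp⟩
      · rcases hz with rfl | rfl
        · exact ⟨y e, hadj, (heq e).symm⟩
        · exact ⟨x e, hadj.symm, Sym2.eq_swap.trans (heq e).symm⟩
    refine (Set.ncard_le_ncard hsub (Set.toFinite _)).trans (ncard_biUnion_le_mul _ _ ?_ ?_)
    · rw [← Set.ncard_eq_toFinset_card']
      have := ncard_nball_le hΔ {v} (13 * ρ)
      rwa [Set.ncard_singleton, one_mul] at this
    · exact fun z _ => (Set.ncard_image_le (Set.toFinite _)).trans (hΔ z)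

end LocalArms

/-! ### Choice of the parameters -/

section Assembly

variable {V : Type*}

theorem ESTExpander.mono_eps {G : SimpleGraph V} {ε ε' s d : ℝ} (h : ESTExpander G ε s d)
    (hε : ε' ≤ ε) : ESTExpander G ε' s d := by
  intro X F hF h1 h2 h3
  refine le_trans ?_ (h X F hF h1 h2 h3)
  gcongr

theorem add_eight_pow_six_le (u : ℕ) : (u + 8) ^ 6 ≤ (u + 7) ^ 7 := by
  have h : 7 * (u + 8) ≤ 8 * (u + 7) := by omega
  have h6 : (7 * (u + 8)) ^ 6 ≤ (8 * (u + 7)) ^ 6 := Nat.pow_le_pow_left h 6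
  rw [mul_pow, mul_pow] at h6
  have h7 : 3 * (u + 7) ^ 6 ≤ (u + 7) ^ 7 := by
    rw [pow_succ, mul_comm]
    exact Nat.mul_le_mul_left _ (by omega)
  norm_num at h6
  omega

/-- The scale `t` on which all parameters depend: `2 ^ (t ^ 6) ≤ n ≤ 2 ^ (t ^ 7)`, while
`log d ≤ t`. -/
theorem exists_scale {n : ℕ} {d t₀ : ℝ} (ht₀ : 8 ≤ t₀) (hd : (2 : ℝ) ^ t₀ ≤ d)
    (hn : (2 : ℝ) ^ ((Real.logb 2 d) ^ 7) ≤ (n : ℝ)) :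
    ∃ t : ℕ, t₀ ≤ t ∧ d ≤ 2 ^ t ∧ 2 ^ (t ^ 6) ≤ n ∧ n ≤ 2 ^ (t ^ 7) := by
  classical
  have hd0 : 0 < d := lt_of_lt_of_le (by positivity) hd
  have hlog : t₀ ≤ Real.logb 2 d := (Real.le_logb_iff_rpow_le one_lt_two hd0).2 hd
  have hex : ∃ t : ℕ, n ≤ 2 ^ (t ^ 7) :=
    ⟨n, (Nat.lt_two_pow_self (n := n)).le.trans
      (Nat.pow_le_pow_right two_pos (Nat.le_self_pow (by norm_num) n))⟩
  obtain ⟨t, ht, hmin⟩ : ∃ t : ℕ, n ≤ 2 ^ (t ^ 7) ∧ ∀ u < t, ¬ n ≤ 2 ^ (u ^ 7) :=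
    ⟨Nat.find hex, Nat.find_spec hex, fun u hu => Nat.find_min hex hu⟩
  have h1 : (2 : ℝ) ^ ((Real.logb 2 d) ^ 7) ≤ (2 : ℝ) ^ (((t : ℝ)) ^ 7) := by
    refine hn.trans ?_
    have : (n : ℝ) ≤ 2 ^ (t ^ 7) := by exact_mod_cast ht
    calc (n : ℝ) ≤ 2 ^ (t ^ 7) := this
      _ = (2 : ℝ) ^ (((t : ℝ)) ^ 7) := by
        rw [← Real.rpow_natCast]; push_cast; rfl
  rw [Real.rpow_le_rpow_left_iff one_lt_two] at h1
  have h2 : Real.logb 2 d ≤ t :=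
    le_of_pow_le_pow_left₀ (by norm_num) (Nat.cast_nonneg t) h1
  have ht0 : t₀ ≤ t := hlog.trans h2
  refine ⟨t, ht0, ?_, ?_, ht⟩
  · rw [Real.logb_le_iff_le_rpow one_lt_two hd0, Real.rpow_natCast] at h2
    exact h2
  · have h8 : 8 ≤ t := by exact_mod_cast ht₀.trans ht0
    obtain ⟨u, rfl⟩ := Nat.exists_eq_add_of_le h8
    have h3 := hmin (u + 7) (by omega)
    push Not at h3
    refine le_trans (Nat.pow_le_pow_right two_pos ?_) h3.le
    rw [add_comm 8 u]
    exact add_eight_pow_six_le u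

set_option maxHeartbeats 800000 in
/-- Separation once the scale `t` is known. The parameters are `ρ = 4 t (15 t + 1) ^ 3`,
`M₁ = 2 ^ (14 t)`, `M₂ = 2 ^ (4 t)` and `k = ⌊d⌋₊`. -/
theorem separate_of_scale [Fintype V] {G : SimpleGraph V} {ε s d : ℝ} {t : ℕ} (hε : 0 < ε)
    (hε1 : ε ≤ 1) (hεt : 1 ≤ ε * t) (ht : 2000000 ≤ t) (hpoly : 1000000 * t ^ 22 ≤ 2 ^ t)
    (hd11 : 11 ≤ d) (hdt : d ≤ 2 ^ t)
    (hd : ∀ x, d ≤ x → 96 / ε ^ 2 * (Real.logb 2 x + 1) ^ 5 ≤ x) (hs : 16 ≤ s)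
    (hn1 : 2 ^ (t ^ 6) ≤ Nat.card V) (hn2 : Nat.card V ≤ 2 ^ (t ^ 7))
    (hG : ESTExpander G ε s d)
    (hdeg : ∀ v : V, ((G.neighborSet v).ncard : ℝ) ≤ d ^ 7) :
    ∃ Ps : List ((u : V) × (v : V) × G.Walk u v),
      (∀ p ∈ Ps, p.2.2.IsPath) ∧
      ((Ps.length : ℝ) ≤ 5 * max (Nat.card V : ℝ) ((G.edgeSet.ncard : ℝ) / d)) ∧
      (∀ e ∈ G.edgeSet, ∀ f ∈ G.edgeSet, e ≠ f →
        ∃ p ∈ Ps, e ∈ p.2.2.edges ∧ f ∉ p.2.2.edges) := by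
  classical
  have hd0 : (0 : ℝ) ≤ d := by linarith
  obtain ⟨B, hB⟩ : ∃ B : ℕ, B = 2 ^ t := ⟨_, rfl⟩
  have hB1 : 1 ≤ B := hB ▸ Nat.one_le_two_pow
  -- `k` is the size of the groups of edges, `Δ` the degree bound
  obtain ⟨k, hk⟩ : ∃ k : ℕ, k = ⌊d⌋₊ := ⟨_, rfl⟩
  obtain ⟨Δ, hΔe⟩ : ∃ Δ : ℕ, Δ = ⌊d ^ 7⌋₊ := ⟨_, rfl⟩
  have hkd : (k : ℝ) ≤ d := hk ▸ Nat.floor_le hd0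
  have hkd' : d < k + 1 := hk ▸ Nat.lt_floor_add_one d
  have hk10 : (10 : ℝ) < k := by linarith
  have hk1 : 1 ≤ k := by
    have : (10 : ℕ) < k := by exact_mod_cast hk10
    omega
  have hkB : k ≤ B := by
    have : (k : ℝ) ≤ (B : ℝ) := by rw [hB]; push_cast; exact hkd.trans hdt
    exact_mod_cast this
  have hΔ : ∀ v, (G.neighborSet v).ncard ≤ Δ := fun v => hΔe ▸ Nat.le_floor (hdeg v)
  have hΔB : Δ ≤ B ^ 7 := by
    have : (Δ : ℝ) ≤ (B : ℝ) ^ 7 := by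
      refine (hΔe ▸ Nat.floor_le (by positivity)).trans ?_
      rw [hB]; push_cast
      gcongr
    exact_mod_cast this
  have hpow : ∀ i : ℕ, B ^ i = 2 ^ (i * t) := fun i => by rw [hB, ← pow_mul, mul_comm]
  have h2B : 2 ≤ B := by
    rw [hB]; calc 2 = 2 ^ 1 := rfl
      _ ≤ 2 ^ t := Nat.pow_le_pow_right two_pos (by omega)
  have hΔ1 : Δ + 1 ≤ B ^ 8 := by
    have : 1 ≤ B ^ 7 := Nat.one_le_pow _ _ hB1
    calc Δ + 1 ≤ B ^ 7 * 2 := by omega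
      _ ≤ B ^ 7 * B := Nat.mul_le_mul_left _ h2B
      _ = B ^ 8 := (pow_succ _ _).symm
  -- monomials of small degree in `t` are below `t ^ 22`
  have hmono : ∀ i, i ≤ 22 → t ^ i ≤ t ^ 22 := fun i hi => Nat.pow_le_pow_right (by omega) hi
  have ht7 : t ^ 7 + 1 ≤ 2 * t ^ 7 := by
    have : 1 ≤ t ^ 7 := Nat.one_le_pow _ _ (by omega)
    omega
  have ht72 : (t ^ 7 + 1) ^ 2 ≤ 4 * t ^ 14 :=
    (Nat.pow_le_pow_left ht7 2).trans (le_of_eq (by ring))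
  obtain ⟨q, hq⟩ : ∃ q : ℕ, q = 2 * (t ^ 7 + 1) ^ 2 * t := ⟨_, rfl⟩
  obtain ⟨L, hL⟩ : ∃ L : ℕ, L = 2 * (q * t ^ 7) := ⟨_, rfl⟩
  obtain ⟨ρ, hρ⟩ : ∃ ρ : ℕ, ρ = 4 * t * (15 * t + 1) ^ 3 := ⟨_, rfl⟩
  obtain ⟨w, hw⟩ : ∃ w : ℕ, w = k * (2 + L + 2 * (13 * ρ)) := ⟨_, rfl⟩
  have hLle : L ≤ 16 * t ^ 22 := by
    rw [hL, hq]
    calc 2 * (2 * (t ^ 7 + 1) ^ 2 * t * t ^ 7) ≤ 2 * (2 * (4 * t ^ 14) * t * t ^ 7) := by gcongr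
      _ = 16 * t ^ 22 := by ring
  have hρle : ρ ≤ 16384 * t ^ 4 := by
    rw [hρ]
    calc 4 * t * (15 * t + 1) ^ 3 ≤ 4 * t * (16 * t) ^ 3 := by gcongr; omega
      _ = 16384 * t ^ 4 := by ring
  have hρ1 : 1 ≤ ρ := by
    rw [hρ]
    have : 1 ≤ (15 * t + 1) ^ 3 := Nat.one_le_pow _ _ (by omega)
    nlinarith
  have hwle : w ≤ B ^ 2 := by
    rw [hw, pow_two]
    refine Nat.mul_le_mul hkB (le_trans ?_ (hB ▸ hpoly))
    have h4 := hmono 4 (by norm_num)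
    have h0 := hmono 0 (by norm_num)
    rw [pow_zero] at h0
    omega
  have hrB : 2 * (13 * ρ + 1) ≤ B := by
    refine le_trans ?_ (hB ▸ hpoly)
    have h4 := hmono 4 (by norm_num)
    have h0 := hmono 0 (by norm_num)
    rw [pow_zero] at h0
    omega
  have ha₂ : (B ^ 4 + 1) * (13 * ρ + 1) ≤ B ^ 5 := by
    have : 1 ≤ B ^ 4 := Nat.one_le_pow _ _ hB1
    calc (B ^ 4 + 1) * (13 * ρ + 1) ≤ (B ^ 4 * 2) * (13 * ρ + 1) :=
          Nat.mul_le_mul_right _ (by omega)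
      _ = B ^ 4 * (2 * (13 * ρ + 1)) := by ring
      _ ≤ B ^ 4 * B := Nat.mul_le_mul_left _ hrB
      _ = B ^ 5 := (pow_succ _ _).symm
  have ha₁ : (B ^ 14 + 1) * (13 * ρ + 1) ≤ B ^ 15 := by
    have : 1 ≤ B ^ 14 := Nat.one_le_pow _ _ hB1
    calc (B ^ 14 + 1) * (13 * ρ + 1) ≤ (B ^ 14 * 2) * (13 * ρ + 1) :=
          Nat.mul_le_mul_right _ (by omega)
      _ = B ^ 14 * (2 * (13 * ρ + 1)) := by ring
      _ ≤ B ^ 14 * B := Nat.mul_le_mul_left _ hrB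
      _ = B ^ 15 := (pow_succ _ _).symm
  have h24 : 24 * t ^ 15 ≤ B := by
    refine le_trans ?_ (hB ▸ hpoly)
    have h4 := hmono 15 (by norm_num)
    omega
  -- a deletion budget `x` costs a factor `B = 2 ^ t` in the size of the families
  have hbudget : ∀ x b : ℕ, x ≤ 3 * B ^ b →
      ((x : ℕ) : ℝ) * (2 * (((t ^ 7 : ℕ) : ℝ) + 1) ^ 2) ≤ ε * ((B ^ (b + 1) : ℕ) : ℝ) := by
    intro x b hx
    have h1 : x * (2 * (t ^ 7 + 1) ^ 2) * t ≤ B ^ (b + 1) := by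
      calc x * (2 * (t ^ 7 + 1) ^ 2) * t ≤ (3 * B ^ b) * (2 * (4 * t ^ 14)) * t := by gcongr
        _ = B ^ b * (24 * t ^ 15) := by ring
        _ ≤ B ^ b * B := Nat.mul_le_mul_left _ h24
        _ = B ^ (b + 1) := (pow_succ _ _).symm
    have h2 : (x : ℝ) * (2 * (((t ^ 7 : ℕ) : ℝ) + 1) ^ 2) * t ≤ ((B ^ (b + 1) : ℕ) : ℝ) := by
      exact_mod_cast h1
    calc (x : ℝ) * (2 * (((t ^ 7 : ℕ) : ℝ) + 1) ^ 2)
        ≤ (x : ℝ) * (2 * (((t ^ 7 : ℕ) : ℝ) + 1) ^ 2) * (ε * t) :=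
          le_mul_of_one_le_right (by positivity) hεt
      _ = ε * ((x : ℝ) * (2 * (((t ^ 7 : ℕ) : ℝ) + 1) ^ 2) * t) := by ring
      _ ≤ _ := mul_le_mul_of_nonneg_left h2 hε.le
  have hqε : (2 * (((t ^ 7 : ℕ) : ℝ) + 1) ^ 2 : ℝ) ≤ ε * q := by
    rw [hq]; push_cast
    have : (2 * ((t : ℝ) ^ 7 + 1) ^ 2) ≤ 2 * ((t : ℝ) ^ 7 + 1) ^ 2 * (ε * t) :=
      le_mul_of_one_le_right (by positivity) hεt
    linarith
  have hB2 : ∀ b, 2 ≤ b → B ^ 2 ≤ B ^ b := fun b hb => Nat.pow_le_pow_right hB1 hb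
  have hconn₁ : ∀ F : Set (Sym2 V),
      F.ncard ≤ k * (2 * (((B ^ 4 + 1) * (13 * ρ + 1)) * Δ)) →
      RobustConn (G.deleteEdges F) (B ^ 14) w L := by
    intro F hF
    rw [hL]
    refine robustConn_of_expander hε (by linarith) hd0 hG hn2 (Nat.one_le_pow _ _ hB1) ?_ hqε
    refine hbudget _ 13 ?_
    have h1 : k * (2 * (((B ^ 4 + 1) * (13 * ρ + 1)) * Δ)) ≤ B * (2 * (B ^ 5 * B ^ 7)) := by
      gcongr
    have h2 : B * (2 * (B ^ 5 * B ^ 7)) = 2 * B ^ 13 := by ring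
    have h3 := hB2 13 (by norm_num)
    omega
  have hconn₂ : ∀ F : Set (Sym2 V), F.ncard ≤ k * w →
      RobustConn (G.deleteEdges F) (B ^ 4) w L := by
    intro F hF
    rw [hL]
    refine robustConn_of_expander hε (by linarith) hd0 hG hn2 (Nat.one_le_pow _ _ hB1) ?_ hqε
    refine hbudget _ 3 ?_
    have h1 : k * w ≤ B * B ^ 2 := by gcongr
    have h2 : B * B ^ 2 = B ^ 3 := by ring
    have h3 := hB2 3 (by norm_num)
    omega
  have ht5 : 2000000 * t ^ 5 ≤ t ^ 6 := by
    rw [pow_succ t 5, mul_comm]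
    exact Nat.mul_le_mul_left _ ht
  have ht15 : t ≤ t ^ 5 := Nat.le_self_pow (by norm_num) t
  have htρ : t * ρ ≤ 16384 * t ^ 5 := by
    calc t * ρ ≤ t * (16384 * t ^ 4) := Nat.mul_le_mul_left _ hρle
      _ = 16384 * t ^ 5 := by ring
  have hE : ∀ e ∈ G.edgeSet.toFinite.toFinset, e ∈ G.edgeSet := fun e he => by simpa using he
  have hj : (2 : ℝ) ^ (15 * t) ≤ 2 * (Nat.card V : ℝ) / 3 := by
    have h1 : 2 * 2 ^ (15 * t) ≤ Nat.card V := by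
      calc 2 * 2 ^ (15 * t) = 2 ^ (15 * t + 1) := by ring
        _ ≤ 2 ^ (t ^ 6) := Nat.pow_le_pow_right two_pos (by omega)
        _ ≤ _ := hn1
    have h2 : (2 : ℝ) * 2 ^ (15 * t) ≤ Nat.card V := by exact_mod_cast h1
    have h3 : (0 : ℝ) < 2 ^ (15 * t) := by positivity
    linarith
  have hsmall : 2 * ((Δ : ℝ) + 1) ^ (12 * ρ) ≤ 2 * (Nat.card V : ℝ) / 3 := by
    have h1 : 4 * (Δ + 1) ^ (12 * ρ) ≤ Nat.card V := by
      calc 4 * (Δ + 1) ^ (12 * ρ) ≤ 4 * (B ^ 8) ^ (12 * ρ) := by gcongr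
        _ = 2 ^ (96 * (t * ρ) + 2) := by rw [hpow, ← pow_mul, pow_add]; ring_nf
        _ ≤ 2 ^ (t ^ 6) := Nat.pow_le_pow_right two_pos (by omega)
        _ ≤ _ := hn1
    have h2 : 4 * ((Δ : ℝ) + 1) ^ (12 * ρ) ≤ Nat.card V := by exact_mod_cast h1
    have h3 : (0 : ℝ) < ((Δ : ℝ) + 1) ^ (12 * ρ) := by positivity
    linarith
  have hjρ : (((15 * t : ℕ) : ℝ) + 1) ^ 3 < ε / 2 * ρ := by
    rw [hρ]; push_cast
    have h1 : (0 : ℝ) < (15 * (t : ℝ) + 1) ^ 3 := by positivity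
    have h2 : (15 * (t : ℝ) + 1) ^ 3 ≤ (15 * (t : ℝ) + 1) ^ 3 * (ε * t) :=
      le_mul_of_one_le_right h1.le hεt
    linarith
  have hM : ∀ b, b ≤ 14 → B ^ b + 1 ≤ 2 ^ (15 * t) := by
    intro b hb
    rw [← hpow]
    have h1 : B ^ b ≤ B ^ 14 := Nat.pow_le_pow_right hB1 hb
    have h2 : B ^ 14 * 2 ≤ B ^ 14 * B := Nat.mul_le_mul_left _ h2B
    have h3 : 1 ≤ B ^ 14 := Nat.one_le_pow _ _ hB1
    have h4 : B ^ 15 = B ^ 14 * B := pow_succ _ _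
    omega
  obtain ⟨T⟩ := exists_armSystem hε hε1 hd hs hG hΔ hρ1 hj hjρ (hM 14 le_rfl)
    (hM 4 (by norm_num)) hsmall hE
  obtain ⟨Ps, hP1, hP2, hP3⟩ := T.separate hΔ hk1 hw.ge hconn₁ hconn₂ le_rfl
  refine ⟨Ps, hP1, ?_, fun e he f hf => hP3 e (by simpa using he) f (by simpa using hf)⟩
  -- the number of paths: `2 e(G) / k` for the groups, and `o(n)` for the remainders
  rw [← Set.ncard_eq_toFinset_card G.edgeSet] at hP2
  generalize hm : (2 * ((B ^ 14 + 1) * (13 * ρ + 1)) + 2 * ((B ^ 4 + 1) * (13 * ρ + 1)) +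
    (w + 1)) * ((Δ + 1) ^ (13 * ρ) * Δ) = m at hP2
  have hmle : m ≤ 2 ^ (23 * t + 4 + 104 * (t * ρ)) := by
    have h5 : B ^ 5 ≤ B ^ 15 := Nat.pow_le_pow_right hB1 (by norm_num)
    have h2 : B ^ 2 ≤ B ^ 15 := Nat.pow_le_pow_right hB1 (by norm_num)
    have h0 : 1 ≤ B ^ 15 := Nat.one_le_pow _ _ hB1
    have hΔ8 : Δ ≤ B ^ 8 := by omega
    rw [← hm]
    calc _ ≤ (16 * B ^ 15) * ((B ^ 8) ^ (13 * ρ) * B ^ 8) := by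
          gcongr
          omega
      _ = 2 ^ (23 * t + 4 + 104 * (t * ρ)) := by
          rw [hpow, hpow, ← pow_mul, pow_add, pow_add]; ring_nf
  have hrest : 2 * (k * (2 * m + 1)) ≤ Nat.card V := by
    calc 2 * (k * (2 * m + 1)) ≤
          2 * (B * (2 * 2 ^ (23 * t + 4 + 104 * (t * ρ)) +
            2 * 2 ^ (23 * t + 4 + 104 * (t * ρ)))) := by
          have : 1 ≤ 2 ^ (23 * t + 4 + 104 * (t * ρ)) := Nat.one_le_two_pow
          gcongr
          omega
      _ = 2 ^ (24 * t + 7 + 104 * (t * ρ)) := by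
          rw [hB]; ring
      _ ≤ 2 ^ (t ^ 6) := Nat.pow_le_pow_right two_pos (by omega)
      _ ≤ _ := hn1
  have hfin : (Ps.length : ℝ) * k ≤ 2 * G.edgeSet.ncard + k * (Nat.card V : ℝ) := by
    have h1 : Ps.length * k ≤ 2 * G.edgeSet.ncard + k * Nat.card V := by
      refine hP2.trans ?_
      calc 2 * (G.edgeSet.ncard + k * (k * (2 * m + 1))) =
            2 * G.edgeSet.ncard + k * (2 * (k * (2 * m + 1))) := by ring
        _ ≤ _ := Nat.add_le_add_left (Nat.mul_le_mul_left k hrest) _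
    exact_mod_cast h1
  have hx1 := le_max_left (Nat.card V : ℝ) ((G.edgeSet.ncard : ℝ) / d)
  have hx2 := le_max_right (Nat.card V : ℝ) ((G.edgeSet.ncard : ℝ) / d)
  set x := max (Nat.card V : ℝ) ((G.edgeSet.ncard : ℝ) / d)
  rw [div_le_iff₀ (by linarith)] at hx2
  have hx0 : 0 ≤ x := le_trans (Nat.cast_nonneg _) hx1
  -- `d ≤ k + 1 ≤ 2 k`
  have h5 : x * d ≤ x * (2 * k) := mul_le_mul_of_nonneg_left (by linarith) hx0
  have h6 : (k : ℝ) * Nat.card V ≤ k * x := mul_le_mul_of_nonneg_left hx1 (by linarith)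
  refine le_of_mul_le_mul_right ?_ (show (0 : ℝ) < k by linarith)
  linarith

end Assembly

/-- Separating sparse expanders with small maximum degree: for every `ε > 0` there are
`d₀` and `s₀` such that for `d ≥ d₀`, `s ≥ s₀` and `n ≥ 2^((log d)^7)`, every
`n`-vertex `(ε, s, d)`-expander `G` with maximum degree at most `d^7` admits a
collection of at most `5 max{n, e(G)/d}` paths strongly separating its edge set. -/
theorem separate_sparse_expander (ε : ℝ) (hε : 0 < ε) :
    ∃ d₀ s₀ : ℝ, ∀ d : ℝ, d₀ ≤ d → ∀ s : ℝ, s₀ ≤ s →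
      ∀ (V : Type) [Fintype V],
        (2 : ℝ) ^ ((Real.logb 2 d)^7) ≤ (Fintype.card V : ℝ) →
        ∀ G : SimpleGraph V, ESTExpander G ε s d →
          (∀ v : V, ((G.neighborSet v).ncard : ℝ) ≤ d^7) →
          ∃ Ps : List ((u : V) × (v : V) × G.Walk u v),
            (∀ p ∈ Ps, p.2.2.IsPath) ∧
            ((Ps.length : ℝ) ≤
              5 * max (Fintype.card V : ℝ) ((G.edgeSet.ncard : ℝ) / d)) ∧
            (∀ e ∈ G.edgeSet, ∀ f ∈ G.edgeSet, e ≠ f →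
              ∃ p ∈ Ps, e ∈ p.2.2.edges ∧ f ∉ p.2.2.edges) := by
  obtain ⟨η, hη⟩ : ∃ η : ℝ, η = min ε 1 := ⟨_, rfl⟩
  have hη0 : 0 < η := hη ▸ lt_min hε one_pos
  obtain ⟨d₁, hd₁, hlog⟩ := exists_log_pow_le (96 / η ^ 2)
  obtain ⟨t₁, ht₁⟩ : ∃ t₁ : ℕ, ∀ t : ℕ, t₁ ≤ t → 1000000 * t ^ 22 ≤ 2 ^ t := by
    have h := tendsto_pow_const_div_const_pow_of_one_lt 22 (show (1 : ℝ) < 2 by norm_num)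
    have h' := h.eventually (eventually_le_nhds (show (0 : ℝ) < 1 / 1000000 by norm_num))
    obtain ⟨t₁, ht₁⟩ := Filter.eventually_atTop.1 h'
    refine ⟨t₁, fun t ht => ?_⟩
    have h1 := ht₁ t ht
    rw [div_le_iff₀ (by positivity)] at h1
    have h2 : (1000000 : ℝ) * t ^ 22 ≤ 2 ^ t := by linarith
    exact_mod_cast h2
  obtain ⟨t₀, ht₀⟩ : ∃ t₀ : ℝ, t₀ = max 2000000 (max (t₁ : ℝ) (1 / η)) := ⟨_, rfl⟩
  have ht8 : 2000000 ≤ t₀ := ht₀ ▸ le_max_left _ _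
  have ht1 : (t₁ : ℝ) ≤ t₀ := ht₀ ▸ (le_max_left _ _).trans (le_max_right _ _)
  have htη : 1 / η ≤ t₀ := ht₀ ▸ (le_max_right _ _).trans (le_max_right _ _)
  refine ⟨max 11 (max d₁ (2 ^ t₀)), 16, fun d hd s hs V _ hn G hG hdeg => ?_⟩
  have hd11 : 11 ≤ d := (le_max_left _ _).trans hd
  have hdd₁ : d₁ ≤ d := ((le_max_left _ _).trans (le_max_right _ _)).trans hd
  have hdt₀ : (2 : ℝ) ^ t₀ ≤ d := ((le_max_right _ _).trans (le_max_right _ _)).trans hd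
  obtain ⟨t, htt, hdt, hn1, hn2⟩ := exists_scale (by linarith) hdt₀ hn
  rw [← Nat.card_eq_fintype_card] at hn1 hn2 ⊢
  refine separate_of_scale (t := t) hη0 (hη ▸ min_le_right _ _) ?_ ?_ (ht₁ t ?_) hd11 hdt
    (fun x hx => hlog x (hdd₁.trans hx)) hs hn1 hn2 (hG.mono_eps (hη ▸ min_le_left _ _)) hdeg
  · have := htη.trans htt
    rwa [div_le_iff₀ hη0, mul_comm] at this
  · exact_mod_cast ht8.trans htt
  · exact_mod_cast ht1.trans htt
end

section
/- Let G be a graph on n vertices and let 𝒫 be a collection of at most n pairwise edge-disjoint paths whose edge sets partition E(G). Then there is a collection 𝓜 of at most 3n pairwise edge-disjoint matchings in G whose union covers all edges of G, such that every matching M ∈ 𝓜 intersects each path of 𝒫 in at most one edge. Consequently, for every two distinct edges e, f of G, either the unique path P(e) ∈ 𝒫 containing e satisfies f ∉ E(P(e)), or some matching M ∈ 𝓜 contains e but not f; in particular, 𝒫 ∪ 𝓜 is a collection of at most 4n edge sets that strongly separates E(G). -/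
/-!
Say that two edges conflict if they share a vertex or lie on a common path of `Ps`. With `n` the
number of vertices, the edges in conflict with `e = s(u, v)` (and `e` itself) are incident with
`u`, incident with `v`, or on the unique path containing `e`, and each of these three sets has at
most `n - 1` elements (`card_incidence_lt`, `card_path_edges_lt`). A conflict graph of maximum
degree below `3n` has a greedy proper colouring with `3n` colours (`exists_greedy_coloring`), and
its colour classes are the required matchings.
-/

/-- `M` is a matching (a set of pairwise non-adjacent edges) in the graph `G`. -/
def IsMatchingIn {V : Type*} (G : SimpleGraph V) (M : Set (Sym2 V)) : Prop :=
  M ⊆ G.edgeSet ∧ ∀ e ∈ M, ∀ f ∈ M, e ≠ f → ∀ v : V, v ∈ e → v ∉ f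

/-- Greedy colouring: if every element of `s` is related to fewer than `k` elements of `s`, then
`s` has a proper colouring with colours `0, …, k - 1`. -/
theorem exists_greedy_coloring {α : Type*} [DecidableEq α] (R : α → α → Prop) [DecidableRel R]
    (hsymm : ∀ a b, R a b → R b a) (k : ℕ) (s : Finset α)
    (hdeg : ∀ a ∈ s, (s.filter (R a)).card < k) :
    ∃ c : α → ℕ, (∀ a ∈ s, c a < k) ∧ ∀ a ∈ s, ∀ b ∈ s, a ≠ b → R a b → c a ≠ c b := by
  induction s using Finset.induction_on with
  | empty => exact ⟨fun _ => 0, by simp, by simp⟩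
  | insert x s hx ih =>
    obtain ⟨c, hck, hc⟩ := ih fun a ha =>
      (Finset.card_le_card (Finset.filter_subset_filter _ (Finset.subset_insert x s))).trans_lt
        (hdeg a (Finset.mem_insert_of_mem ha))
    have hlt : ((s.filter (R x)).image c).card < (Finset.range k).card := by
      rw [Finset.card_range]
      exact Finset.card_image_le.trans_lt
        ((Finset.card_le_card (Finset.filter_subset_filter _ (Finset.subset_insert x s))).trans_lt
          (hdeg x (Finset.mem_insert_self x s)))
    -- a colour that no neighbour of `x` in `s` uses
    obtain ⟨i, hik, hi⟩ := Finset.exists_mem_notMem_of_card_lt_card hlt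
    rw [Finset.mem_range] at hik
    have hfree : ∀ b ∈ s, R x b → c b ≠ i := fun b hb hR h =>
      hi (Finset.mem_image.2 ⟨b, Finset.mem_filter.2 ⟨hb, hR⟩, h⟩)
    refine ⟨Function.update c x i, ?_, ?_⟩
    · intro a ha
      by_cases h : a = x
      · simpa [h] using hik
      · simpa [h] using hck a (Finset.mem_of_mem_insert_of_ne ha h)
    · intro a ha b hb hab hR
      by_cases h : a = x
      · subst h
        have hb' := Finset.mem_of_mem_insert_of_ne hb hab.symm
        simpa [hab.symm] using (hfree b hb' hR).symm
      · have ha' := Finset.mem_of_mem_insert_of_ne ha h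
        by_cases h' : b = x
        · subst h'
          simpa [h] using hfree a ha' (hsymm _ _ hR)
        · simpa [h, h'] using hc a ha' b (Finset.mem_of_mem_insert_of_ne hb h') hab hR

theorem card_incidence_lt {V : Type*} [Fintype V] [DecidableEq V] (G : SimpleGraph V)
    [DecidableRel G.Adj] (v : V) : (G.incidenceFinset v).card < Fintype.card V := by
  rw [G.card_incidenceFinset_eq_degree]
  exact G.degree_lt_card_verts v

theorem card_path_edges_lt {V : Type*} [Fintype V] [DecidableEq V] {G : SimpleGraph V} {u v : V}
    {p : G.Walk u v} (hp : p.IsPath) : p.edges.toFinset.card < Fintype.card V :=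
  (List.toFinset_card_le _).trans_lt (p.length_edges ▸ hp.length_lt)

/-- The general separation strategy: given a decomposition `𝒫` of an `n`-vertex graph
`G` into at most `n` edge-disjoint paths, there is a collection `𝓜` of at most `3n`
pairwise edge-disjoint matchings covering all edges of `G`, each meeting every path of
`𝒫` in at most one edge; consequently, for distinct edges `e, f` either some path of
`𝒫` contains `e` but not `f` or some matching of `𝓜` contains `e` but not `f`, so
`𝒫 ∪ 𝓜` is a collection of at most `4n` edge sets strongly separating `E(G)`. -/
theorem paths_and_matchings_separate (V : Type) [Fintype V] (G : SimpleGraph V)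
    (Ps : List ((u : V) × (v : V) × G.Walk u v))
    (hlen : Ps.length ≤ Fintype.card V)
    (hpath : ∀ p ∈ Ps, p.2.2.IsPath)
    (hdisj : Ps.Pairwise fun p q => ∀ e, e ∈ p.2.2.edges → e ∉ q.2.2.edges)
    (hcover : ∀ e, e ∈ G.edgeSet ↔ ∃ p ∈ Ps, e ∈ p.2.2.edges) :
    ∃ Ms : List (Set (Sym2 V)),
      Ms.length ≤ 3 * Fintype.card V ∧
      Ms.Pairwise (fun M N => Disjoint M N) ∧
      (∀ M ∈ Ms, IsMatchingIn G M) ∧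
      (∀ e ∈ G.edgeSet, ∃ M ∈ Ms, e ∈ M) ∧
      (∀ M ∈ Ms, ∀ p ∈ Ps, ∀ e ∈ M, ∀ f ∈ M,
        e ∈ p.2.2.edges → f ∈ p.2.2.edges → e = f) ∧
      Ps.length + Ms.length ≤ 4 * Fintype.card V ∧
      (∀ e ∈ G.edgeSet, ∀ f ∈ G.edgeSet, e ≠ f →
        (∃ p ∈ Ps, e ∈ p.2.2.edges ∧ f ∉ p.2.2.edges) ∨
        (∃ M ∈ Ms, e ∈ M ∧ f ∉ M)) := by
  classical
  set n := Fintype.card V with hn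
  let R : Sym2 V → Sym2 V → Prop := fun e f =>
    (∃ v, v ∈ e ∧ v ∈ f) ∨ ∃ p ∈ Ps, e ∈ p.2.2.edges ∧ f ∈ p.2.2.edges
  have hsymm : ∀ e f, R e f → R f e := by
    rintro e f (⟨v, h, h'⟩ | ⟨p, hp, h, h'⟩)
    exacts [Or.inl ⟨v, h', h⟩, Or.inr ⟨p, hp, h', h⟩]
  have huniq : ∀ p ∈ Ps, ∀ q ∈ Ps, ∀ e, e ∈ p.2.2.edges → e ∈ q.2.2.edges → p = q := by
    intro p hp q hq e hep heq
    by_contra hne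
    have hs : Std.Symm fun p q : (u : V) × (v : V) × G.Walk u v =>
        ∀ e, e ∈ p.2.2.edges → e ∉ q.2.2.edges := ⟨fun _ _ h e h₁ h₂ => h e h₂ h₁⟩
    exact hdisj.forall hp hq hne e hep heq
  have hdeg : ∀ e ∈ G.edgeFinset, (G.edgeFinset.filter (R e)).card < 3 * n := by
    intro e he
    obtain ⟨p, hp, hep⟩ := (hcover e).1 (SimpleGraph.mem_edgeFinset.1 he)
    induction e using Sym2.ind with
    | _ u v =>
      have hsub : G.edgeFinset.filter (R s(u, v)) ⊆
          G.incidenceFinset u ∪ G.incidenceFinset v ∪ p.2.2.edges.toFinset := by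
        intro f hf
        obtain ⟨hfG, hR⟩ := Finset.mem_filter.1 hf
        rw [SimpleGraph.mem_edgeFinset] at hfG
        simp only [Finset.mem_union, SimpleGraph.mem_incidenceFinset, List.mem_toFinset]
        rcases hR with ⟨w, hw, hwf⟩ | ⟨q, hq, heq, hfq⟩
        · rcases Sym2.mem_iff.1 hw with rfl | rfl
          · exact Or.inl (Or.inl ⟨hfG, hwf⟩)
          · exact Or.inl (Or.inr ⟨hfG, hwf⟩)
        · exact Or.inr (huniq p hp q hq _ hep heq ▸ hfq)
      have h₁ := Finset.card_le_card hsub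
      have h₂ := Finset.card_union_le (G.incidenceFinset u ∪ G.incidenceFinset v)
        p.2.2.edges.toFinset
      have h₃ := Finset.card_union_le (G.incidenceFinset u) (G.incidenceFinset v)
      have h₄ := card_incidence_lt G u
      have h₅ := card_incidence_lt G v
      have h₆ := card_path_edges_lt (hpath p hp)
      omega
  obtain ⟨c, hck, hc⟩ := exists_greedy_coloring R hsymm (3 * n) G.edgeFinset hdeg
  simp only [SimpleGraph.mem_edgeFinset] at hck hc
  let M : ℕ → Set (Sym2 V) := fun i => {e | e ∈ G.edgeSet ∧ c e = i}
  have hpathM : ∀ i, ∀ p ∈ Ps, ∀ e ∈ M i, ∀ f ∈ M i,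
      e ∈ p.2.2.edges → f ∈ p.2.2.edges → e = f := by
    intro i p hp e he f hf hep hfp
    by_contra hne
    exact hc e he.1 f hf.1 hne (Or.inr ⟨p, hp, hep, hfp⟩) (he.2.trans hf.2.symm)
  have hcov : ∀ e ∈ G.edgeSet, ∃ N ∈ (List.range (3 * n)).map M, e ∈ N := fun e he =>
    ⟨M (c e), List.mem_map.2 ⟨c e, List.mem_range.2 (hck e he), rfl⟩, he, rfl⟩
  refine ⟨(List.range (3 * n)).map M, by simp, ?_, ?_, hcov, ?_, ?_, ?_⟩
  · rw [List.pairwise_map]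
    refine List.nodup_range.imp fun {i j} hij => Set.disjoint_left.2 fun e hi hj => ?_
    exact hij (hi.2.symm.trans hj.2)
  · intro N hN
    obtain ⟨i, -, rfl⟩ := List.mem_map.1 hN
    refine ⟨fun e he => he.1, fun e he f hf hne v hve hvf => ?_⟩
    exact hc e he.1 f hf.1 hne (Or.inl ⟨v, hve, hvf⟩) (he.2.trans hf.2.symm)
  · intro N hN
    obtain ⟨i, -, rfl⟩ := List.mem_map.1 hN
    exact hpathM i
  · rw [List.length_map, List.length_range]
    omega
  · intro e he f hf hne
    obtain ⟨p, hp, hep⟩ := (hcover e).1 he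
    by_cases hfp : f ∈ p.2.2.edges
    · obtain ⟨N, hN, heN⟩ := hcov e he
      refine Or.inr ⟨N, hN, heN, fun hfN => ?_⟩
      obtain ⟨i, -, rfl⟩ := List.mem_map.1 hN
      exact hne (hpathM i p hp e heN f hfN hep hfp)
    · exact Or.inl ⟨p, hp, hep, hfp⟩
end

section
/- There exists d₀ such that the following holds for every d ≥ d₀ and every n ≥ 2^{(log d)^7}. Let G be a graph on n vertices with maximum degree at most d^7, write m := e(G) and k := max{n, m/d}, and let 𝒫 be a collection of at most 2k pairwise edge-disjoint paths of length at most d whose edge sets partition E(G); for an edge e, let P(e) denote the unique path in 𝒫 containing e. Then there is a collection 𝓜 of at most 3k pairwise edge-disjoint matchings in G whose union covers all edges of G, such that every M ∈ 𝓜 is a matching of size at most d, and for every two distinct edges e, f ∈ M the paths P(e) and P(f) are at distance at least 2(log d)^5 apart in G. -/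
open Finset in
/-- Greedy colouring with bounded colour classes. When an element is to be coloured, at most `Δ`
colours are blocked by conflicting elements, and at most `#E / d` colours are already used `d`
times. -/
theorem exists_bounded_coloring {α : Type*} (C : α → α → Prop) (hC : ∀ a b, C a b → C b a)
    (E : Finset α) (Δ d N : ℕ) (hd : 0 < d)
    (hΔ : ∀ a ∈ E, {b | b ∈ E ∧ C a b}.ncard ≤ Δ) (hN : Δ + #E / d < N) :
    ∃ c : α → Fin N, (∀ a ∈ E, ∀ b ∈ E, a ≠ b → c a = c b → ¬ C a b) ∧
      ∀ i, {a | a ∈ E ∧ c a = i}.ncard ≤ d := by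
  classical
  have key : ∀ S ⊆ E, ∃ c : α → Fin N, (∀ a ∈ S, ∀ b ∈ S, a ≠ b → c a = c b → ¬ C a b) ∧
      ∀ i, #{a ∈ S | c a = i} ≤ d := by
    intro S
    induction S using Finset.induction_on with
    | empty => exact fun _ => ⟨fun _ => ⟨0, (Nat.zero_le _).trans_lt hN⟩, by simp, by simp⟩
    | insert e S he ih =>
      intro hS
      obtain ⟨c, hc, hs⟩ := ih ((subset_insert _ _).trans hS)
      have heE : e ∈ E := hS (mem_insert_self _ _)
      have hSE : S ⊆ E := (subset_insert _ _).trans hS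
      have h1 : #(image c {f ∈ S | C e f}) ≤ Δ := by
        refine card_image_le.trans (le_trans ?_ (hΔ e heE))
        rw [← Set.ncard_coe_finset]
        refine Set.ncard_le_ncard ?_ (E.finite_toSet.subset fun x hx => hx.1)
        intro x hx
        simp only [coe_filter, Set.mem_ofPred_eq] at hx
        exact ⟨hSE hx.1, hx.2⟩
      have h2 : #{i : Fin N | d ≤ #{a ∈ S | c a = i}} ≤ #E / d := by
        rw [Nat.le_div_iff_mul_le hd]
        calc _ = ∑ i ∈ {i : Fin N | d ≤ #{a ∈ S | c a = i}}, d := by simp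
          _ ≤ ∑ i ∈ {i : Fin N | d ≤ #{a ∈ S | c a = i}}, #{a ∈ S | c a = i} :=
            sum_le_sum fun i hi => (mem_filter.1 hi).2
          _ ≤ ∑ i, #{a ∈ S | c a = i} := sum_le_sum_of_subset (subset_univ _)
          _ = #S := (card_eq_sum_card_fiberwise (fun _ _ => by simp)).symm
          _ ≤ #E := card_le_card hSE
      obtain ⟨i, -, hi⟩ : ∃ i ∈ (univ : Finset (Fin N)), i ∉
          image c {f ∈ S | C e f} ∪ ({i : Fin N | d ≤ #{a ∈ S | c a = i}} : Finset (Fin N)) := by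
        apply exists_mem_notMem_of_card_lt_card
        rw [card_univ, Fintype.card_fin]
        exact (card_union_le _ _).trans_lt (by omega)
      simp only [mem_union, mem_image, mem_filter, mem_univ, true_and, not_or, not_exists,
        not_and, not_le] at hi
      obtain ⟨hi1, hi2⟩ := hi
      have hne : ∀ a ∈ S, a ≠ e := fun a ha h => he (h ▸ ha)
      refine ⟨Function.update c e i, ?_, fun j => ?_⟩
      · intro a ha b hb hab h
        rw [mem_insert] at ha hb
        rcases ha with rfl | ha <;> rcases hb with rfl | hb
        · exact absurd rfl hab
        · rw [Function.update_self, Function.update_of_ne (hne b hb)] at h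
          exact fun hCab => hi1 b ⟨hb, hCab⟩ h.symm
        · rw [Function.update_self, Function.update_of_ne (hne a ha)] at h
          exact fun hCab => hi1 a ⟨ha, hC _ _ hCab⟩ h
        · rw [Function.update_of_ne (hne a ha), Function.update_of_ne (hne b hb)] at h
          exact hc a ha b hb hab h
      · have hf : {a ∈ S | Function.update c e i a = j} = ({a ∈ S | c a = j} : Finset α) :=
          filter_congr fun a ha => by rw [Function.update_of_ne (hne a ha)]
        rw [filter_insert, hf, Function.update_self]
        split_ifs with hij
        · subst hij
          exact (card_insert_le _ _).trans (hi2)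
        · exact hs j
  obtain ⟨c, h1, h2⟩ := key E subset_rfl
  refine ⟨c, h1, fun i => ?_⟩
  have := h2 i
  rw [← Set.ncard_coe_finset] at this
  simpa using this

open Finset in
/-- In a graph of maximum degree at most `D`, the ball of radius `R` around `S` is contained in a
set of size at most `#S * (1 + D) ^ R`. -/
theorem exists_ball {V : Type*} [Fintype V] (G : SimpleGraph V) (D : ℕ)
    (hD : ∀ v : V, (G.neighborSet v).ncard ≤ D) (S : Finset V) (R : ℕ) :
    ∃ B : Finset V, #B ≤ #S * (1 + D) ^ R ∧
      ∀ u ∈ S, ∀ v, ∀ w : G.Walk u v, w.length ≤ R → v ∈ B := by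
  classical
  induction R generalizing S with
  | zero =>
    refine ⟨S, by simp, ?_⟩
    intro u hu v w hw
    rwa [← SimpleGraph.Walk.eq_of_length_eq_zero (Nat.le_zero.1 hw)]
  | succ R ih =>
    obtain ⟨B, hB, h⟩ := ih (S.biUnion fun u => insert u (G.neighborFinset u))
    refine ⟨B, hB.trans ?_, ?_⟩
    · rw [pow_succ', ← mul_assoc]
      gcongr
      refine card_biUnion_le_card_mul _ _ _ fun v _ => (card_insert_le _ _).trans ?_
      have := hD v
      rw [Set.ncard_eq_toFinset_card'] at this
      rw [add_comm 1 D]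
      exact Nat.succ_le_succ this
    · intro u hu v w hw
      cases w with
      | nil => exact h u (by simp only [mem_biUnion]; exact ⟨u, hu, by simp⟩) u .nil (by simp)
      | cons hadj w =>
        refine h _ ?_ v w (by simpa using hw)
        simp only [mem_biUnion]
        exact ⟨u, hu, by simp [hadj]⟩

/-- The number of edges conflicting with a fixed one is at most `n`: with `L = log d`, the left-hand
side is at most `d ^ (16 L ^ 5 + 18) ≤ 2 ^ (40 L ^ 6) ≤ 2 ^ (L ^ 7)` as soon as `L ≥ 40`. -/
theorem conflict_bound_le {d n R : ℕ} (hd : 2 ^ 40 ≤ d) (hn : (2 : ℝ) ^ ((Real.logb 2 (d : ℝ))^7) ≤ n)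
    (hR : R = ⌈2 * (Real.logb 2 (d : ℝ))^5⌉₊) :
    ((d + 1) * (1 + d ^ 7) ^ R) * (d ^ 7 * d) ≤ n := by
  have hL : 40 ≤ Real.logb 2 d := by
    rw [Real.le_logb_iff_rpow_le (by norm_num) (by positivity)]
    exact_mod_cast hd
  have hd2 : 2 ≤ d := le_trans (by norm_num) hd
  have h1 : ((d + 1) * (1 + d ^ 7) ^ R) * (d ^ 7 * d) ≤ d ^ (8 * R + 10) := by
    have a : d + 1 ≤ d ^ 2 := by nlinarith
    have b : 1 + d ^ 7 ≤ d ^ 8 := by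
      have : 1 ≤ d ^ 7 := Nat.one_le_pow _ _ (by omega)
      nlinarith
    calc _ ≤ (d ^ 2 * (d ^ 8) ^ R) * (d ^ 7 * d) := by gcongr
      _ = _ := by rw [← pow_mul]; ring
  have hdp : (0 : ℝ) < d := by exact_mod_cast (by omega : 0 < d)
  set L := Real.logb 2 (d : ℝ) with hLdef
  have hdL : (d : ℝ) = 2 ^ L := (Real.rpow_logb (by norm_num) (by norm_num) hdp).symm
  have hR' : (R : ℝ) ≤ 2 * L ^ 5 + 1 := by
    rw [hR]; exact (Nat.ceil_lt_add_one (by positivity)).le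
  have h2 : ((d ^ (8 * R + 10) : ℕ) : ℝ) ≤ 2 ^ (L ^ 7) := by
    push_cast
    rw [← Real.rpow_natCast (d : ℝ), hdL, ← Real.rpow_mul (by norm_num)]
    apply Real.rpow_le_rpow_of_exponent_le (by norm_num)
    push_cast
    have h5 : 1 ≤ L ^ 5 := one_le_pow₀ (by linarith)
    calc L * (8 * R + 10) ≤ L * (8 * (2 * L ^ 5 + 1) + 10) := by gcongr
      _ ≤ L * (40 * L ^ 5) := by gcongr; linarith
      _ ≤ L * (L * L ^ 5) := by gcongr
      _ = L ^ 7 := by ring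
  exact h1.trans (by exact_mod_cast h2.trans hn)

/-- The edges `e` and `f` lie on paths of `Ps` that are joined by a walk of length less than `R`. -/
def Conflict {V : Type*} {G : SimpleGraph V} (Ps : List ((u : V) × (v : V) × G.Walk u v)) (R : ℕ)
    (e f : Sym2 V) : Prop :=
  ∃ p ∈ Ps, ∃ q ∈ Ps, e ∈ p.2.2.edges ∧ f ∈ q.2.2.edges ∧
    ∃ u ∈ p.2.2.support, ∃ v ∈ q.2.2.support, ∃ w : G.Walk u v, w.length < R

theorem Conflict.symm {V : Type*} {G : SimpleGraph V}
    {Ps : List ((u : V) × (v : V) × G.Walk u v)} {R : ℕ} {e f : Sym2 V}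
    (h : Conflict Ps R e f) : Conflict Ps R f e := by
  obtain ⟨p, hp, q, hq, he, hf, u, hu, v, hv, w, hw⟩ := h
  exact ⟨q, hq, p, hp, hf, he, v, hv, u, hu, w.reverse, by simpa using hw⟩

/-- A conflicting edge `f` is found by choosing a vertex of the `R`-ball around the path of `e`, an
edge at this vertex, and one of the at most `d` edges of the path through that edge. -/
theorem ncard_conflict_le {V : Type*} [Fintype V] {G : SimpleGraph V}
    {Ps : List ((u : V) × (v : V) × G.Walk u v)} {d D : ℕ}
    (hD : ∀ v : V, (G.neighborSet v).ncard ≤ D)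
    (hlen : ∀ p ∈ Ps, p.2.2.length ≤ d)
    (huniq : ∀ p ∈ Ps, ∀ q ∈ Ps, ∀ e, e ∈ p.2.2.edges → e ∈ q.2.2.edges → p = q)
    (R : ℕ) (e : Sym2 V) :
    {f | Conflict Ps R e f}.ncard ≤ ((d + 1) * (1 + D) ^ R) * (D * d) := by
  classical
  by_cases he : ∃ p ∈ Ps, e ∈ p.2.2.edges
  swap
  · have : {f | Conflict Ps R e f} = ∅ := by
      ext f
      simp only [Set.mem_ofPred_eq, Set.mem_empty_iff_false, iff_false]
      rintro ⟨p, hp, q, hq, hep, -⟩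
      exact he ⟨p, hp, hep⟩
    simp [this]
  obtain ⟨p, hp, hep⟩ := he
  obtain ⟨B, hB, hball⟩ := exists_ball G D hD p.2.2.support.toFinset R
  have hsupp : p.2.2.support.toFinset.card ≤ d + 1 := by
    refine (List.toFinset_card_le _).trans ?_
    rw [SimpleGraph.Walk.length_support]
    exact Nat.succ_le_succ (hlen p hp)
  let T : Sym2 V → Finset (Sym2 V) := fun g =>
    {f | ∃ q ∈ Ps, g ∈ q.2.2.edges ∧ f ∈ q.2.2.edges}
  have hT : ∀ g, (T g).card ≤ d := by
    intro g
    by_cases hg : ∃ q ∈ Ps, g ∈ q.2.2.edges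
    · obtain ⟨q, hq, hgq⟩ := hg
      have hsub : T g ⊆ q.2.2.edges.toFinset := by
        intro f hf
        simp only [T, Finset.mem_filter, Finset.mem_univ, true_and] at hf
        obtain ⟨q', hq', hg', hf'⟩ := hf
        obtain rfl := huniq q hq q' hq' g hgq hg'
        simpa using hf'
      refine (Finset.card_le_card hsub).trans ((List.toFinset_card_le _).trans ?_)
      rw [SimpleGraph.Walk.length_edges]
      exact hlen q hq
    · have : T g = ∅ := by
        simp only [T, Finset.filter_eq_empty_iff]
        rintro f - ⟨q, hq, hgq, -⟩
        exact hg ⟨q, hq, hgq⟩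
      simp [this]
  have hsub : {f | Conflict Ps R e f} ⊆
      ((B.biUnion fun v => (G.incidenceFinset v).biUnion T : Finset (Sym2 V)) : Set (Sym2 V)) := by
    rintro f ⟨p', hp', q, hq, hep', hfq, u, hu, v, hv, w, hw⟩
    obtain rfl := huniq p hp p' hp' e hep hep'
    have hnil : ¬ q.2.2.Nil := by
      rw [← SimpleGraph.Walk.edges_eq_nil]
      exact List.ne_nil_of_mem hfq
    obtain ⟨g, hg, hvg⟩ := (SimpleGraph.Walk.mem_support_iff_exists_mem_edges_of_not_nil hnil).1 hv
    rw [Finset.mem_coe, Finset.mem_biUnion]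
    refine ⟨v, hball u (by simpa using hu) v w hw.le, Finset.mem_biUnion.2 ⟨g,
      (SimpleGraph.mem_incidenceFinset _ _ _).2 ⟨q.2.2.edges_subset_edgeSet hg, hvg⟩, ?_⟩⟩
    exact Finset.mem_filter.2 ⟨Finset.mem_univ _, q, hq, hg, hfq⟩
  refine (Set.ncard_le_ncard hsub (Finset.finite_toSet _)).trans ?_
  rw [Set.ncard_coe_finset]
  refine (Finset.card_biUnion_le_card_mul _ _ (D * d) fun v _ => ?_).trans ?_
  · refine (Finset.card_biUnion_le_card_mul _ _ d fun g _ => hT g).trans ?_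
    rw [SimpleGraph.card_incidenceFinset_eq_degree]
    have := hD v
    rw [Set.ncard_eq_toFinset_card'] at this
    exact Nat.mul_le_mul_right _ this
  · exact Nat.mul_le_mul_right _ (hB.trans (Nat.mul_le_mul_right _ hsupp))

/-- Decomposition into matchings with far-apart edges: there is `d₀` such that for
`d ≥ d₀` and `n ≥ 2^((log d)^7)`, if `G` is an `n`-vertex graph with maximum degree at
most `d^7`, `m = e(G)`, `k = max{n, m/d}`, and `𝒫` is a decomposition of `E(G)` into
at most `2k` edge-disjoint paths of length at most `d`, then `E(G)` decomposes into at
most `3k` pairwise edge-disjoint matchings, each of size at most `d`, such that for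
distinct edges `e, f` in the same matching the paths `P(e)` and `P(f)` of `𝒫`
containing them are at distance at least `2(log d)^5` apart in `G` (i.e. every walk in
`G` between a vertex of `P(e)` and a vertex of `P(f)` has length at least
`2(log d)^5`). -/
theorem matchings_with_far_edges :
    ∃ d₀ : ℕ, ∀ d : ℕ, d₀ ≤ d →
      ∀ (V : Type) [Fintype V],
        (2 : ℝ) ^ ((Real.logb 2 (d : ℝ))^7) ≤ (Fintype.card V : ℝ) →
        ∀ G : SimpleGraph V,
          (∀ v : V, (G.neighborSet v).ncard ≤ d^7) →
          ∀ Ps : List ((u : V) × (v : V) × G.Walk u v),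
            ((Ps.length : ℝ) ≤
              2 * max (Fintype.card V : ℝ) ((G.edgeSet.ncard : ℝ) / (d : ℝ))) →
            (∀ p ∈ Ps, p.2.2.IsPath) →
            (∀ p ∈ Ps, p.2.2.length ≤ d) →
            Ps.Pairwise (fun p q => ∀ e, e ∈ p.2.2.edges → e ∉ q.2.2.edges) →
            (∀ e, e ∈ G.edgeSet ↔ ∃ p ∈ Ps, e ∈ p.2.2.edges) →
            ∃ Ms : List (Set (Sym2 V)),
              ((Ms.length : ℝ) ≤
                3 * max (Fintype.card V : ℝ) ((G.edgeSet.ncard : ℝ) / (d : ℝ))) ∧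
              Ms.Pairwise (fun M N => Disjoint M N) ∧
              (∀ M ∈ Ms, IsMatchingIn G M) ∧
              (∀ e ∈ G.edgeSet, ∃ M ∈ Ms, e ∈ M) ∧
              (∀ M ∈ Ms, M.ncard ≤ d) ∧
              (∀ M ∈ Ms, ∀ e ∈ M, ∀ f ∈ M, e ≠ f →
                ∀ p ∈ Ps, ∀ q ∈ Ps, e ∈ p.2.2.edges → f ∈ q.2.2.edges →
                  ∀ u ∈ p.2.2.support, ∀ v ∈ q.2.2.support,
                    ∀ w : G.Walk u v, 2 * (Real.logb 2 (d : ℝ))^5 ≤ (w.length : ℝ)) := by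
  classical
  refine ⟨2 ^ 40, fun d hd V _ hn G hdeg Ps _ _ hlen hdisj hcov => ?_⟩
  have hd0 : 0 < d := lt_of_lt_of_le (by norm_num) hd
  have hL : 40 ≤ Real.logb 2 d := by
    rw [Real.le_logb_iff_rpow_le (by norm_num) (by positivity)]
    exact_mod_cast hd
  obtain ⟨R, hR⟩ : ∃ R, R = ⌈2 * (Real.logb 2 (d : ℝ))^5⌉₊ := ⟨_, rfl⟩
  have huniq : ∀ p ∈ Ps, ∀ q ∈ Ps, ∀ e, e ∈ p.2.2.edges → e ∈ q.2.2.edges → p = q := by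
    intro p hp q hq e hep heq
    by_contra hpq
    have : Std.Symm (fun p q : (u : V) × (v : V) × G.Walk u v =>
        ∀ e, e ∈ p.2.2.edges → e ∉ q.2.2.edges) := ⟨fun a b h e hb ha => h e ha hb⟩
    exact hdisj.forall hp hq hpq e hep heq
  set k : ℝ := max (Fintype.card V : ℝ) ((G.edgeSet.ncard : ℝ) / (d : ℝ)) with hk
  have hnk : (Fintype.card V : ℝ) ≤ k := le_max_left _ _
  have hmk : (G.edgeSet.ncard : ℝ) / (d : ℝ) ≤ k := le_max_right _ _
  have hk1 : 1 ≤ k := by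
    refine le_trans ?_ (hn.trans hnk)
    exact Real.one_le_rpow (by norm_num) (by positivity)
  have hcardE : G.edgeFinset.card = G.edgeSet.ncard := by
    rw [← SimpleGraph.coe_edgeFinset, Set.ncard_coe_finset]
  obtain ⟨c, hc, hsize⟩ := exists_bounded_coloring (Conflict Ps R) (fun _ _ h => h.symm)
    G.edgeFinset (Fintype.card V) d ⌊3 * k⌋₊ hd0
    (fun e _ => by
      refine le_trans (Set.ncard_le_ncard (fun f hf => hf.2) (Set.toFinite _)) ?_
      exact (ncard_conflict_le hdeg hlen huniq R e).trans (conflict_bound_le hd hn hR))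
    (by
      rw [hcardE]
      refine Nat.lt_of_succ_le (Nat.le_floor ?_)
      have := (Nat.cast_div_le (α := ℝ) (m := G.edgeSet.ncard) (n := d))
      push_cast
      linarith)
  have hfar : ∀ i, ∀ e ∈ G.edgeSet, c e = i → ∀ f ∈ G.edgeSet, c f = i → e ≠ f →
      ∀ p ∈ Ps, ∀ q ∈ Ps, e ∈ p.2.2.edges → f ∈ q.2.2.edges →
        ∀ u ∈ p.2.2.support, ∀ v ∈ q.2.2.support,
          ∀ w : G.Walk u v, 2 * (Real.logb 2 (d : ℝ))^5 ≤ (w.length : ℝ) := by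
    intro i e he hei f hf hfi hef p hp q hq hep hfq u hu v hv w
    by_contra! hw
    refine hc e (by simpa using he) f (by simpa using hf) hef (hei.trans hfi.symm)
      ⟨p, hp, q, hq, hep, hfq, u, hu, v, hv, w, ?_⟩
    rw [hR]
    exact Nat.lt_ceil.2 hw
  refine ⟨(List.finRange ⌊3 * k⌋₊).map fun i => {e | e ∈ G.edgeFinset ∧ c e = i},
    ?_, ?_, ?_, ?_, ?_, ?_⟩
  · rw [List.length_map, List.length_finRange]
    exact Nat.floor_le (by positivity)
  · rw [List.pairwise_map]
    refine (List.nodup_finRange _).imp fun {i j} hij => ?_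
    rw [Set.disjoint_left]
    rintro e ⟨-, hi⟩ ⟨-, hj⟩
    exact hij (hi.symm.trans hj)
  · simp only [List.mem_map, forall_exists_index, and_imp]
    rintro _ i - rfl
    refine ⟨fun e he => by simpa using he.1, ?_⟩
    rintro e ⟨he, hei⟩ f ⟨hf, hfi⟩ hef v hve hvf
    rw [SimpleGraph.mem_edgeFinset] at he hf
    obtain ⟨p, hp, hep⟩ := (hcov e).1 he
    obtain ⟨q, hq, hfq⟩ := (hcov f).1 hf
    -- A common vertex would put the two paths at distance `0`.
    have h := hfar i e he hei f hf hfi hef p hp q hq hep hfq v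
      (SimpleGraph.Walk.mem_support_iff_exists_mem_edges.2 (.inr ⟨e, hep, hve⟩)) v
      (SimpleGraph.Walk.mem_support_iff_exists_mem_edges.2 (.inr ⟨f, hfq, hvf⟩)) .nil
    have h5 : 0 < (Real.logb 2 (d : ℝ))^5 := pow_pos (by linarith) 5
    simp only [SimpleGraph.Walk.length_nil, Nat.cast_zero] at h
    linarith
  · intro e he
    exact ⟨_, List.mem_map.2 ⟨c e, List.mem_finRange _, rfl⟩, by simpa using he, rfl⟩
  · simp only [List.mem_map, forall_exists_index, and_imp]
    rintro _ i - rfl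
    exact hsize i
  · simp only [List.mem_map, forall_exists_index, and_imp]
    rintro _ i - rfl
    rintro e ⟨he, hei⟩ f ⟨hf, hfi⟩
    rw [SimpleGraph.mem_edgeFinset] at he hf
    exact hfar i e he hei f hf hfi
end

section
/- There exists n₀ such that the following holds for every n ≥ n₀. Let G be a graph on n vertices with minimum degree at least (log n)^51, let G' be a spanning subgraph of G, and let 𝒫 be a collection of at most n pairwise edge-disjoint paths whose edge sets partition E(G'). For an edge e = xy define d̄(e) := min{d_G(x), d_G(y)}. Then there is a collection 𝓜 of at most 210n pairwise edge-disjoint matchings in G' whose union covers all edges of G', such that every M ∈ 𝓜 satisfies: every path in 𝒫 contains at most one edge of M, and for every d ≥ 1 there are at most d/50 edges e ∈ M with d̄(e) ≤ d. -/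
/-- `d̄(e)`: the minimum of the `G`-degrees of the two endpoints of the edge `e`. -/
noncomputable def minDeg {V : Type*} (G : SimpleGraph V) : Sym2 V → ℕ :=
  Sym2.lift ⟨fun x y => min (G.neighborSet x).ncard (G.neighborSet y).ncard,
    fun x y => min_comm _ _⟩

/-- The greedy colouring, for an abstract conflict relation `R` and weight `w`. -/
lemma exists_greedy_coloring_s18 {E : Type*} [DecidableEq E] (w : E → ℕ) (R : E → E → Prop)
    (hR : ∀ e f, R e f → R f e) (n C k : ℕ) (hk : C + 51 * n < k) (s : Finset E)
    (hC : ∀ e ∈ s, ∃ t : Finset E, t.card ≤ C ∧ ∀ f ∈ s, R e f → f ∈ t)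
    (hn : ∀ d, (s.filter (fun e => w e ≤ d)).card ≤ n * d)
    (hw : ∀ e ∈ s, 2550 ≤ w e) :
    ∃ c : E → Fin k, (∀ e ∈ s, ∀ f ∈ s, e ≠ f → R e f → c e ≠ c f) ∧
      ∀ i d, 50 * (s.filter (fun e => c e = i ∧ w e ≤ d)).card ≤ d := by
  classical
  induction s using Finset.induction_on_max_value w with
  | empty => exact ⟨fun _ => ⟨0, by omega⟩, by simp, by simp⟩
  | insert a s ha hmax ih =>
    obtain ⟨c, hc1, hc2⟩ := ih
      (fun e he => by
        obtain ⟨t, ht, h⟩ := hC e (Finset.mem_insert_of_mem he)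
        exact ⟨t, ht, fun f hf => h f (Finset.mem_insert_of_mem hf)⟩)
      (fun d => (Finset.card_le_card
        (Finset.filter_subset_filter _ (Finset.subset_insert _ _))).trans (hn d))
      (fun e he => hw e (Finset.mem_insert_of_mem he))
    obtain ⟨t, ht, hta⟩ := hC a (Finset.mem_insert_self _ _)
    have hwa := hw a (Finset.mem_insert_self _ _)
    set m : Fin k → ℕ := fun i => (s.filter (fun e => c e = i)).card with hm
    -- `B` is the set of colours whose classes are too full to receive `a`.
    set B : Finset (Fin k) := Finset.univ.filter (fun i => w a < 50 * (m i + 1)) with hB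
    have hsum : ∑ i, m i = s.card :=
      (Finset.card_eq_sum_card_fiberwise (fun _ _ => Finset.mem_univ _)).symm
    have hs : s.card ≤ n * w a := by
      refine le_trans (Finset.card_le_card ?_) (hn (w a))
      intro e he
      simp [he, hmax e he]
    have hBcard : B.card ≤ 51 * n := by
      have h1 : ∑ _i ∈ B, w a ≤ ∑ i ∈ B, 51 * m i := by
        refine Finset.sum_le_sum fun i hi => ?_
        have : w a < 50 * (m i + 1) := (Finset.mem_filter.1 hi).2
        omega
      have h2 : ∑ i ∈ B, m i ≤ ∑ i, m i := Finset.sum_le_univ_sum_of_nonneg (by simp)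
      rw [Finset.sum_const, smul_eq_mul, ← Finset.mul_sum] at h1
      have h3 : B.card * w a ≤ (51 * n) * w a := by nlinarith
      exact Nat.le_of_mul_le_mul_right h3 (by omega)
    obtain ⟨i, hi⟩ : ∃ i : Fin k, i ∉ t.image c ∪ B := by
      by_contra! h
      have h1 : (Finset.univ : Finset (Fin k)).card ≤ (t.image c ∪ B).card :=
        Finset.card_le_card fun i _ => h i
      have h2 := Finset.card_union_le (t.image c) B
      have h3 := Finset.card_image_le (s := t) (f := c)
      rw [Finset.card_univ, Fintype.card_fin] at h1
      omega
    rw [Finset.mem_union, not_or] at hi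
    obtain ⟨hit, hiB⟩ := hi
    have hmi : 50 * (m i + 1) ≤ w a := by simpa [hB] using hiB
    have hne : ∀ e ∈ s, e ≠ a := fun e he h => ha (h ▸ he)
    have key : ∀ f ∈ s, R a f → c f ≠ i := fun f hf hr h =>
      hit (h ▸ Finset.mem_image_of_mem c (hta f (Finset.mem_insert_of_mem hf) hr))
    refine ⟨Function.update c a i, ?_, ?_⟩
    · intro e he f hf hef hr
      rcases Finset.mem_insert.1 he with rfl | hes <;>
        rcases Finset.mem_insert.1 hf with rfl | hfs
      · exact absurd rfl hef
      · rw [Function.update_self, Function.update_of_ne hef.symm]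
        exact (key f hfs hr).symm
      · rw [Function.update_self, Function.update_of_ne hef]
        exact key e hes (hR _ _ hr)
      · rw [Function.update_of_ne (hne e hes), Function.update_of_ne (hne f hfs)]
        exact hc1 e hes f hfs hef hr
    · intro j d
      by_cases h : i = j ∧ w a ≤ d
      · obtain ⟨rfl, hd⟩ := h
        have : ((insert a s).filter (fun e => Function.update c a i e = i ∧ w e ≤ d)) ⊆
            insert a (s.filter (fun e => c e = i)) := by
          intro e he
          rw [Finset.mem_filter, Finset.mem_insert] at he
          obtain ⟨rfl | he, h1, h2⟩ := he
          · exact Finset.mem_insert_self _ _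
          · rw [Function.update_of_ne (hne e he)] at h1
            exact Finset.mem_insert_of_mem (Finset.mem_filter.2 ⟨he, h1⟩)
        have h1 := (Finset.card_le_card this).trans (Finset.card_insert_le _ _)
        change _ ≤ m i + 1 at h1
        omega
      · refine le_trans (Nat.mul_le_mul_left _ (Finset.card_le_card ?_)) (hc2 j d)
        intro e he
        rw [Finset.mem_filter, Finset.mem_insert] at he
        obtain ⟨rfl | he, h1, h2⟩ := he
        · rw [Function.update_self] at h1
          exact absurd ⟨h1, h2⟩ h
        · rw [Function.update_of_ne (hne e he)] at h1
          exact Finset.mem_filter.2 ⟨he, h1, h2⟩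

/-- Each edge with `d̄(e) ≤ d` is charged to an endpoint of degree at most `d`. -/
lemma card_minDeg_le {V : Type*} [Fintype V] [DecidableEq V] (G : SimpleGraph V)
    [DecidableRel G.Adj] (s : Finset (Sym2 V)) (hs : ∀ e ∈ s, e ∈ G.edgeSet) (d : ℕ) :
    (s.filter (fun e => minDeg G e ≤ d)).card ≤ Fintype.card V * d := by
  have hdeg : ∀ v, (G.neighborSet v).ncard = G.degree v := fun v => by
    rw [Set.ncard_eq_toFinset_card', ← SimpleGraph.card_neighborFinset_eq_degree,
      SimpleGraph.neighborFinset]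
  have hsub : s.filter (fun e => minDeg G e ≤ d) ⊆
      (Finset.univ.filter (fun v => G.degree v ≤ d)).biUnion (fun v => G.incidenceFinset v) := by
    intro e
    induction e with
    | h x y =>
      intro he
      obtain ⟨h1, h2⟩ := Finset.mem_filter.1 he
      have h2' : min (G.neighborSet x).ncard (G.neighborSet y).ncard ≤ d := h2
      rw [hdeg, hdeg, min_le_iff] at h2'
      simp only [Finset.mem_biUnion, Finset.mem_filter, Finset.mem_univ, true_and,
        SimpleGraph.mem_incidenceFinset]
      rcases h2' with h | h
      · exact ⟨x, h, hs _ h1, Sym2.mem_mk_left x y⟩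
      · exact ⟨y, h, hs _ h1, Sym2.mem_mk_right x y⟩
  refine (Finset.card_le_card hsub).trans ((Finset.card_biUnion_le_card_mul _ _ d ?_).trans
    (Nat.mul_le_mul_right _ (Finset.card_le_univ _)))
  intro v hv
  rw [SimpleGraph.card_incidenceFinset_eq_degree]
  exact (Finset.mem_filter.1 hv).2

/-- Decomposition into matchings meeting each path once and with few low-degree edges:
there is `n₀` such that for `n ≥ n₀`, if `G` is an `n`-vertex graph of minimum degree
at least `(log n)^51`, `G'` a spanning subgraph of `G`, and `𝒫` a decomposition of
`E(G')` into at most `n` edge-disjoint paths, then `E(G')` decomposes into at most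
`210 n` pairwise edge-disjoint matchings `M`, each meeting every path of `𝒫` in at
most one edge and containing, for every `d ≥ 1`, at most `d/50` edges `e` with
`d̄(e) ≤ d`. -/
theorem matchings_with_degree_condition :
    ∃ n₀ : ℕ, ∀ n : ℕ, n₀ ≤ n →
      ∀ (V : Type) [Fintype V], Fintype.card V = n →
      ∀ G : SimpleGraph V,
        (∀ v : V, (Real.logb 2 (n : ℝ))^51 ≤ ((G.neighborSet v).ncard : ℝ)) →
        ∀ G' : SimpleGraph V, G' ≤ G →
        ∀ Ps : List ((u : V) × (v : V) × G'.Walk u v),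
          Ps.length ≤ n →
          (∀ p ∈ Ps, p.2.2.IsPath) →
          Ps.Pairwise (fun p q => ∀ e, e ∈ p.2.2.edges → e ∉ q.2.2.edges) →
          (∀ e, e ∈ G'.edgeSet ↔ ∃ p ∈ Ps, e ∈ p.2.2.edges) →
          ∃ Ms : List (Set (Sym2 V)),
            Ms.length ≤ 210 * n ∧
            Ms.Pairwise (fun M N => Disjoint M N) ∧
            (∀ M ∈ Ms, IsMatchingIn G' M) ∧
            (∀ e ∈ G'.edgeSet, ∃ M ∈ Ms, e ∈ M) ∧
            (∀ M ∈ Ms, ∀ p ∈ Ps, ∀ e ∈ M, ∀ f ∈ M,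
              e ∈ p.2.2.edges → f ∈ p.2.2.edges → e = f) ∧
            (∀ M ∈ Ms, ∀ d : ℝ, 1 ≤ d →
              (({e ∈ M | (minDeg G e : ℝ) ≤ d}).ncard : ℝ) ≤ d / 50) := by
  -- For `n ≥ 4` the minimum degree is at least `2 ^ 51`, which exceeds the `2550` needed.
  refine ⟨4, ?_⟩
  intro n hn V _ hV G hG G' hG' Ps hPs hpath hdisj hcov
  classical
  have hdeg : ∀ v, 2550 ≤ (G.neighborSet v).ncard := by
    intro v
    have h4 : (4 : ℝ) ≤ n := by exact_mod_cast hn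
    have h1 : (2 : ℝ) ≤ Real.logb 2 n := by
      rw [Real.le_logb_iff_rpow_le (by norm_num) (by linarith)]
      norm_num
      exact hn
    have h2 : (2 : ℝ) ^ 51 ≤ Real.logb 2 (n : ℝ) ^ 51 := by gcongr
    have h3 : (2550 : ℝ) ≤ ((G.neighborSet v).ncard : ℝ) :=
      le_trans (by norm_num) (h2.trans (hG v))
    exact_mod_cast h3
  have hmin : ∀ e, 2550 ≤ minDeg G e := by
    intro e
    induction e with
    | h x y => exact le_min (hdeg x) (hdeg y)
  obtain ⟨c, hc1, hc2⟩ := exists_greedy_coloring_s18 (minDeg G)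
    (fun e f => (∃ v, v ∈ e ∧ v ∈ f) ∨ ∃ p ∈ Ps, e ∈ p.2.2.edges ∧ f ∈ p.2.2.edges)
    (by
      rintro e f (⟨v, h1, h2⟩ | ⟨p, hp, h1, h2⟩)
      · exact Or.inl ⟨v, h2, h1⟩
      · exact Or.inr ⟨p, hp, h2, h1⟩)
    n (3 * n) (210 * n) (by omega) G'.edgeFinset
    (by
      intro e he
      obtain ⟨p, hp, hep⟩ := (hcov e).1 (SimpleGraph.mem_edgeFinset.1 he)
      have huniq : ∀ q ∈ Ps, e ∈ q.2.2.edges → p = q := by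
        intro q hq heq
        by_contra hpq
        have : Std.Symm (fun p q : (u : V) × (v : V) × G'.Walk u v =>
            ∀ e, e ∈ p.2.2.edges → e ∉ q.2.2.edges) := ⟨fun _ _ h e h1 h2 => h e h2 h1⟩
        exact hdisj.forall hp hq hpq e hep heq
      clear he
      induction e with
      | h x y =>
        refine ⟨G'.incidenceFinset x ∪ G'.incidenceFinset y ∪ p.2.2.edges.toFinset, ?_, ?_⟩
        · have h1 := Finset.card_union_le (G'.incidenceFinset x ∪ G'.incidenceFinset y)
            p.2.2.edges.toFinset
          have h2 := Finset.card_union_le (G'.incidenceFinset x) (G'.incidenceFinset y)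
          rw [SimpleGraph.card_incidenceFinset_eq_degree,
            SimpleGraph.card_incidenceFinset_eq_degree] at h2
          have h3 := G'.degree_lt_card_verts x
          have h4 := G'.degree_lt_card_verts y
          have h5 := List.toFinset_card_le p.2.2.edges
          have h6 := (hpath p hp).length_lt
          rw [SimpleGraph.Walk.length_edges] at h5
          omega
        · intro f hf hR
          have hf' := SimpleGraph.mem_edgeFinset.1 hf
          simp only [Finset.mem_union, SimpleGraph.mem_incidenceFinset, List.mem_toFinset]
          rcases hR with ⟨v, hv, hvf⟩ | ⟨q, hq, heq, hfq⟩
          · rcases Sym2.mem_iff.1 hv with rfl | rfl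
            · exact Or.inl (Or.inl ⟨hf', hvf⟩)
            · exact Or.inl (Or.inr ⟨hf', hvf⟩)
          · rw [← huniq q hq heq] at hfq
            exact Or.inr hfq)
    (fun d => hV ▸ card_minDeg_le G _
      (fun e he => SimpleGraph.edgeSet_mono hG' (SimpleGraph.mem_edgeFinset.1 he)) d)
    (fun e _ => hmin e)
  refine ⟨(List.finRange (210 * n)).map (fun i => {e | e ∈ G'.edgeSet ∧ c e = i}),
    by simp, ?_, ?_, ?_, ?_, ?_⟩
  · rw [List.pairwise_map]
    refine (List.nodup_finRange _).imp ?_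
    intro i j hij
    rw [Set.disjoint_left]
    rintro e ⟨_, h1⟩ ⟨_, h2⟩
    exact hij (h1.symm.trans h2)
  · intro M hM
    obtain ⟨i, -, rfl⟩ := List.mem_map.1 hM
    refine ⟨fun e he => he.1, ?_⟩
    rintro e ⟨he, hei⟩ f ⟨hf, hfi⟩ hef v hve hvf
    exact hc1 e (SimpleGraph.mem_edgeFinset.2 he) f (SimpleGraph.mem_edgeFinset.2 hf) hef
      (Or.inl ⟨v, hve, hvf⟩) (hei.trans hfi.symm)
  · intro e he
    exact ⟨_, List.mem_map.2 ⟨c e, List.mem_finRange _, rfl⟩, he, rfl⟩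
  · intro M hM p hp e he f hf hep hfp
    obtain ⟨i, -, rfl⟩ := List.mem_map.1 hM
    obtain ⟨he, hei⟩ := he
    obtain ⟨hf, hfi⟩ := hf
    by_contra hef
    exact hc1 e (SimpleGraph.mem_edgeFinset.2 he) f (SimpleGraph.mem_edgeFinset.2 hf) hef
      (Or.inr ⟨p, hp, hep, hfp⟩) (hei.trans hfi.symm)
  · intro M hM d hd
    obtain ⟨i, -, rfl⟩ := List.mem_map.1 hM
    have hd0 : 0 ≤ d := by linarith
    have hset : {e ∈ {e | e ∈ G'.edgeSet ∧ c e = i} | (minDeg G e : ℝ) ≤ d} =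
        ↑(G'.edgeFinset.filter (fun e => c e = i ∧ minDeg G e ≤ ⌊d⌋₊)) := by
      ext e
      simp [Nat.le_floor_iff hd0, and_assoc]
    rw [hset, Set.ncard_coe_finset]
    have h1 : (50 : ℝ) * ((G'.edgeFinset.filter
        (fun e => c e = i ∧ minDeg G e ≤ ⌊d⌋₊)).card : ℝ) ≤ (⌊d⌋₊ : ℝ) := by
      exact_mod_cast hc2 i ⌊d⌋₊
    have h2 := Nat.floor_le hd0
    linarith
end
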